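/- There exist an integer q₁ ≥ 2 and a C^∞ diffeomorphism T of the torus 𝕋² preserving the Haar–Lebesgue probability measure λ such that T is weakly mixing with respect to λ and the upper measure-theoretic slow entropy of (T,λ) with respect to the intermediate scaling family a^{int1,8}_m(t) (with base q₁) equals 2. -/

import Mathlib

open MeasureTheory Filter Set
open scoped Topology ENNReal NNReal

noncomputable section

/-- The Bowen metric `d_n^T(x,y) = max_{0 ≤ i ≤ n-1} d(T^i x, T^i y)`. -/
def bowenDist {X : Type*} [PseudoMetricSpace X] (T : X → X) (n : ℕ) (x y : X) : ℝ :=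
  (((Finset.range n).sup fun i => nndist (T^[i] x) (T^[i] y)) : ℝ≥0)

/-- `N_{d_n^T}(ε)`: the minimal number of `(ε,n)`-Bowen balls of `T` needed to cover the
whole space. -/
def bowenCoverNum {X : Type*} [PseudoMetricSpace X] (T : X → X) (n : ℕ) (ε : ℝ) : ℕ :=
  sInf {N : ℕ | ∃ F : Finset X, F.card = N ∧ ∀ y : X, ∃ x ∈ F, bowenDist T n x y < ε}

/-- `N(ε)`: the supremum (`0` if the set is empty, by the `Real.sSup` convention) of all
`t > 0` such that `limsup_n N_{d_n^T}(ε) / a_n(t) > 0`. -/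
def topSlowEntFun {X : Type*} [PseudoMetricSpace X] (T : X → X) (a : ℕ → ℝ → ℝ) (ε : ℝ) : ℝ :=
  sSup {t : ℝ | 0 < t ∧
    0 < Filter.atTop.limsup fun n => (bowenCoverNum T n ε : ℝ≥0∞) / ENNReal.ofReal (a n t)}

/-- The upper topological slow entropy of `T` with respect to the scaling family `a`
equals `E`, i.e. `N(ε) → E` as `ε → 0⁺`. -/
def HasUpperTopSlowEntropy {X : Type*} [PseudoMetricSpace X] (T : X → X)
    (a : ℕ → ℝ → ℝ) (E : ℝ) : Prop :=
  Filter.Tendsto (topSlowEntFun T a) (𝓝[>] (0 : ℝ)) (𝓝 E)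

/-- The circle `𝕋¹ = ℝ/ℤ` with its quotient metric and Haar–Lebesgue probability
measure `volume`. -/
abbrev Torus1 : Type := AddCircle (1 : ℝ)

/-- The 2-torus `𝕋² = ℝ²/ℤ²`, with its quotient (flat) metric, its Borel σ-algebra and
its Haar–Lebesgue probability measure `volume`. -/
abbrev Torus2 : Type := AddCircle (1 : ℝ) × AddCircle (1 : ℝ)

/-- Canonical projection `ℝ² → 𝕋²`. -/
def torusProj : ℝ × ℝ → Torus2 := fun p => ((p.1 : Torus1), (p.2 : Torus1))

/-- `F : ℝ² → ℝ²` is a lift of `T : 𝕋² → 𝕋²`. -/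
def IsLiftOf (F : ℝ × ℝ → ℝ × ℝ) (T : Torus2 → Torus2) : Prop :=
  ∀ p, torusProj (F p) = T (torusProj p)

/-- `T` is a `C^k` diffeomorphism of the torus: it is a bijection and both `T` and `T⁻¹`
admit `C^k` lifts to the universal cover `ℝ²`. -/
def IsCkTorusDiffeo (k : ℕ∞) (T : Torus2 → Torus2) : Prop :=
  Function.Bijective T ∧
  (∃ F : ℝ × ℝ → ℝ × ℝ, ContDiff ℝ k F ∧ IsLiftOf F T) ∧
  (∃ G : ℝ × ℝ → ℝ × ℝ, ContDiff ℝ k G ∧ IsLiftOf G (Function.invFun T))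

/-- `T` is weakly mixing w.r.t. the measure `μ`: `T × T` is ergodic for `μ × μ`. -/
def WeaklyMixing {X : Type*} [MeasurableSpace X] (T : X → X) (μ : Measure X) : Prop :=
  Ergodic (fun p : X × X => (T p.1, T p.2)) (μ.prod μ)

/-- `T` is uniquely ergodic with the Haar–Lebesgue measure `volume` as its unique
invariant Borel probability measure. -/
def UniquelyErgodicWithVolume (T : Torus2 → Torus2) : Prop :=
  MeasurePreserving T volume volume ∧
  ∀ μ : Measure Torus2, IsProbabilityMeasure μ → MeasurePreserving T μ μ → μ = volume

/-- `T` (preserving the Haar measure `volume` on `𝕋²`) is measure-theoretically isomorphic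
to the rotation of the circle `𝕋¹ = ℝ/ℤ` by some irrational number `α`. -/
def IsoToIrrationalRotation (T : Torus2 → Torus2) : Prop :=
  ∃ α : ℝ, Irrational α ∧
    ∃ (A : Set Torus2) (B : Set Torus1) (ψ : Torus2 → Torus1) (φ : Torus1 → Torus2),
      MeasurableSet A ∧ MeasurableSet B ∧
      volume Aᶜ = 0 ∧ volume Bᶜ = 0 ∧
      Set.MapsTo T A A ∧ Set.MapsTo (fun y : Torus1 => y + (α : Torus1)) B B ∧
      Measurable ψ ∧ Measurable φ ∧
      Set.MapsTo ψ A B ∧ Set.MapsTo φ B A ∧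
      (∀ x ∈ A, φ (ψ x) = x) ∧ (∀ y ∈ B, ψ (φ y) = y) ∧
      Measure.map ψ volume = volume ∧
      (∀ x ∈ A, ψ (T x) = ψ x + (α : Torus1))

/-- A finite measurable partition of `X`. -/
structure FinMeasPartition (X : Type*) [MeasurableSpace X] where
  card : ℕ
  piece : Fin card → Set X
  measurable : ∀ i, MeasurableSet (piece i)
  disjoint : Pairwise fun i j => Disjoint (piece i) (piece j)
  cover : (⋃ i, piece i) = Set.univ

open Classical in
/-- The normalized Hamming distance between the length-`n` `P`-codings of the `T`-orbits
of `x` and `y` (the codings differ at time `k` iff `T^k x` and `T^k y` lie in different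
pieces of `P`). -/
def codeHammingDist {X : Type*} [MeasurableSpace X] (T : X → X) (P : FinMeasPartition X)
    (n : ℕ) (x y : X) : ℝ :=
  (((Finset.range n).filter fun k =>
      ¬ ∃ i, T^[k] x ∈ P.piece i ∧ T^[k] y ∈ P.piece i).card : ℝ) / n

/-- `S^H_P(T,n,ε)`: the minimal number of `(ε,n)`-Hamming balls whose union has
`μ`-measure greater than `1 - ε`. -/
def hammingCoverNum {X : Type*} [MeasurableSpace X] (μ : Measure X) (T : X → X)
    (P : FinMeasPartition X) (n : ℕ) (ε : ℝ) : ℕ :=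
  sInf {N : ℕ | ∃ F : Finset X, F.card = N ∧
    ENNReal.ofReal (1 - ε) < μ (⋃ x ∈ F, {y | codeHammingDist T P n x y < ε})}

/-- For a fixed partition `P` and `ε > 0`: the supremum (with the `Real.sSup` convention,
`0` if the set is empty) of all `t > 0` with `limsup_n S^H_P(T,n,ε)/a_n(t) > 0`. -/
def measSlowEntFun {X : Type*} [MeasurableSpace X] (μ : Measure X) (T : X → X)
    (a : ℕ → ℝ → ℝ) (P : FinMeasPartition X) (ε : ℝ) : ℝ :=
  sSup {t : ℝ | 0 < t ∧
    0 < Filter.atTop.limsup fun n =>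
      (hammingCoverNum μ T P n ε : ℝ≥0∞) / ENNReal.ofReal (a n t)}

/-- The upper measure-theoretic slow entropy of `(T,μ)` w.r.t. the scaling family `a`
equals `E`: for every finite measurable partition the limit as `ε → 0⁺` exists, and the
least upper bound over all partitions of these limits is `E`. -/
def HasUpperMeasSlowEntropy {X : Type*} [MeasurableSpace X] (μ : Measure X) (T : X → X)
    (a : ℕ → ℝ → ℝ) (E : ℝ) : Prop :=
  (∀ P : FinMeasPartition X, ∃ e : ℝ,
      Filter.Tendsto (measSlowEntFun μ T a P) (𝓝[>] (0 : ℝ)) (𝓝 e)) ∧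
  IsLUB {e : ℝ | ∃ P : FinMeasPartition X,
      Filter.Tendsto (measSlowEntFun μ T a P) (𝓝[>] (0 : ℝ)) (𝓝 e)} E

/-- `Γ_r(x) = (Γ(x^{1/r} + 1))^r`, where `Γ` is the Euler Gamma function. -/
def GammaR (r : ℕ) (x : ℝ) : ℝ := (Real.Gamma (x ^ ((r : ℝ)⁻¹) + 1)) ^ r

/-- The inverse of `Γ_r` on `[1,∞)` (where `Γ_r` is strictly increasing with `Γ_r 1 = 1`). -/
def GammaRInv (r : ℕ) (y : ℝ) : ℝ := sSup {x : ℝ | 1 ≤ x ∧ GammaR r x ≤ y}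

/-- The intermediate scaling family `a^{int1,r}_m(t) = m^(t / Γ_r⁻¹(ln m / ln q₁))`. -/
def intScale1 (r q₁ : ℕ) (m : ℕ) (t : ℝ) : ℝ :=
  (m : ℝ) ^ (t / GammaRInv r (Real.log m / Real.log q₁))

/-- The intermediate scaling family
`a^{int2,r}_m(t) = m^(t / (Γ_r⁻¹(ln m / ln q₁))^((r-2)/r))`. -/
def intScale2 (r q₁ : ℕ) (m : ℕ) (t : ℝ) : ℝ :=
  (m : ℝ) ^ (t / GammaRInv r (Real.log m / Real.log q₁) ^ (((r : ℝ) - 2) / (r : ℝ)))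

/-- The logarithmic scaling family `a^{ln}_m(t) = (ln m)^t`. -/
def logScale (m : ℕ) (t : ℝ) : ℝ := Real.log m ^ t

/-- The polynomial scaling family `a^{pol}_m(t) = m^t`. -/
def polScale (m : ℕ) (t : ℝ) : ℝ := (m : ℝ) ^ t

end

/-!
The diffeomorphism is the limit of an Anosov–Katok sequence `H ∘ R ∘ H⁻¹`, where `R` is a rotation
of the first coordinate by a rational angle of period `N` and each `H` is the previous one composed
with a shear of slope about `A = exp (E * L N)`. Here the scaling family is written as
`a_n(t) = exp (t * L n)`; all that matters about `L` is that it tends to infinity more slowly than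
`log` and that `L m` is almost as large as `L N` as soon as `N < m * exp (c * L N)`.

* If the first coordinates of `H⁻¹ x` and `H⁻¹ y` differ by more than about `L N / A`, then the
  difference of the two shear phases oscillates fast, so the orbit of `(x, y)` over one period is
  nearly equidistributed in `𝕋² × 𝕋²`. Applied to `y = Tᵐ x` with a suitable `m`, this gives weak
  mixing.
* It also says that a small Hamming ball around `x` at time `N` lies in the image under `H` of
  strips of total measure `O(L N / A)`, so at least about `A / L N` balls are needed.
* Conversely, `H` expands distances by a factor of order `A`, so about `A` classes of points are
  followed up to a small error until shortly before the next period. Since `L` varies slowly, the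
  same bound holds, up to smaller factors, at all times `m` from `N * exp (-c * L N)` on.
-/

section GammaR

variable {r : ℕ}

lemma tendsto_gamma_atTop : Tendsto Real.Gamma atTop atTop := by
  refine tendsto_atTop_mono' _ ?_
    (tendsto_atTop_add_const_right _ (-2) tendsto_id : Tendsto (fun x : ℝ ↦ x + -2) atTop atTop)
  filter_upwards [eventually_ge_atTop 3] with x hx
  have one_le : 1 ≤ Real.Gamma (x - 1) := by
    simpa only [Real.Gamma_two] using
      Real.Gamma_strictMonoOn_Ici.monotoneOn (mem_Ici.2 le_rfl) (mem_Ici.2 (by linarith))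
        (by linarith : 2 ≤ x - 1)
  have gamma_eq : Real.Gamma x = (x - 1) * Real.Gamma (x - 1) := by
    simpa only [sub_add_cancel] using Real.Gamma_add_one (by linarith : x - 1 ≠ 0)
  nlinarith

lemma gammaR_strictMonoOn (hr : r ≠ 0) : StrictMonoOn (GammaR r) (Ici 1) := by
  intro x hx y _ hxy
  have one_le_root : 1 ≤ x ^ (r : ℝ)⁻¹ := Real.one_le_rpow hx (by positivity)
  have root_lt : x ^ (r : ℝ)⁻¹ < y ^ (r : ℝ)⁻¹ :=
    Real.rpow_lt_rpow (zero_le_one.trans hx) hxy (by positivity)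
  refine pow_lt_pow_left₀ (Real.Gamma_strictMonoOn_Ici ?_ ?_ ?_)
    (Real.Gamma_nonneg_of_nonneg ?_) hr <;> first | exact mem_Ici.2 (by linarith) | linarith

lemma gammaR_continuousOn : ContinuousOn (GammaR r) (Ici 1) := by
  refine ContinuousOn.pow ?_ r
  refine Real.differentiableOn_Gamma_Ioi.continuousOn.comp
    ((continuousOn_id.rpow_const fun _ _ ↦ Or.inr (by positivity)).add continuousOn_const)
    fun x hx ↦ ?_
  have : 0 ≤ x ^ (r : ℝ)⁻¹ := Real.rpow_nonneg (zero_le_one.trans hx) _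
  exact mem_Ioi.2 (by linarith)

lemma gammaR_one : GammaR r 1 = 1 := by
  rw [GammaR, Real.one_rpow, one_add_one_eq_two, Real.Gamma_two, one_pow]

lemma tendsto_gammaR_atTop (hr : r ≠ 0) : Tendsto (GammaR r) atTop atTop :=
  (tendsto_pow_atTop hr).comp <| tendsto_gamma_atTop.comp <|
    tendsto_atTop_add_const_right _ _ (tendsto_rpow_atTop (by positivity))

lemma gammaRInv_gammaR (hr : r ≠ 0) {x : ℝ} (hx : 1 ≤ x) : GammaRInv r (GammaR r x) = x := by
  have sublevel : {x' : ℝ | 1 ≤ x' ∧ GammaR r x' ≤ GammaR r x} = Icc 1 x := by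
    ext z
    exact and_congr_right fun hz ↦ (gammaR_strictMonoOn hr).le_iff_le hz hx
  rw [GammaRInv, sublevel, csSup_Icc hx]

lemma gammaRInv_zero : GammaRInv r 0 = 0 := by
  have empty : {x : ℝ | 1 ≤ x ∧ GammaR r x ≤ 0} = ∅ :=
    eq_empty_of_forall_notMem fun x ⟨hx, hle⟩ ↦ hle.not_gt <| pow_pos (Real.Gamma_pos_of_pos
      (add_pos_of_nonneg_of_pos (Real.rpow_nonneg (by linarith) _) one_pos)) r
  rw [GammaRInv, empty, Real.sSup_empty]

lemma exists_gammaR_eq (hr : r ≠ 0) {y : ℝ} (hy : 1 ≤ y) : ∃ x, 1 ≤ x ∧ GammaR r x = y := by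
  obtain ⟨b, hyb, hb⟩ :=
    (((tendsto_gammaR_atTop hr).eventually_ge_atTop y).and (eventually_ge_atTop 1)).exists
  obtain ⟨x, hx, hxy⟩ := intermediate_value_Icc hb
    (gammaR_continuousOn.mono Icc_subset_Ici_self) ⟨gammaR_one.trans_le hy, hyb⟩
  exact ⟨x, hx.1, hxy⟩

lemma one_le_gammaRInv (hr : r ≠ 0) {y : ℝ} (hy : 1 ≤ y) : 1 ≤ GammaRInv r y := by
  obtain ⟨x, hx, rfl⟩ := exists_gammaR_eq hr hy
  rwa [gammaRInv_gammaR hr hx]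

lemma gammaR_gammaRInv (hr : r ≠ 0) {y : ℝ} (hy : 1 ≤ y) : GammaR r (GammaRInv r y) = y := by
  obtain ⟨x, hx, rfl⟩ := exists_gammaR_eq hr hy
  rw [gammaRInv_gammaR hr hx]

lemma gammaRInv_monotoneOn (hr : r ≠ 0) : MonotoneOn (GammaRInv r) (Ici 1) := by
  intro y hy y' hy' h
  rwa [← (gammaR_strictMonoOn hr).le_iff_le (one_le_gammaRInv hr hy) (one_le_gammaRInv hr hy'),
    gammaR_gammaRInv hr hy, gammaR_gammaRInv hr hy']

lemma tendsto_gammaRInv_atTop (hr : r ≠ 0) : Tendsto (GammaRInv r) atTop atTop := by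
  refine tendsto_atTop.2 fun b ↦ ?_
  filter_upwards [eventually_ge_atTop (GammaR r (max b 1)), eventually_ge_atTop 1] with y hy hy1
  rw [← gammaR_gammaRInv hr hy1, (gammaR_strictMonoOn hr).le_iff_le (mem_Ici.2 (le_max_right _ _))
    (one_le_gammaRInv hr hy1)] at hy
  exact (le_max_left _ _).trans hy

lemma div_gammaRInv_eq_gamma_pow (hr : r ≠ 0) {y : ℝ} (hy : 1 ≤ y) :
    y / GammaRInv r y = Real.Gamma (GammaRInv r y ^ (r : ℝ)⁻¹) ^ r := by
  have pos : 0 < GammaRInv r y := zero_lt_one.trans_le (one_le_gammaRInv hr hy)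
  rw [div_eq_iff pos.ne']
  nth_rw 1 [← gammaR_gammaRInv hr hy]
  rw [GammaR, Real.Gamma_add_one (Real.rpow_pos_of_pos pos _).ne', mul_pow,
    Real.rpow_inv_natCast_pow pos.le hr, mul_comm]

lemma tendsto_gammaRInv_rpow_inv_atTop (hr : r ≠ 0) :
    Tendsto (fun y ↦ GammaRInv r y ^ (r : ℝ)⁻¹) atTop atTop :=
  (tendsto_rpow_atTop (by positivity)).comp (tendsto_gammaRInv_atTop hr)

lemma tendsto_div_gammaRInv_atTop (hr : r ≠ 0) :
    Tendsto (fun y ↦ y / GammaRInv r y) atTop atTop := by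
  refine ((tendsto_pow_atTop hr).comp
    (tendsto_gamma_atTop.comp (tendsto_gammaRInv_rpow_inv_atTop hr))).congr' ?_
  filter_upwards [eventually_ge_atTop 1] with y hy
  exact (div_gammaRInv_eq_gamma_pow hr hy).symm

lemma exists_monotoneOn_div_gammaRInv (hr : r ≠ 0) :
    ∃ y₀, MonotoneOn (fun y ↦ y / GammaRInv r y) (Ici y₀) := by
  obtain ⟨y₀, hy₀⟩ := eventually_atTop.1
    (((tendsto_gammaRInv_rpow_inv_atTop hr).eventually_ge_atTop 2).and (eventually_ge_atTop 1))
  refine ⟨y₀, fun y hy y' hy' h ↦ ?_⟩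
  obtain ⟨two_le, one_le⟩ := hy₀ y hy
  obtain ⟨two_le', one_le'⟩ := hy₀ y' hy'
  have root_le : GammaRInv r y ^ (r : ℝ)⁻¹ ≤ GammaRInv r y' ^ (r : ℝ)⁻¹ :=
    Real.rpow_le_rpow (zero_le_one.trans (one_le_gammaRInv hr one_le))
      (gammaRInv_monotoneOn hr one_le one_le' h) (by positivity)
  simp only [div_gammaRInv_eq_gamma_pow hr one_le, div_gammaRInv_eq_gamma_pow hr one_le']
  exact pow_le_pow_left₀ (Real.Gamma_nonneg_of_nonneg (zero_le_two.trans two_le))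
    (Real.Gamma_strictMonoOn_Ici.monotoneOn two_le two_le' root_le) r

end GammaR

section SlowScale

/-- The growth functions `L` for which the construction realises slow entropy at the scaling
family `a_n(t) = exp (t L(n))`: `L` grows to infinity, slower than `log`, and varies slowly. -/
structure IsSlowScale (L : ℕ → ℝ) : Prop where
  nonneg : ∀ n, 0 ≤ L n
  tendsto_atTop : Tendsto L atTop atTop
  isLittleO_log : L =o[atTop] fun n : ℕ ↦ Real.log n
  slowlyVarying : ∀ c, ∀ δ > 0, ∀ᶠ N : ℕ in atTop, ∀ m : ℕ,
    N < m * Real.exp (c * L N) → (1 - δ) * L N ≤ L m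

lemma eventually_mul_le_log_of_isLittleO {L : ℕ → ℝ} (hL : L =o[atTop] fun n : ℕ ↦ Real.log n)
    (c C : ℝ) : ∀ᶠ N : ℕ in atTop, c * L N + C ≤ Real.log N := by
  have log_atTop := Real.tendsto_log_atTop.comp (tendsto_natCast_atTop_atTop (R := ℝ))
  filter_upwards [(hL.const_mul_left c).def (half_pos one_pos),
    log_atTop.eventually_ge_atTop (2 * C),
    log_atTop.eventually_ge_atTop 0] with N hc hC h0
  simp only [Function.comp_apply] at hC h0
  rw [Real.norm_of_nonneg h0] at hc
  linarith [(Real.le_norm_self (c * L N)).trans hc]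

lemma IsSlowScale.eventually_mul_exp_le {L : ℕ → ℝ} (hL : IsSlowScale L) (C c : ℝ) :
    ∀ᶠ N : ℕ in atTop, C * Real.exp (c * L N) ≤ N := by
  filter_upwards [eventually_mul_le_log_of_isLittleO hL.isLittleO_log c (Real.log (max C 1)),
    eventually_ge_atTop 1] with N hN hN1
  have one_le : 1 ≤ max C 1 := le_max_right _ _
  have hN0 : (0 : ℝ) < N := by exact_mod_cast hN1
  calc C * Real.exp (c * L N) ≤ max C 1 * Real.exp (c * L N) := by gcongr; exact le_max_left _ _
    _ = Real.exp (c * L N + Real.log (max C 1)) := by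
      rw [Real.exp_add, Real.exp_log (by linarith), mul_comm]
    _ ≤ N := by rwa [← Real.le_log_iff_exp_le hN0]

lemma IsSlowScale.tendsto_mul_exp_neg {L : ℕ → ℝ} (hL : IsSlowScale L) {c : ℝ} (hc : 0 < c) :
    Tendsto (fun N ↦ L N * Real.exp (-(c * L N))) atTop (𝓝 0) := by
  have h := ((Real.tendsto_pow_mul_exp_neg_atTop_nhds_zero 1).comp
    (hL.tendsto_atTop.const_mul_atTop hc)).const_mul c⁻¹
  rw [mul_zero] at h
  refine h.congr fun N ↦ ?_
  rw [Function.comp_apply, pow_one, ← mul_assoc, inv_mul_cancel_left₀ hc.ne']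

end SlowScale

section IntermediateScale

variable {r q : ℕ}

/-- The logarithm of the intermediate scaling family `a^{int1,r}` with base `q` at `t = 1`. -/
noncomputable def intRate (r q m : ℕ) : ℝ :=
  Real.log m / GammaRInv r (Real.log m / Real.log q)

lemma intScale1_eq_exp_intRate (r q m : ℕ) (t : ℝ) :
    intScale1 r q m t = Real.exp (t * intRate r q m) := by
  rcases m.eq_zero_or_pos with rfl | hm
  · simp [intScale1, intRate, gammaRInv_zero]
  · rw [intScale1, intRate, Real.rpow_def_of_pos (Nat.cast_pos.2 hm)]
    ring_nf

lemma tendsto_log_natCast_div_log_atTop (hq : 2 ≤ q) :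
    Tendsto (fun m : ℕ ↦ Real.log m / Real.log q) atTop atTop :=
  (Real.tendsto_log_atTop.comp tendsto_natCast_atTop_atTop).atTop_div_const
    (Real.log_pos (by exact_mod_cast hq))

lemma log_natCast_div_log_mono (q : ℕ) : Monotone fun m : ℕ ↦ Real.log m / Real.log q := by
  intro m m' h
  rcases m.eq_zero_or_pos with rfl | hm
  · simp only [Nat.cast_zero, Real.log_zero, zero_div]
    exact div_nonneg (Real.log_natCast_nonneg _) (Real.log_natCast_nonneg _)
  · have := Real.log_natCast_nonneg q
    dsimp only
    gcongr

lemma intRate_eq_mul_div_gammaRInv (hq : 2 ≤ q) (m : ℕ) : intRate r q m =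
    Real.log q * (Real.log m / Real.log q / GammaRInv r (Real.log m / Real.log q)) := by
  have : Real.log q ≠ 0 := (Real.log_pos (by exact_mod_cast hq)).ne'
  rw [intRate]
  field_simp

lemma intRate_nonneg (m : ℕ) : 0 ≤ intRate r q m :=
  div_nonneg (Real.log_natCast_nonneg m) (Real.sSup_nonneg fun _ hx ↦ zero_le_one.trans hx.1)

lemma tendsto_intRate_atTop (hr : r ≠ 0) (hq : 2 ≤ q) : Tendsto (intRate r q) atTop atTop :=
  (((tendsto_div_gammaRInv_atTop hr).comp (tendsto_log_natCast_div_log_atTop hq)).const_mul_atTop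
    (Real.log_pos (by exact_mod_cast hq))).congr fun m ↦ (intRate_eq_mul_div_gammaRInv hq m).symm

lemma intRate_isLittleO_log (hr : r ≠ 0) (hq : 2 ≤ q) :
    intRate r q =o[atTop] fun m : ℕ ↦ Real.log m := by
  have inv_tendsto : Tendsto (fun m : ℕ ↦ (GammaRInv r (Real.log m / Real.log q))⁻¹) atTop (𝓝 0) :=
    tendsto_inv_atTop_zero.comp
      ((tendsto_gammaRInv_atTop hr).comp (tendsto_log_natCast_div_log_atTop hq))
  exact ((Asymptotics.isBigO_refl (fun m : ℕ ↦ Real.log m) atTop).mul_isLittleO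
    ((Asymptotics.isLittleO_one_iff ℝ).2 inv_tendsto)).congr
    (fun m ↦ (div_eq_mul_inv _ _).symm) fun m ↦ mul_one _

lemma exists_monotoneOn_intRate (hr : r ≠ 0) (hq : 2 ≤ q) :
    ∃ m₀, MonotoneOn (intRate r q) (Ici m₀) := by
  obtain ⟨y₀, hy₀⟩ := exists_monotoneOn_div_gammaRInv hr
  obtain ⟨m₀, hm₀⟩ :=
    eventually_atTop.1 ((tendsto_log_natCast_div_log_atTop hq).eventually_ge_atTop y₀)
  refine ⟨m₀, fun m hm m' hm' h ↦ ?_⟩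
  rw [intRate_eq_mul_div_gammaRInv hq, intRate_eq_mul_div_gammaRInv hq]
  exact mul_le_mul_of_nonneg_left
    (hy₀ (hm₀ m hm) (hm₀ m' hm') (log_natCast_div_log_mono q h)) (Real.log_natCast_nonneg q)

lemma sub_div_gammaRInv_le_intRate (hr : r ≠ 0) {m N : ℕ} (hmN : m ≤ N)
    (hm : 1 ≤ Real.log m / Real.log q) {a : ℝ} (ha : Real.log N - a ≤ Real.log m) :
    intRate r q N - a / GammaRInv r (Real.log N / Real.log q) ≤ intRate r q m := by
  have hN := hm.trans (log_natCast_div_log_mono q hmN)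
  have pos := zero_lt_one.trans_le (one_le_gammaRInv hr hm)
  have posN := zero_lt_one.trans_le (one_le_gammaRInv hr hN)
  calc intRate r q N - a / GammaRInv r (Real.log N / Real.log q)
      = (Real.log N - a) / GammaRInv r (Real.log N / Real.log q) := (sub_div _ _ _).symm
    _ ≤ Real.log m / GammaRInv r (Real.log N / Real.log q) := by gcongr
    _ ≤ intRate r q m := div_le_div_of_nonneg_left (Real.log_natCast_nonneg m) pos
        (gammaRInv_monotoneOn hr hm hN (log_natCast_div_log_mono q hmN))

lemma intRate_slowlyVarying (hr : r ≠ 0) (hq : 2 ≤ q) (c δ : ℝ) (hδ : 0 < δ) :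
    ∀ᶠ N : ℕ in atTop, ∀ m : ℕ,
      N < m * Real.exp (c * intRate r q N) → (1 - δ) * intRate r q N ≤ intRate r q m := by
  obtain ⟨m₀, hm₀⟩ := exists_monotoneOn_intRate hr hq
  have hlogq : 0 < Real.log q := Real.log_pos (by exact_mod_cast hq)
  have div_tendsto := (tendsto_gammaRInv_atTop hr).comp (tendsto_log_natCast_div_log_atTop hq)
  filter_upwards [eventually_ge_atTop m₀,
    div_tendsto.eventually_ge_atTop (max (c / δ) 1),
    eventually_mul_le_log_of_isLittleO (intRate_isLittleO_log hr hq) c (Real.log q)]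
    with N hN hdiv hlog m hm
  have nonneg := intRate_nonneg (r := r) (q := q) N
  rcases le_total N m with hNm | hmN
  · have := hm₀ hN (hN.trans hNm) hNm
    nlinarith
  have hm0 : 0 < (m : ℝ) :=
    (pos_iff_pos_of_mul_pos ((Nat.cast_nonneg N).trans_lt hm)).2 (Real.exp_pos _)
  have hN0 : (0 : ℝ) < N := hm0.trans_le (by exact_mod_cast hmN)
  have log_le : Real.log N - c * intRate r q N ≤ Real.log m := by
    have := Real.log_le_log hN0 hm.le
    rw [Real.log_mul hm0.ne' (Real.exp_ne_zero _), Real.log_exp] at this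
    linarith
  have one_le : 1 ≤ Real.log m / Real.log q := by rw [le_div_iff₀ hlogq]; linarith
  have err_le : c * intRate r q N / GammaRInv r (Real.log N / Real.log q) ≤ δ * intRate r q N := by
    simp only [Function.comp_apply, sup_le_iff] at hdiv
    rw [div_le_iff₀ (zero_lt_one.trans_le hdiv.2)]
    nlinarith [(div_le_iff₀ hδ).1 hdiv.1]
  linarith [sub_div_gammaRInv_le_intRate hr hmN one_le log_le]

lemma isSlowScale_intRate (hr : r ≠ 0) (hq : 2 ≤ q) : IsSlowScale (intRate r q) where
  nonneg := intRate_nonneg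
  tendsto_atTop := tendsto_intRate_atTop hr hq
  isLittleO_log := intRate_isLittleO_log hr hq
  slowlyVarying := fun c δ hδ ↦ intRate_slowlyVarying hr hq c δ hδ

end IntermediateScale

section RiemannLebesgue

lemma injOn_Ioo_of_hasDerivAt_ne_zero {a b : ℝ} {f f' : ℝ → ℝ}
    (hf : ∀ x ∈ Ioo a b, HasDerivAt f (f' x) x) (hf' : ∀ x ∈ Ioo a b, f' x ≠ 0) :
    InjOn f (Ioo a b) := by
  have ne_of_lt {x y : ℝ} (hx : x ∈ Ioo a b) (hy : y ∈ Ioo a b) (hxy : x < y) : f x ≠ f y := by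
    intro heq
    have sub : Icc x y ⊆ Ioo a b := Icc_subset_Ioo hx.1 hy.2
    obtain ⟨c, hc, hc0⟩ := exists_hasDerivAt_eq_zero hxy
      (fun z hz ↦ (hf z (sub hz)).continuousAt.continuousWithinAt) heq
      fun z hz ↦ hf z (sub (Ioo_subset_Icc_self hz))
    exact hf' c (sub (Ioo_subset_Icc_self hc)) hc0
  intro x hx y hy heq
  by_contra hne
  rcases lt_or_gt_of_ne hne with h | h
  exacts [ne_of_lt hx hy h heq, ne_of_lt hy hx h heq.symm]

-- The substitution `v = f x` turns the integral into a Fourier transform.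
lemma tendsto_setIntegral_mul_exp_of_hasDerivAt_ne_zero {a b : ℝ} {f f' : ℝ → ℝ}
    (hf : ∀ x ∈ Ioo a b, HasDerivAt f (f' x) x) (hf' : ∀ x ∈ Ioo a b, f' x ≠ 0) (u : ℝ → ℂ) :
    Tendsto (fun Z : ℝ ↦ ∫ x in Ioo a b, u x * Complex.exp (Complex.I * (Z * f x : ℝ)))
      atTop (𝓝 0) := by
  have hinj := injOn_Ioo_of_hasDerivAt_ne_zero hf hf'
  have himage : MeasurableSet (f '' Ioo a b) := measurableSet_Ioo.image_of_continuousOn_injOn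
    (fun x hx ↦ (hf x hx).continuousAt.continuousWithinAt) hinj
  set w : ℝ → ℂ := (f '' Ioo a b).indicator fun v ↦
    u (Function.invFunOn f (Ioo a b) v) / (|f' (Function.invFunOn f (Ioo a b) v)| : ℝ) with hw
  have frequency : Tendsto (fun Z : ℝ ↦ -(Z / (2 * Real.pi))) atTop (cocompact ℝ) :=
    (tendsto_neg_atTop_atBot.comp (tendsto_id.atTop_div_const Real.two_pi_pos)).mono_right
      atBot_le_cocompact
  refine ((Real.tendsto_integral_exp_smul_cocompact w).comp frequency).congr fun Z ↦ ?_
  have char_smul (v : ℝ) : Real.fourierChar (-(v * -(Z / (2 * Real.pi)))) • w v =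
      (f '' Ioo a b).indicator (fun v ↦ Complex.exp (Complex.I * (Z * v : ℝ)) * w v) v := by
    have char_eq : (Real.fourierChar (-(v * -(Z / (2 * Real.pi)))) : ℂ) =
        Complex.exp (Complex.I * (Z * v : ℝ)) := by
      rw [Real.fourierChar_apply, mul_comm Complex.I]
      congr 3
      field_simp
    by_cases hv : v ∈ f '' Ioo a b
    · rw [indicator_of_mem hv, Circle.smul_def, smul_eq_mul, char_eq]
    · rw [indicator_of_notMem hv, hw, indicator_of_notMem hv, smul_zero]
  simp only [Function.comp_apply, char_smul]
  rw [integral_indicator himage, integral_image_eq_integral_abs_deriv_smul measurableSet_Ioo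
    (fun x hx ↦ (hf x hx).hasDerivWithinAt) hinj]
  refine setIntegral_congr_fun measurableSet_Ioo fun x hx ↦ ?_
  have hne : ((|f' x| : ℝ) : ℂ) ≠ 0 := by exact_mod_cast abs_ne_zero.2 (hf' x hx)
  simp only [hw, indicator_of_mem (mem_image_of_mem f hx), hinj.leftInvOn_invFunOn hx,
    Complex.real_smul]
  field_simp

lemma sin_two_pi_mul_ne_zero {q k : ℕ} {x : ℝ} (hk : k < 2 * q * x) (hk' : 2 * q * x < k + 1) :
    Real.sin (2 * Real.pi * q * x) ≠ 0 := by
  rw [Ne, Real.sin_eq_zero_iff]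
  rintro ⟨n, hn⟩
  have n_eq : (n : ℝ) = 2 * q * x := mul_right_cancel₀ Real.pi_ne_zero (by linarith)
  rw [← n_eq] at hk hk'
  have : (k : ℤ) < n := by exact_mod_cast hk
  have : n < (k : ℤ) + 1 := by exact_mod_cast hk'
  omega

lemma fourier_natCast_re (q : ℕ) (x : ℝ) :
    (fourier (q : ℤ) (x : UnitAddCircle) : ℂ).re = Real.cos (2 * Real.pi * q * x) := by
  rw [fourier_coe_apply, ← Complex.exp_ofReal_mul_I_re]
  push_cast
  ring_nf

lemma norm_exp_I_mul_ofReal (x : ℝ) : ‖Complex.exp (Complex.I * x)‖ = 1 := by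
  rw [mul_comm, Complex.norm_exp_ofReal_mul_I]

lemma tendsto_integral_mul_exp_fourier_re {q : ℕ} (hq : q ≠ 0) {u : UnitAddCircle → ℂ}
    (hu : Integrable u) :
    Tendsto (fun Z : ℝ ↦ ∫ θ, u θ * Complex.exp (Complex.I * (Z * (fourier (q : ℤ) θ).re : ℝ)))
      atTop (𝓝 0) := by
  have hq0 : (0 : ℝ) < 2 * q := by positivity
  set a : ℕ → ℝ := fun k ↦ k / (2 * q) with ha
  have mono (k : ℕ) : a k ≤ a (k + 1) := by simp only [ha]; gcongr; simp
  set F : ℝ → UnitAddCircle → ℂ :=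
    fun Z θ ↦ u θ * Complex.exp (Complex.I * (Z * (fourier (q : ℤ) θ).re : ℝ))
  have integrable_F (Z : ℝ) : Integrable (F Z) :=
    hu.mul_bdd (c := 1) (by fun_prop) (ae_of_all _ fun θ ↦ (norm_exp_I_mul_ofReal _).le)
  have intervalIntegrable_F (Z : ℝ) (s t : ℝ) :
      IntervalIntegrable (fun x : ℝ ↦ F Z x) volume s t := by
    refine Function.Periodic.intervalIntegrable (T := 1) (t := 0)
      (fun x ↦ by rw [AddCircle.coe_add_period]) one_ne_zero ?_ s t
    rw [intervalIntegrable_iff_integrableOn_Ioc_of_le (by simp)]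
    exact (UnitAddCircle.measurePreserving_mk 0).integrable_comp_of_integrable (integrable_F Z)
  have split (Z : ℝ) : ∫ θ, F Z θ = ∑ k ∈ Finset.range (2 * q), ∫ x in Ioo (a k) (a (k + 1)),
      u x * Complex.exp (Complex.I * (Z * Real.cos (2 * Real.pi * q * x) : ℝ)) := by
    have hends : a 0 = 0 ∧ a (2 * q) = 0 + 1 := by
      simp only [ha]; push_cast; exact ⟨zero_div _, by rw [div_self hq0.ne', zero_add]⟩
    rw [← UnitAddCircle.intervalIntegral_preimage 0, ← hends.2, ← hends.1,
      ← intervalIntegral.sum_integral_adjacent_intervals fun k _ ↦ intervalIntegrable_F Z _ _]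
    refine Finset.sum_congr rfl fun k _ ↦ ?_
    rw [intervalIntegral.integral_of_le (mono k), integral_Ioc_eq_integral_Ioo]
    simp only [F, fourier_natCast_re]
  refine Tendsto.congr (fun Z ↦ (split Z).symm) ?_
  rw [show (0 : ℂ) = ∑ k ∈ Finset.range (2 * q), 0 from Finset.sum_const_zero.symm]
  refine tendsto_finsetSum _ fun k _ ↦ tendsto_setIntegral_mul_exp_of_hasDerivAt_ne_zero
    (f' := fun x ↦ -Real.sin (2 * Real.pi * q * x) * (2 * Real.pi * q)) (fun x _ ↦ ?_)
    (fun x hx ↦ ?_) _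
  · simpa using ((hasDerivAt_id x).const_mul (2 * Real.pi * q)).cos
  · have hk := (div_lt_iff₀ hq0).1 hx.1
    have hk' := (lt_div_iff₀ hq0).1 hx.2
    push_cast at hk'
    exact mul_ne_zero (neg_ne_zero.2 (sin_two_pi_mul_ne_zero (by linarith) (by linarith)))
      (by positivity)

end RiemannLebesgue

section CircleAverages

lemma sum_range_mul {M : Type*} [AddCommMonoid M] (f : ℕ → M) (q n : ℕ) :
    ∑ j ∈ Finset.range (q * n), f j =
      ∑ r ∈ Finset.range q, ∑ i ∈ Finset.range n, f (q * i + r) := by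
  rw [Finset.sum_comm]
  induction n with
  | zero => simp only [mul_zero, Finset.range_zero, Finset.sum_empty]
  | succ n ih => rw [mul_add_one, Finset.sum_range_add, ih, Finset.sum_range_succ]

lemma norm_addCircle_coe_le_abs {p : ℝ} (x : ℝ) : ‖(x : AddCircle p)‖ ≤ |x| :=
  QuotientAddGroup.norm_mk_le_norm

section Riemann

variable {E : Type*} [NormedAddCommGroup E] [NormedSpace ℝ E] [CompleteSpace E]
  {u : UnitAddCircle → E} {K : ℝ≥0}

lemma norm_sub_smul_intervalIntegral_le (hu : LipschitzWith K u) {n : ℕ} (hn : n ≠ 0) (a : ℝ) :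
    ‖u a - n • ∫ x in a..a + 1 / n, u x‖ ≤ K / n := by
  have hn0 : (0 : ℝ) < n := by positivity
  have continuous_u : Continuous fun x : ℝ ↦ u x :=
    hu.continuous.comp (AddCircle.continuous_mk' 1)
  have le : a ≤ a + 1 / n := le_add_of_nonneg_right (by positivity)
  have as_integral : u a - n • ∫ x in a..a + 1 / n, u x =
      (n : ℝ) • ∫ x in a..a + 1 / n, (u a - u x) := by
    rw [intervalIntegral.integral_sub intervalIntegrable_const
      (continuous_u.intervalIntegrable _ _), intervalIntegral.integral_const, smul_sub, smul_smul,
      add_sub_cancel_left, mul_one_div_cancel hn0.ne', one_smul, Nat.cast_smul_eq_nsmul]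
  have bound : ∀ x ∈ uIoc a (a + 1 / n), ‖u a - u x‖ ≤ K * (1 / n) := by
    intro x hx
    rw [uIoc_of_le le] at hx
    calc ‖u a - u x‖ ≤ K * ‖((a - x : ℝ) : UnitAddCircle)‖ := by
          rw [← dist_eq_norm, AddCircle.coe_sub, ← dist_eq_norm]; exact hu.dist_le_mul _ _
      _ ≤ K * (1 / n) := by
          gcongr
          refine (norm_addCircle_coe_le_abs _).trans (abs_le.2 ⟨?_, ?_⟩) <;> linarith [hx.1, hx.2]
  rw [as_integral, norm_smul, Real.norm_natCast]
  calc n * ‖∫ x in a..a + 1 / n, (u a - u x)‖ ≤ n * (K * (1 / n) * |a + 1 / n - a|) := by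
        gcongr; exact intervalIntegral.norm_integral_le_of_norm_le_const bound
    _ = K / n := by
        rw [add_sub_cancel_left, abs_of_pos (by positivity)]; field_simp

lemma norm_sum_add_div_sub_smul_integral_le (hu : LipschitzWith K u) {n : ℕ} (hn : n ≠ 0)
    (θ : UnitAddCircle) :
    ‖∑ i ∈ Finset.range n, u (θ + (i / n : ℝ)) - n • ∫ x, u x‖ ≤ K := by
  obtain ⟨t, rfl⟩ := QuotientAddGroup.mk_surjective θ
  have hn0 : (n : ℝ) ≠ 0 := by positivity
  have continuous_u : Continuous fun x : ℝ ↦ u x :=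
    hu.continuous.comp (AddCircle.continuous_mk' 1)
  have split : ∫ x, u x = ∑ i ∈ Finset.range n, ∫ x in t + i / n..t + i / n + 1 / n, u x := by
    have adjacent := intervalIntegral.sum_integral_adjacent_intervals (μ := volume)
      (a := fun i : ℕ ↦ t + i / n) (n := n) fun i _ ↦ continuous_u.intervalIntegrable _ _
    rw [Nat.cast_zero, zero_div, add_zero, div_self hn0,
      UnitAddCircle.intervalIntegral_preimage] at adjacent
    rw [← adjacent]
    refine Finset.sum_congr rfl fun i _ ↦ ?_
    rw [Nat.cast_add_one, add_div, add_assoc]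
  rw [split, Finset.smul_sum, ← Finset.sum_sub_distrib]
  calc _ ≤ ∑ _i ∈ Finset.range n, (K / n : ℝ) := norm_sum_le_of_le _ fun i _ ↦
        norm_sub_smul_intervalIntegral_le hu hn (t + i / n)
    _ = K := by rw [Finset.sum_const, Finset.card_range, nsmul_eq_mul, mul_div_cancel₀ _ hn0]

lemma norm_average_orbit_sub_integral_le (hu : LipschitzWith K u) {q n : ℕ} (hq : q ≠ 0)
    (hn : n ≠ 0) {α : UnitAddCircle} (hα : q • α = (1 / n : ℝ)) :
    ‖((q * n : ℕ) : ℝ)⁻¹ • ∑ j ∈ Finset.range (q * n), u (j • α) - ∫ x, u x‖ ≤ K / n := by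
  have hqn : ((q * n : ℕ) : ℝ) ≠ 0 := by positivity
  have orbit (r i : ℕ) : (q * i + r) • α = r • α + (i / n : ℝ) := by
    rw [add_smul, mul_comm, mul_smul, hα, add_comm, ← AddCircle.coe_nsmul, nsmul_eq_mul,
      mul_one_div]
  have defect : ((q * n : ℕ) : ℝ)⁻¹ • ∑ j ∈ Finset.range (q * n), u (j • α) - ∫ x, u x =
      ((q * n : ℕ) : ℝ)⁻¹ • ∑ r ∈ Finset.range q,
        (∑ i ∈ Finset.range n, u (r • α + (i / n : ℝ)) - n • ∫ x, u x) := by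
    rw [Finset.sum_sub_distrib, Finset.sum_const, Finset.card_range, smul_sub, smul_smul,
      ← Nat.cast_smul_eq_nsmul ℝ, inv_smul_smul₀ hqn, sum_range_mul]
    simp only [orbit]
  rw [defect, norm_smul, norm_inv, Real.norm_natCast]
  calc _ ≤ ((q * n : ℕ) : ℝ)⁻¹ * ∑ _r ∈ Finset.range q, (K : ℝ) := by
        gcongr
        exact norm_sum_le_of_le _ fun r _ ↦ norm_sum_add_div_sub_smul_integral_le hu hn _
    _ = K / n := by
        rw [Finset.sum_const, Finset.card_range, nsmul_eq_mul]; push_cast; field_simp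

end Riemann

end CircleAverages

section ShearPhase

lemma exists_coe_eq_abs_eq_norm (d : UnitAddCircle) :
    ∃ x : ℝ, (x : UnitAddCircle) = d ∧ |x| = ‖d‖ := by
  obtain ⟨x, rfl⟩ := QuotientAddGroup.mk_surjective d
  refine ⟨x - round x, ?_, UnitAddCircle.norm_eq.symm⟩
  have round_eq_zero : ((round x : ℝ) : UnitAddCircle) = 0 :=
    (AddCircle.coe_eq_zero_iff 1).2 ⟨round x, by simp⟩
  rw [AddCircle.coe_sub, round_eq_zero, sub_zero]

lemma fourier_add_apply (n : ℤ) (x y : UnitAddCircle) :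
    fourier n (x + y) = fourier n x * fourier n y := by
  simp only [fourier_apply, smul_add, AddCircle.toCircle_add, Circle.coe_mul]

lemma norm_fourier_apply (n : ℤ) (x : UnitAddCircle) : ‖fourier n x‖ = 1 := by
  rw [fourier_apply, Circle.norm_coe]

lemma fourier_coe_eq_exp (n : ℤ) (x : ℝ) :
    fourier n (x : UnitAddCircle) = Complex.exp (Complex.I * (2 * Real.pi * n * x : ℝ)) := by
  rw [fourier_coe_apply]
  push_cast
  ring_nf

lemma norm_fourier_sub_fourier_le (n : ℤ) (x y : UnitAddCircle) :
    ‖fourier n x - fourier n y‖ ≤ 2 * Real.pi * |(n : ℝ)| * ‖x - y‖ := by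
  obtain ⟨t, ht, abs_t⟩ := exists_coe_eq_abs_eq_norm (x - y)
  have factor : fourier n x - fourier n y = fourier n y * (fourier n (t : UnitAddCircle) - 1) := by
    rw [mul_sub_one, ← fourier_add_apply, ht, add_sub_cancel]
  rw [factor, norm_mul, norm_fourier_apply, one_mul, ← abs_t, fourier_coe_eq_exp]
  refine (Real.norm_exp_I_mul_ofReal_sub_one_le).trans_eq ?_
  rw [Real.norm_eq_abs, abs_mul, abs_mul, abs_of_pos Real.two_pi_pos]

lemma abs_re_mul_fourier_sub_le (C : ℂ) (q : ℕ) (x y : UnitAddCircle) :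
    |(C * fourier (q : ℤ) x).re - (C * fourier (q : ℤ) y).re| ≤
      2 * Real.pi * q * ‖C‖ * ‖x - y‖ := by
  calc _ ≤ ‖C * (fourier (q : ℤ) x - fourier (q : ℤ) y)‖ := by
        rw [mul_sub, ← Complex.sub_re]; exact Complex.abs_re_le_norm _
    _ ≤ ‖C‖ * (2 * Real.pi * |((q : ℤ) : ℝ)| * ‖x - y‖) := by
        rw [norm_mul]; gcongr; exact norm_fourier_sub_fourier_le _ _ _
    _ = 2 * Real.pi * q * ‖C‖ * ‖x - y‖ := by rw [Int.cast_natCast, Nat.abs_cast]; ring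

/-- The restriction of a character of the torus, composed with a shear whose profile is the
trigonometric polynomial `A * Re (C * exp (2π i q θ))`, to a horizontal circle. -/
noncomputable def shearPhase (q : ℕ) (l : ℤ) (A : ℝ) (C : ℂ) (θ : UnitAddCircle) : ℂ :=
  fourier l θ * fourier 1 ((A * (C * fourier (q : ℤ) θ).re : ℝ) : UnitAddCircle)

lemma lipschitzWith_shearPhase (q : ℕ) (l : ℤ) {A : ℝ} (hA : 0 ≤ A) (C : ℂ) :
    LipschitzWith (Real.toNNReal (2 * Real.pi * |(l : ℝ)| + 4 * Real.pi ^ 2 * q * (A * ‖C‖)))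
      (shearPhase q l A C) := by
  refine LipschitzWith.of_dist_le' fun x y ↦ ?_
  rw [dist_eq_norm, dist_eq_norm]
  set P : UnitAddCircle → UnitAddCircle :=
    fun θ ↦ ((A * (C * fourier (q : ℤ) θ).re : ℝ) : UnitAddCircle)
  have split : shearPhase q l A C x - shearPhase q l A C y =
      (fourier l x - fourier l y) * fourier 1 (P x) +
        fourier l y * (fourier 1 (P x) - fourier 1 (P y)) := by
    simp only [shearPhase, P]; ring
  have phase : ‖P x - P y‖ ≤ A * (2 * Real.pi * q * ‖C‖ * ‖x - y‖) := by
    rw [← AddCircle.coe_sub, ← mul_sub]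
    refine (norm_addCircle_coe_le_abs _).trans ?_
    rw [abs_mul, abs_of_nonneg hA]
    gcongr
    exact abs_re_mul_fourier_sub_le C q x y
  rw [split]
  calc _ ≤ ‖fourier l x - fourier l y‖ + ‖fourier 1 (P x) - fourier 1 (P y)‖ := by
        refine (norm_add_le _ _).trans_eq ?_
        simp only [norm_mul, norm_fourier_apply, mul_one, one_mul]
    _ ≤ 2 * Real.pi * |(l : ℝ)| * ‖x - y‖ +
        2 * Real.pi * |((1 : ℤ) : ℝ)| * (A * (2 * Real.pi * q * ‖C‖ * ‖x - y‖)) := by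
        gcongr
        · exact norm_fourier_sub_fourier_le _ _ _
        · exact (norm_fourier_sub_fourier_le _ _ _).trans (by gcongr)
    _ = _ := by rw [Int.cast_one, abs_one]; ring

lemma norm_integral_shearPhase {q : ℕ} (hq : q ≠ 0) (l : ℤ) (A : ℝ) (C : ℂ) :
    ‖∫ θ, shearPhase q l A C θ‖ = ‖∫ θ, shearPhase q l (A * ‖C‖) 1 θ‖ := by
  set γ : UnitAddCircle := ((Complex.arg C / (2 * Real.pi * q) : ℝ) : UnitAddCircle)
  have polar : C = ‖C‖ * fourier (q : ℤ) γ := by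
    rw [fourier_coe_eq_exp, Int.cast_natCast, mul_div_cancel₀ _ (by positivity), mul_comm Complex.I,
      Complex.norm_mul_exp_arg_mul_I]
  have translate (θ : UnitAddCircle) :
      shearPhase q l A C (θ + -γ) = fourier l (-γ) * shearPhase q l (A * ‖C‖) 1 θ := by
    have rotate : C * fourier (q : ℤ) (θ + -γ) = ‖C‖ * fourier (q : ℤ) θ := by
      rw [polar, mul_assoc, ← fourier_add_apply, add_comm γ, neg_add_cancel_right, ← polar]
    simp only [shearPhase]
    rw [rotate, Complex.re_ofReal_mul, fourier_add_apply, one_mul, mul_assoc A]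
    ring
  rw [← integral_add_right_eq_self (shearPhase q l A C) (-γ)]
  simp_rw [translate]
  rw [integral_const_mul, norm_mul, norm_fourier_apply, one_mul]

lemma tendsto_integral_shearPhase {q : ℕ} (hq : q ≠ 0) (l : ℤ) :
    Tendsto (fun Z : ℝ ↦ ∫ θ, shearPhase q l Z 1 θ) atTop (𝓝 0) := by
  have riemann_lebesgue := (tendsto_integral_mul_exp_fourier_re hq
    ((fourier l).continuous.integrable_of_hasCompactSupport (HasCompactSupport.of_compactSpace _))
    ).comp (tendsto_id.const_mul_atTop Real.two_pi_pos)
  refine riemann_lebesgue.congr fun Z ↦ integral_congr_ae (ae_of_all _ fun θ ↦ ?_)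
  simp only [shearPhase, fourier_coe_eq_exp, one_mul, Int.cast_one, mul_one, id, ← mul_assoc]

lemma eventually_norm_average_shearPhase_le {q : ℕ} (hq : q ≠ 0) (l : ℤ) (M : ℝ) {η : ℝ}
    (hη : 0 < η) :
    ∀ᶠ w : ℝ in atTop, ∀ᶠ κ : ℝ in atTop, ∀ (A : ℝ) (n : ℕ) (C : ℂ) (α : UnitAddCircle),
      w ≤ A * ‖C‖ → ‖C‖ ≤ M → κ * A ≤ n → q • α = (1 / n : ℝ) →
      ‖((q * n : ℕ) : ℝ)⁻¹ • ∑ j ∈ Finset.range (q * n), shearPhase q l A C (j • α)‖ ≤ η := by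
  filter_upwards [eventually_gt_atTop M, eventually_forall_ge_atTop.2
    ((tendsto_integral_shearPhase hq l).eventually (Metric.closedBall_mem_nhds 0 (half_pos hη)))]
    with w hwM hw
  filter_upwards [eventually_ge_atTop 1,
    eventually_ge_atTop ((2 * Real.pi * |(l : ℝ)| + 4 * Real.pi ^ 2 * q * M) / (η / 2))]
    with κ hκ1 hκ A n C α hwA hCM hn hα
  have hA : 1 ≤ A := by
    by_contra! h
    linarith [mul_le_of_le_one_left (norm_nonneg C) h.le]
  have hn1 : 1 ≤ (n : ℝ) := by nlinarith
  set K := 2 * Real.pi * |(l : ℝ)| + 4 * Real.pi ^ 2 * q * (A * ‖C‖)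
  have average_sub_integral := norm_average_orbit_sub_integral_le
    (lipschitzWith_shearPhase q l (zero_le_one.trans hA) C) hq
    (by rintro rfl; norm_num at hn1) hα
  rw [Real.coe_toNNReal _ (by positivity)] at average_sub_integral
  have integral_le : ‖∫ θ, shearPhase q l A C θ‖ ≤ η / 2 := by
    rw [norm_integral_shearPhase hq]
    exact mem_closedBall_zero_iff.1 (hw _ hwA)
  have lipschitz_le : K / n ≤ η / 2 := by
    rw [div_le_iff₀ (half_pos hη)] at hκ
    rw [div_le_iff₀ (by linarith)]
    calc K ≤ (2 * Real.pi * |(l : ℝ)| + 4 * Real.pi ^ 2 * q * M) * A := by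
          rw [add_mul, mul_assoc _ M, mul_comm M]
          exact add_le_add (le_mul_of_one_le_right (by positivity) hA) (by gcongr)
      _ ≤ κ * (η / 2) * A := by gcongr
      _ = η / 2 * (κ * A) := by ring
      _ ≤ η / 2 * n := by gcongr
  linarith [norm_le_norm_add_norm_sub' (((q * n : ℕ) : ℝ)⁻¹ •
    ∑ j ∈ Finset.range (q * n), shearPhase q l A C (j • α)) (∫ θ, shearPhase q l A C θ)]

end ShearPhase

section EmpiricalMeasures

variable {X Y ι : Type*} [MeasurableSpace X] [MeasurableSpace Y]

/-- The empirical measure `m⁻¹ ∑_{j < m} δ_{x j}` of the first `m` terms of a sequence; `m` is a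
positive natural number so that this is a probability measure. -/
noncomputable def empiricalMeasure (m : ℕ+) (x : ℕ → X) : ProbabilityMeasure X :=
  ⟨(m : ℝ≥0∞)⁻¹ • ∑ j ∈ Finset.range m, Measure.dirac (x j),
    ⟨by simp [ENNReal.inv_mul_cancel, m.ne_zero]⟩⟩

theorem integral_empiricalMeasure {E : Type*} [NormedAddCommGroup E] [NormedSpace ℝ E]
    [CompleteSpace E] [TopologicalSpace X] [OpensMeasurableSpace X]
    [SecondCountableTopologyEither X E]
    (m : ℕ+) (x : ℕ → X) {f : X → E} (hf : Continuous f) :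
    ∫ z, f z ∂(empiricalMeasure m x : Measure X) =
      (m : ℝ)⁻¹ • ∑ j ∈ Finset.range m, f (x j) := by
  have hfm : StronglyMeasurable f := hf.stronglyMeasurable
  simp only [empiricalMeasure, ProbabilityMeasure.coe_mk, integral_smul_measure]
  rw [integral_finsetSum_measure fun j _ ↦ integrable_dirac' hfm (by simp)]
  simp [integral_dirac' _ _ hfm]

theorem empiricalMeasure_apply (m : ℕ+) (x : ℕ → X) {s : Set X} (hs : MeasurableSet s)
    [DecidablePred fun j ↦ x j ∈ s] :
    (empiricalMeasure m x : Measure X) s =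
      (m : ℝ≥0∞)⁻¹ * ((Finset.range m).filter fun j ↦ x j ∈ s).card := by
  simp [empiricalMeasure, Measure.dirac_apply' _ hs, Set.indicator_apply, Finset.sum_boole]

theorem map_empiricalMeasure (m : ℕ+) (x : ℕ → X) {f : X → Y} (hf : Measurable f) :
    (empiricalMeasure m x).map hf.aemeasurable = empiricalMeasure m fun j ↦ f (x j) := by
  ext s hs
  rw [ProbabilityMeasure.map_apply' _ _ hs]
  simp [empiricalMeasure, Measure.dirac_apply' _ hs, Measure.dirac_apply' _ (hf hs)]
  rfl

theorem tendsto_empiricalMeasure_of_dist_le [PseudoMetricSpace X] [OpensMeasurableSpace X]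
    [SecondCountableTopology X] {l : Filter ι} [l.IsCountablyGenerated] {m : ι → ℕ+}
    {x y : ι → ℕ → X} {ε : ι → ℝ} {μ : ProbabilityMeasure X}
    (hx : Tendsto (fun i ↦ empiricalMeasure (m i) (x i)) l (𝓝 μ)) (hε : Tendsto ε l (𝓝 0))
    (hxy : ∀ᶠ i in l, ∀ j < (m i : ℕ), dist (x i j) (y i j) ≤ ε i) :
    Tendsto (fun i ↦ empiricalMeasure (m i) (y i)) l (𝓝 μ) := by
  rw [tendsto_iff_forall_lipschitz_integral_tendsto] at hx ⊢
  intro f hf hL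
  obtain ⟨L, hL'⟩ := hL
  refine tendsto_of_tendsto_of_dist (hx f hf ⟨L, hL'⟩) ?_
  refine squeeze_zero' (.of_forall fun _ ↦ dist_nonneg) ?_ (by simpa using hε.const_mul (L : ℝ))
  filter_upwards [hxy] with i hi
  have hm : (0 : ℝ) < m i := by exact_mod_cast (m i).pos
  rw [integral_empiricalMeasure _ _ hL'.continuous, integral_empiricalMeasure _ _ hL'.continuous,
    dist_eq_norm, ← smul_sub, ← Finset.sum_sub_distrib, norm_smul, norm_inv,
    Real.norm_of_nonneg hm.le, inv_mul_le_iff₀ hm]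
  calc ‖∑ j ∈ Finset.range (m i), (f (x i j) - f (y i j))‖
      ≤ ∑ _j ∈ Finset.range (m i), L * ε i := norm_sum_le_of_le _ fun j hj ↦ by
        rw [← dist_eq_norm]
        exact (hL'.dist_le_mul _ _).trans (by gcongr; exact hi j (Finset.mem_range.1 hj))
    _ = m i * (L * ε i) := by simp

end EmpiricalMeasures

section WeakConvergence

variable {X : Type*} [MeasurableSpace X] [TopologicalSpace X] [CompactSpace X]
  [OpensMeasurableSpace X]

theorem integrable_continuousMap (f : C(X, ℂ)) (ν : ProbabilityMeasure X) :
    Integrable f (ν : Measure X) :=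
  (BoundedContinuousFunction.mkOfCompact f).integrable _

theorem lipschitzWith_integral (ν : ProbabilityMeasure X) :
    LipschitzWith 1 fun f : C(X, ℂ) ↦ ∫ x, f x ∂(ν : Measure X) := by
  refine LipschitzWith.of_dist_le_mul fun f g ↦ ?_
  rw [dist_eq_norm, ← integral_sub (integrable_continuousMap f ν) (integrable_continuousMap g ν),
    NNReal.coe_one, one_mul]
  simpa using norm_integral_le_of_norm_le_const (μ := (ν : Measure X))
    (.of_forall fun x ↦ (dist_eq_norm (f x) (g x)).ge.trans (ContinuousMap.dist_apply_le_dist x))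

/-- The Weyl criterion: weak convergence only has to be tested on a family of functions with dense
linear span. -/
theorem le_nhds_of_forall_tendsto_integral {S : Set C(X, ℂ)}
    (hS : (Submodule.span ℂ S).topologicalClosure = ⊤) {l : Filter (ProbabilityMeasure X)}
    {μ : ProbabilityMeasure X}
    (h : ∀ f ∈ S, Tendsto (fun ν : ProbabilityMeasure X ↦ ∫ x, f x ∂(ν : Measure X)) l
      (𝓝 (∫ x, f x ∂(μ : Measure X)))) : l ≤ 𝓝 μ := by
  let W : Submodule ℂ C(X, ℂ) :=
    { carrier := {f | Tendsto (fun ν : ProbabilityMeasure X ↦ ∫ x, f x ∂(ν : Measure X)) l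
        (𝓝 (∫ x, f x ∂(μ : Measure X)))}
      zero_mem' := by simpa using tendsto_const_nhds
      add_mem' := fun hf hg ↦ by
        simpa [integral_add, integrable_continuousMap] using hf.add hg
      smul_mem' := fun c f hf ↦ by simpa [integral_const_mul] using hf.const_mul c }
  have hW : IsClosed (W : Set C(X, ℂ)) :=
    (LipschitzWith.uniformEquicontinuous _ 1 lipschitzWith_integral).equicontinuous
      |>.isClosed_setOfPred_tendsto (lipschitzWith_integral μ).continuous
  have htop : W = ⊤ := top_unique <| hS ▸
    Submodule.topologicalClosure_minimal _ (Submodule.span_le.2 h) hW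
  rw [← tendsto_id', ProbabilityMeasure.tendsto_iff_forall_integral_rclike_tendsto ℂ]
  exact fun f ↦ (htop ▸ Submodule.mem_top : f.toContinuousMap ∈ W)

end WeakConvergence

instance : IsProbabilityMeasure (volume : Measure UnitAddCircle) := ⟨UnitAddCircle.measure_univ⟩

instance : OpensMeasurableSpace (Torus2 × Torus2) := Prod.opensMeasurableSpace

section TorusCharacters

theorem topologicalClosure_span_image_comp_eq_top {X Y : Type*} [TopologicalSpace X]
    [TopologicalSpace Y] (e : X ≃ₜ Y) {S : Set C(Y, ℂ)}
    (hS : (Submodule.span ℂ S).topologicalClosure = ⊤) :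
    (Submodule.span ℂ ((fun f : C(Y, ℂ) ↦ f.comp (e : C(X, Y))) '' S)).topologicalClosure = ⊤ := by
  have surjective : Function.Surjective (ContinuousMap.compCLM ℂ ℂ (e : C(X, Y))) := fun f ↦
    ⟨f.comp (e.symm : C(Y, X)), by ext x; simp⟩
  have := surjective.denseRange.topologicalClosure_map_submodule hS
  rwa [Submodule.map_span] at this

lemma integral_fourier_eq_zero {n : ℤ} (hn : n ≠ 0) : ∫ x : UnitAddCircle, fourier n x = 0 :=
  integral_eq_zero_of_add_right_eq_neg (fourier_add_half_inv_index hn one_pos)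

/-- The character `(x, y) ↦ exp (2π i (l x + k y))` of the torus. -/
noncomputable def torusChar (l k : ℤ) : C(Torus2, ℂ) where
  toFun z := fourier l z.1 * fourier k z.2

lemma torusChar_apply (l k : ℤ) (z : Torus2) :
    torusChar l k z = fourier l z.1 * fourier k z.2 := rfl

lemma norm_torusChar_apply (l k : ℤ) (z : Torus2) : ‖torusChar l k z‖ = 1 := by
  rw [torusChar_apply, norm_mul, norm_fourier_apply, norm_fourier_apply, one_mul]

lemma integral_torusChar_eq_zero {l k : ℤ} (h : l ≠ 0 ∨ k ≠ 0) : ∫ z, torusChar l k z = 0 := by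
  simp only [torusChar_apply, Measure.volume_eq_prod, integral_prod_mul, mul_eq_zero]
  exact h.imp integral_fourier_eq_zero integral_fourier_eq_zero

/-- The character of `𝕋² × 𝕋²` acting by `torusChar l k` on the first factor and by
`torusChar l' k'` on the second. -/
noncomputable def torusPairChar (l k l' k' : ℤ) : C(Torus2 × Torus2, ℂ) where
  toFun p := torusChar l k p.1 * torusChar l' k' p.2

lemma torusPairChar_apply (l k l' k' : ℤ) (p : Torus2 × Torus2) :
    torusPairChar l k l' k' p = torusChar l k p.1 * torusChar l' k' p.2 := rfl

lemma topologicalClosure_span_torusPairChar :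
    (Submodule.span ℂ {f | ∃ l k l' k', torusPairChar l k l' k' = f}).topologicalClosure = ⊤ := by
  let coords : Torus2 × Torus2 ≃ₜ UnitAddTorus (Fin 4) :=
    { toFun p := ![p.1.1, p.1.2, p.2.1, p.2.2]
      invFun x := ((x 0, x 1), (x 2, x 3))
      left_inv _ := rfl
      right_inv x := by ext i; fin_cases i <;> rfl
      continuous_toFun := continuous_pi fun i ↦ by
        fin_cases i
        exacts [continuous_fst.fst, continuous_fst.snd, continuous_snd.fst, continuous_snd.snd]
      continuous_invFun := by fun_prop }
  refine top_unique ((topologicalClosure_span_image_comp_eq_top coords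
    UnitAddTorus.span_mFourier_closure_eq_top).ge.trans
      (Submodule.topologicalClosure_mono (Submodule.span_mono ?_)))
  rintro _ ⟨_, ⟨m, rfl⟩, rfl⟩
  refine ⟨m 0, m 1, m 2, m 3, ContinuousMap.ext fun p ↦ ?_⟩
  change _ = ∏ i, fourier (m i) (coords p i)
  rw [Fin.prod_univ_four]
  exact (mul_assoc _ _ _).symm

end TorusCharacters

section Shear

/-- The vertical shear `(x, y) ↦ (x, y + A cos (2π q x))` of the torus followed by the horizontal
shear `(x, y) ↦ (x + B y, y)`. -/
noncomputable def shear (A : ℝ) (B q : ℕ) : Torus2 ≃ₜ Torus2 where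
  toFun z := (z.1 + B • (z.2 + ((A * (fourier (q : ℤ) z.1).re : ℝ) : Torus1)),
    z.2 + ((A * (fourier (q : ℤ) z.1).re : ℝ) : Torus1))
  invFun z := (z.1 - B • z.2, z.2 - ((A * (fourier (q : ℤ) (z.1 - B • z.2)).re : ℝ) : Torus1))
  left_inv z := by simp
  right_inv z := by simp
  continuous_toFun := by
    have := AddCircle.continuous_mk' (1 : ℝ)
    fun_prop
  continuous_invFun := by
    have := AddCircle.continuous_mk' (1 : ℝ)
    fun_prop

lemma shear_apply (A : ℝ) (B q : ℕ) (z : Torus2) :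
    shear A B q z = (z.1 + B • (z.2 + ((A * (fourier (q : ℤ) z.1).re : ℝ) : Torus1)),
      z.2 + ((A * (fourier (q : ℤ) z.1).re : ℝ) : Torus1)) := rfl

lemma shear_symm_apply (A : ℝ) (B q : ℕ) (z : Torus2) :
    (shear A B q).symm z = (z.1 - B • z.2,
      z.2 - ((A * (fourier (q : ℤ) (z.1 - B • z.2)).re : ℝ) : Torus1)) := rfl

lemma measurePreserving_skew_add {f : Torus1 → Torus1} (hf : Continuous f) :
    MeasurePreserving (fun z : Torus2 ↦ (z.1, z.2 + f z.1)) volume volume :=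
  (MeasurePreserving.id volume).skew_product (g := fun x y ↦ y + f x)
    (by simp only [Function.uncurry_def]; fun_prop)
    (ae_of_all _ fun x ↦ (measurePreserving_add_right volume (f x)).map_eq)

lemma measurePreserving_shear (A : ℝ) (B q : ℕ) :
    MeasurePreserving (shear A B q) volume volume := by
  have swap : MeasurePreserving Prod.swap (volume : Measure Torus2) volume :=
    Measure.measurePreserving_swap
  have vertical := measurePreserving_skew_add (f := fun x ↦
    ((A * (fourier (q : ℤ) x).re : ℝ) : Torus1)) ((AddCircle.continuous_mk' 1).comp (by fun_prop))
  have horizontal := measurePreserving_skew_add (f := fun y ↦ B • y) (by fun_prop)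
  exact swap.comp (horizontal.comp (swap.comp vertical))

lemma shearPhase_mul_shearPhase (q : ℕ) (l l' : ℤ) (A : ℝ) (C C' : ℂ) (θ : UnitAddCircle) :
    shearPhase q l A C θ * shearPhase q l' A C' θ = shearPhase q (l + l') A (C + C') θ := by
  rw [shearPhase, shearPhase, shearPhase, mul_mul_mul_comm, fourier_add, ← fourier_add_apply,
    ← AddCircle.coe_add, ← mul_add, add_mul, Complex.add_re]

lemma torusChar_shear_add (l k : ℤ) (A : ℝ) (B q : ℕ) (z : Torus2) (θ : Torus1) :
    torusChar l k (shear A B q (z + (θ, 0))) = torusChar l (l * B + k) z *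
      shearPhase q l A ((l * B + k : ℤ) * fourier (q : ℤ) z.1) θ := by
  set K : ℤ := l * B + k with hK
  set a : ℝ := A * (fourier (q : ℤ) (z.1 + θ)).re with ha
  have phase : fourier K (a : UnitAddCircle) =
      fourier 1 ((A * (K * fourier (q : ℤ) z.1 * fourier (q : ℤ) θ).re : ℝ) : UnitAddCircle) := by
    rw [fourier_coe_eq_exp, fourier_coe_eq_exp, ha, fourier_add_apply, mul_assoc (K : ℂ),
      ← Complex.ofReal_intCast K, Complex.re_ofReal_mul]
    push_cast
    ring_nf
  calc torusChar l k (shear A B q (z + (θ, 0)))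
      = fourier l (z.1 + θ + B • (z.2 + (a : Torus1))) * fourier k (z.2 + (a : Torus1)) := by
        rw [torusChar_apply, shear_apply, Prod.fst_add, Prod.snd_add, add_zero]
    _ = fourier l (z.1 + θ) * fourier K (z.2 + (a : Torus1)) := by
        rw [fourier_add_apply l, mul_assoc, hK, fourier_add]
        simp only [fourier_apply, mul_zsmul, natCast_zsmul]
    _ = _ := by
        rw [fourier_add_apply, fourier_add_apply, phase, torusChar_apply, shearPhase]
        ring

end Shear

section PairEquidistribution

lemma four_mul_norm_le_norm_one_sub_fourier (v : UnitAddCircle) : 4 * ‖v‖ ≤ ‖1 - fourier 1 v‖ := by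
  obtain ⟨x, rfl, hx⟩ := exists_coe_eq_abs_eq_norm v
  have abs_pi_mul : |Real.pi * x| = Real.pi * |x| := by rw [abs_mul, abs_of_pos Real.pi_pos]
  have abs_le_half : |x| ≤ 1 / 2 := by
    simpa [hx] using AddCircle.norm_le_half_period (1 : ℝ) one_ne_zero (x := (x : UnitAddCircle))
  have jordan : 2 / Real.pi * |Real.pi * x| ≤ |Real.sin (Real.pi * x)| :=
    Real.mul_abs_le_abs_sin (by rw [abs_pi_mul]; nlinarith [Real.pi_pos])
  rw [abs_pi_mul, ← mul_assoc, div_mul_cancel₀ _ Real.pi_ne_zero] at jordan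
  calc 4 * ‖(x : UnitAddCircle)‖ = 2 * (2 * |x|) := by rw [← hx]; ring
    _ ≤ 2 * |Real.sin (Real.pi * x)| := by gcongr
    _ = ‖1 - fourier 1 (x : UnitAddCircle)‖ := by
      rw [norm_sub_rev, fourier_coe_eq_exp, Complex.norm_exp_I_mul_ofReal_sub_one, Real.norm_eq_abs,
        abs_mul, abs_two, Int.cast_one]
      ring_nf

lemma norm_two_mul_nsmul_sub_le_norm_fourier_sub_fourier (q : ℕ) (x y : UnitAddCircle)
    {s : ℂ} (hs : s ^ 2 = 1) :
    ‖(2 * q) • (y - x)‖ ≤ ‖fourier (q : ℤ) x + s * fourier (q : ℤ) y‖ := by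
  set u : ℂ := fourier (q : ℤ) x
  set v : ℂ := fourier (q : ℤ) y
  have norm_s : ‖s‖ = 1 := Complex.norm_eq_one_of_pow_eq_one hs two_ne_zero
  have factor : u ^ 2 * (1 - fourier 1 ((2 * q) • (y - x))) = (u - s * v) * (u + s * v) := by
    have double (t : UnitAddCircle) : fourier 1 ((2 * q) • t) = fourier (q : ℤ) t ^ 2 := by
      simp [fourier_apply, mul_comm 2 q, mul_nsmul, pow_two, two_nsmul, natCast_zsmul,
        AddCircle.toCircle_add]
    have shifted : u ^ 2 * fourier 1 ((2 * q) • (y - x)) = v ^ 2 := by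
      rw [← double x, ← fourier_add_apply, ← nsmul_add, add_sub_cancel, double y]
    linear_combination -shifted + v ^ 2 * hs
  have norm_sub_le_two : ‖u - s * v‖ ≤ 2 := by
    refine (norm_sub_le _ _).trans_eq ?_
    rw [norm_mul, norm_s, norm_fourier_apply, norm_fourier_apply]; norm_num
  have norm_factor := congrArg norm factor
  rw [norm_mul, norm_mul, norm_pow, norm_fourier_apply, one_pow, one_mul] at norm_factor
  nlinarith [four_mul_norm_le_norm_one_sub_fourier ((2 * q) • (y - x)), norm_nonneg (u + s * v),
    norm_nonneg ((2 * q) • (y - x))]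

lemma norm_nsmul_sub_le_norm_add_fourier (q : ℕ) (x y : UnitAddCircle) {K K' : ℤ}
    (hK : K ≠ 0 ∨ K' ≠ 0) :
    ‖(2 * q) • (y - x)‖ ≤ ‖(K : ℂ) * fourier (q : ℤ) x + K' * fourier (q : ℤ) y‖ := by
  by_cases abs_eq : |K| = |K'|
  · have K_ne_zero : K ≠ 0 := by
      rcases hK with h | h
      · exact h
      · rwa [← abs_pos, abs_eq, abs_pos]
    have one_le : (1 : ℝ) ≤ ‖(K : ℂ)‖ := by
      rw [Complex.norm_intCast]; exact_mod_cast Int.one_le_abs K_ne_zero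
    have K_ne_zero' : (K : ℂ) ≠ 0 := by exact_mod_cast K_ne_zero
    have sq_eq : (K' / K : ℂ) ^ 2 = 1 := by
      rw [div_pow, div_eq_one_iff_eq (pow_ne_zero 2 K_ne_zero')]
      exact_mod_cast (sq_eq_sq_iff_abs_eq_abs K' K).2 abs_eq.symm
    calc _ ≤ ‖fourier (q : ℤ) x + K' / K * fourier (q : ℤ) y‖ :=
          norm_two_mul_nsmul_sub_le_norm_fourier_sub_fourier q x y sq_eq
      _ ≤ ‖(K : ℂ)‖ * ‖fourier (q : ℤ) x + K' / K * fourier (q : ℤ) y‖ :=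
          le_mul_of_one_le_left (norm_nonneg _) one_le
      _ = _ := by rw [← norm_mul, mul_add, ← mul_assoc, mul_div_cancel₀ _ K_ne_zero']
  · calc ‖(2 * q) • (y - x)‖ ≤ 1 := by
          refine (AddCircle.norm_le_half_period (1 : ℝ) one_ne_zero).trans ?_
          norm_num
      _ ≤ |(abs K - abs K' : ℝ)| := by exact_mod_cast Int.one_le_abs (sub_ne_zero.2 abs_eq)
      _ = |‖(K : ℂ) * fourier (q : ℤ) x‖ - ‖-(K' * fourier (q : ℤ) y : ℂ)‖| := by
          simp only [norm_neg, norm_mul, norm_fourier_apply, Complex.norm_intCast,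
            Int.cast_abs, mul_one]
      _ ≤ _ := by
          rw [← sub_neg_eq_add]
          exact abs_norm_sub_norm_le _ _

/-- The filter generated by the empirical measures of the images, under a shear of amplitude `A`,
of two points rotated by `j • α`, `0 ≤ j < q n`, where `q α = 1 / n`. The limits are taken in this
order: first `n / A → ∞`, then the amplitude times the distance of the two points modulo
`1 / (2 q)` tends to infinity, then `B → ∞`. -/
noncomputable def pairOrbitFilter (q : ℕ+) : Filter (ProbabilityMeasure (Torus2 × Torus2)) :=
  atTop.bind fun B : ℕ ↦ atTop.bind fun w : ℝ ↦ atTop.bind fun κ : ℝ ↦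
    𝓟 {ν | ∃ (A : ℝ) (n : ℕ+) (α : Torus1) (z z' : Torus2),
      w ≤ A * ‖(2 * q : ℕ) • (z'.1 - z.1)‖ ∧ κ * A ≤ n ∧ (q : ℕ) • α = (1 / n : ℝ) ∧
      empiricalMeasure (q * n)
        (fun j ↦ (shear A B q (z + (j • α, 0)), shear A B q (z' + (j • α, 0)))) = ν}

lemma eventually_pairOrbitFilter {q : ℕ+} {p : ProbabilityMeasure (Torus2 × Torus2) → Prop} :
    (∀ᶠ ν in pairOrbitFilter q, p ν) ↔ ∀ᶠ B : ℕ in atTop, ∀ᶠ w : ℝ in atTop, ∀ᶠ κ : ℝ in atTop,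
      ∀ (A : ℝ) (n : ℕ+) (α : Torus1) (z z' : Torus2),
        w ≤ A * ‖(2 * q : ℕ) • (z'.1 - z.1)‖ → κ * A ≤ n → (q : ℕ) • α = (1 / n : ℝ) →
        p (empiricalMeasure (q * n)
          fun j ↦ (shear A B q (z + (j • α, 0)), shear A B q (z' + (j • α, 0)))) := by
  simp only [pairOrbitFilter, eventually_bind, eventually_principal, mem_ofPred_eq,
    forall_exists_index, and_imp]
  refine eventually_congr (.of_forall fun B ↦ eventually_congr (.of_forall fun w ↦
    eventually_congr (.of_forall fun κ ↦ ⟨fun h A n α z z' h₁ h₂ h₃ ↦ h _ A n α z z' h₁ h₂ h₃ rfl,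
      fun h ν A n α z z' h₁ h₂ h₃ hν ↦ hν ▸ h A n α z z' h₁ h₂ h₃⟩)))

/-- The Haar–Lebesgue measure, as a point of the space of probability measures on the torus. -/
noncomputable def torusVolume : ProbabilityMeasure Torus2 := ⟨volume, inferInstance⟩

lemma integral_torusPairChar_eq_zero {l k l' k' : ℤ} (h : (l ≠ 0 ∨ k ≠ 0) ∨ (l' ≠ 0 ∨ k' ≠ 0)) :
    ∫ p, torusPairChar l k l' k' p ∂(torusVolume.prod torusVolume : Measure (Torus2 × Torus2)) =
      0 := by
  simp only [torusPairChar_apply, ProbabilityMeasure.toMeasure_prod, integral_prod_mul, mul_eq_zero]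
  exact h.imp integral_torusChar_eq_zero integral_torusChar_eq_zero

lemma norm_integral_torusPairChar_empiricalMeasure (l k l' k' : ℤ) (A : ℝ) (B : ℕ) (q n : ℕ+)
    (α : Torus1) (z z' : Torus2) :
    ‖∫ p, torusPairChar l k l' k' p ∂(empiricalMeasure (q * n) fun j ↦
        (shear A B q (z + (j • α, 0)), shear A B q (z' + (j • α, 0))) :
          Measure (Torus2 × Torus2))‖ =
      ‖((q * n : ℕ) : ℝ)⁻¹ • ∑ j ∈ Finset.range (q * n), shearPhase q (l + l') A
        ((l * B + k : ℤ) * fourier ((q : ℕ) : ℤ) z.1 +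
          (l' * B + k' : ℤ) * fourier ((q : ℕ) : ℤ) z'.1) (j • α)‖ := by
  rw [integral_empiricalMeasure _ _ (torusPairChar l k l' k').continuous]
  simp only [torusPairChar_apply, torusChar_shear_add, mul_mul_mul_comm _ (shearPhase _ _ _ _ _),
    shearPhase_mul_shearPhase, ← Finset.mul_sum, PNat.mul_coe]
  rw [norm_smul, norm_smul, norm_mul, norm_mul, norm_torusChar_apply, norm_torusChar_apply, one_mul,
    one_mul]

lemma eventually_norm_integral_torusPairChar_le (q : ℕ+) {l k l' k' : ℤ}
    (h : (l ≠ 0 ∨ k ≠ 0) ∨ (l' ≠ 0 ∨ k' ≠ 0)) {η : ℝ} (hη : 0 < η) :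
    ∀ᶠ ν : ProbabilityMeasure (Torus2 × Torus2) in pairOrbitFilter q,
      ‖∫ p, torusPairChar l k l' k' p ∂(ν : Measure (Torus2 × Torus2))‖ ≤ η := by
  rw [eventually_pairOrbitFilter]
  filter_upwards [eventually_gt_atTop k.natAbs, eventually_gt_atTop k'.natAbs] with B hk hk'
  have mul_add_ne_zero {a b : ℤ} (hb : b.natAbs < B) (hab : a ≠ 0 ∨ b ≠ 0) : a * B + b ≠ 0 := by
    intro h
    have natAbs_mul : a.natAbs * B = b.natAbs := by
      rw [← Int.natAbs_natCast B, ← Int.natAbs_mul, eq_neg_of_add_eq_zero_left h, Int.natAbs_neg]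
    rcases Nat.eq_zero_or_pos a.natAbs with ha | ha
    · rw [ha, zero_mul] at natAbs_mul
      omega
    · exact hb.not_ge (natAbs_mul ▸ Nat.le_mul_of_pos_left B ha)
  set M : ℝ := ‖((l * B + k : ℤ) : ℂ)‖ + ‖((l' * B + k' : ℤ) : ℂ)‖
  filter_upwards [eventually_norm_average_shearPhase_le q.ne_zero (l + l') M hη,
    eventually_gt_atTop 0] with w hw w_pos
  filter_upwards [hw] with κ hκ A n α z z' hwA hn hα
  rw [norm_integral_torusPairChar_empiricalMeasure]
  have A_pos : 0 < A := pos_of_mul_pos_left (w_pos.trans_le hwA) (norm_nonneg _)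
  refine hκ A n _ α (hwA.trans ?_) ?_ hn hα
  · gcongr
    refine norm_nsmul_sub_le_norm_add_fourier q z.1 z'.1 (h.imp ?_ ?_)
    exacts [mul_add_ne_zero hk, mul_add_ne_zero hk']
  · refine (norm_add_le _ _).trans_eq ?_
    simp only [norm_mul, norm_fourier_apply, mul_one, M]

theorem pairOrbitFilter_le_nhds (q : ℕ+) :
    pairOrbitFilter q ≤ 𝓝 (torusVolume.prod torusVolume) := by
  refine le_nhds_of_forall_tendsto_integral topologicalClosure_span_torusPairChar ?_
  rintro _ ⟨l, k, l', k', rfl⟩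
  by_cases h : (l ≠ 0 ∨ k ≠ 0) ∨ (l' ≠ 0 ∨ k' ≠ 0)
  · rw [integral_torusPairChar_eq_zero h]
    refine Metric.nhds_basis_closedBall.tendsto_right_iff.2 fun η hη ↦ ?_
    simpa only [mem_closedBall_zero_iff] using eventually_norm_integral_torusPairChar_le q h hη
  · push Not at h
    obtain ⟨⟨rfl, rfl⟩, rfl, rfl⟩ := h
    simpa [torusPairChar_apply, torusChar_apply] using tendsto_const_nhds

end PairEquidistribution

section PeriodicFamilies

variable {E F G : Type*} [NormedAddCommGroup E] [NormedSpace ℝ E] [NormedAddCommGroup F]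
  [NormedSpace ℝ F] [NormedAddCommGroup G] [NormedSpace ℝ G]

lemma continuous_iteratedFDeriv_prodMk {D : E × F → G} {r : ℕ} (hD : ContDiff ℝ r D) :
    Continuous fun v : E × F ↦ iteratedFDeriv ℝ r (fun p ↦ D (v.1, p)) v.2 := by
  have partial_eq (v : E × F) : iteratedFDeriv ℝ r (fun p ↦ D (v.1, p)) v.2 =
      (iteratedFDeriv ℝ r D v).compContinuousLinearMap
        fun _ ↦ ContinuousLinearMap.inr ℝ E F := by
    have comp : (fun p ↦ D (v.1, p)) =
        (fun w ↦ D (w + (v.1, 0))) ∘ ContinuousLinearMap.inr ℝ E F := by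
      ext p
      simp
    have smooth : ContDiff ℝ r fun w ↦ D (w + (v.1, (0 : F))) :=
      hD.comp (contDiff_id.add contDiff_const)
    rw [comp, ContinuousLinearMap.iteratedFDeriv_comp_right _ smooth v.2 le_rfl,
      iteratedFDeriv_comp_add_right]
    congr 2
    simp
  simp_rw [partial_eq]
  exact (ContinuousMultilinearMap.compContinuousLinearMapL (𝕜 := ℝ) (F := G)
    fun _ : Fin r ↦ ContinuousLinearMap.inr ℝ E F).continuous.comp
      (hD.continuous_iteratedFDeriv le_rfl)

lemma iteratedFDeriv_fract {D : ℝ × ℝ → G} (hD : ∀ p (m n : ℤ), D (p + ((m : ℝ), (n : ℝ))) = D p)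
    (r : ℕ) (p : ℝ × ℝ) :
    iteratedFDeriv ℝ r D (Int.fract p.1, Int.fract p.2) = iteratedFDeriv ℝ r D p := by
  have shift := iteratedFDeriv_comp_add_right (𝕜 := ℝ) (f := D) r
    (((-⌊p.1⌋ : ℤ) : ℝ), ((-⌊p.2⌋ : ℤ) : ℝ)) p
  simp_rw [hD] at shift
  rw [shift]
  congr 1
  ext <;> simp [Int.fract, sub_eq_add_neg]

lemma eventually_norm_iteratedFDeriv_le_of_periodic {D : E × (ℝ × ℝ) → G} {r : ℕ}
    (hD : ContDiff ℝ r D) (hper : ∀ c p (m n : ℤ), D (c, p + ((m : ℝ), (n : ℝ))) = D (c, p))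
    (hzero : ∀ p, D (0, p) = 0) {η : ℝ} (hη : 0 < η) :
    ∀ᶠ c in 𝓝 0, ∀ p, ‖iteratedFDeriv ℝ r (fun p ↦ D (c, p)) p‖ ≤ η := by
  have square : IsCompact (Icc (0 : ℝ) 1 ×ˢ Icc (0 : ℝ) 1) := isCompact_Icc.prod isCompact_Icc
  have on_square : ∀ᶠ c in 𝓝 (0 : E), ∀ p ∈ Icc (0 : ℝ) 1 ×ˢ Icc (0 : ℝ) 1,
      ‖iteratedFDeriv ℝ r (fun p ↦ D (c, p)) p‖ < η := by
    refine square.eventually_forall_of_forall_eventually fun p _ ↦ ?_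
    refine (continuous_iteratedFDeriv_prodMk hD).norm.continuousAt.eventually_lt
      continuousAt_const (x₀ := ((0 : E), p)) ?_
    simpa [hzero, iteratedFDeriv_fun_zero] using hη
  filter_upwards [on_square] with c hc p
  rw [← iteratedFDeriv_fract (hper c) r p]
  exact (hc _ ⟨⟨Int.fract_nonneg _, (Int.fract_lt_one _).le⟩,
    ⟨Int.fract_nonneg _, (Int.fract_lt_one _).le⟩⟩).le

end PeriodicFamilies

lemma tendsto_mul_comp_of_abs_le {ι : Type*} {l : Filter ι} {A t : ι → ℝ}
    (hA : Tendsto (fun i ↦ A i * t i) l (𝓝 0)) {f : ℝ → ℝ} {C : ℝ} (hf : ∀ x, |f x| ≤ C * |x|) :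
    Tendsto (fun i ↦ A i * f (t i)) l (𝓝 0) := by
  refine squeeze_zero_norm (fun i ↦ ?_)
    (by simpa only [abs_zero, mul_zero] using hA.abs.const_mul C)
  rw [Real.norm_eq_abs]
  calc |A i * f (t i)| = |A i| * |f (t i)| := abs_mul _ _
    _ ≤ |A i| * (C * |t i|) := by gcongr; exact hf _
    _ = C * |A i * t i| := by rw [abs_mul]; ring

section Lifts

lemma torusProj_surjective : Function.Surjective torusProj := fun x ↦ by
  obtain ⟨a, ha⟩ := QuotientAddGroup.mk_surjective x.1
  obtain ⟨b, hb⟩ := QuotientAddGroup.mk_surjective x.2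
  exact ⟨(a, b), Prod.ext ha hb⟩

lemma torusProj_add (p v : ℝ × ℝ) : torusProj (p + v) = torusProj p + torusProj v := by
  simp [torusProj]

lemma torusProj_intCast (m n : ℤ) : torusProj ((m : ℝ), (n : ℝ)) = 0 :=
  Prod.ext ((AddCircle.coe_eq_zero_iff 1).2 ⟨m, by simp⟩)
    ((AddCircle.coe_eq_zero_iff 1).2 ⟨n, by simp⟩)

lemma dist_torusProj_le (p p' : ℝ × ℝ) : dist (torusProj p) (torusProj p') ≤ dist p p' := by
  have coord (x y : ℝ) : dist (x : Torus1) y ≤ dist x y := by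
    rw [dist_eq_norm, ← AddCircle.coe_sub, Real.dist_eq]
    exact norm_addCircle_coe_le_abs _
  exact max_le_max (coord _ _) (coord _ _)

lemma exists_intCast_of_coe_addCircle_eq {x y : ℝ} (h : (x : Torus1) = y) :
    ∃ m : ℤ, x - y = m := by
  rw [← sub_eq_zero, ← AddCircle.coe_sub, AddCircle.coe_eq_zero_iff] at h
  obtain ⟨m, hm⟩ := h
  exact ⟨m, by simpa using hm.symm⟩

lemma exists_forall_eq_intCast {X : Type*} [TopologicalSpace X] [PreconnectedSpace X]
    {f : X → ℝ} (hf : Continuous f) (hf_int : ∀ x, ∃ m : ℤ, f x = m) : ∃ m : ℤ, ∀ x, f x = m := by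
  choose g hg using hf_int
  have hg_cont : Continuous g := by
    refine Int.isClosedEmbedding_coe_real.isEmbedding.continuous_iff.2 (hf.congr hg)
  rcases isEmpty_or_nonempty X with _ | ⟨⟨x₀⟩⟩
  · exact ⟨0, fun x ↦ isEmptyElim x⟩
  · exact ⟨g x₀, fun x ↦ by
      rw [hg, PreconnectedSpace.constant inferInstance hg_cont (x := x) (y := x₀)]⟩

lemma IsLiftOf.exists_forall_add_intCast {F : ℝ × ℝ → ℝ × ℝ} {T : Torus2 → Torus2}
    (hF : IsLiftOf F T) (hcont : Continuous F) (m n : ℤ) :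
    ∃ m' n' : ℤ, ∀ p, F (p + ((m : ℝ), (n : ℝ))) = F p + ((m' : ℝ), (n' : ℝ)) := by
  have proj_eq (p : ℝ × ℝ) : torusProj (F (p + ((m : ℝ), (n : ℝ)))) = torusProj (F p) := by
    rw [hF, hF, torusProj_add, torusProj_intCast, add_zero]
  obtain ⟨m', hm'⟩ := exists_forall_eq_intCast
    (f := fun p ↦ (F (p + ((m : ℝ), (n : ℝ)))).1 - (F p).1) (by fun_prop)
    fun p ↦ exists_intCast_of_coe_addCircle_eq (congrArg Prod.fst (proj_eq p))
  obtain ⟨n', hn'⟩ := exists_forall_eq_intCast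
    (f := fun p ↦ (F (p + ((m : ℝ), (n : ℝ)))).2 - (F p).2) (by fun_prop)
    fun p ↦ exists_intCast_of_coe_addCircle_eq (congrArg Prod.snd (proj_eq p))
  refine ⟨m', n', fun p ↦ Prod.ext ?_ ?_⟩
  · rw [Prod.fst_add, ← hm' p, add_sub_cancel]
  · rw [Prod.snd_add, ← hn' p, add_sub_cancel]

end Lifts

section ShearLift

/-- The lift to the plane of the shear `shear A B q`. -/
noncomputable def shearLift (A : ℝ) (B q : ℕ) (p : ℝ × ℝ) : ℝ × ℝ :=
  (p.1 + B * (p.2 + A * Real.cos (2 * Real.pi * q * p.1)),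
    p.2 + A * Real.cos (2 * Real.pi * q * p.1))

/-- The lift to the plane of the inverse of the shear `shear A B q`. -/
noncomputable def shearInvLift (A : ℝ) (B q : ℕ) (p : ℝ × ℝ) : ℝ × ℝ :=
  (p.1 - B * p.2, p.2 - A * Real.cos (2 * Real.pi * q * (p.1 - B * p.2)))

lemma contDiff_shearLift (A : ℝ) (B q : ℕ) {k : ℕ∞} : ContDiff ℝ k (shearLift A B q) := by
  unfold shearLift
  fun_prop

lemma contDiff_shearInvLift (A : ℝ) (B q : ℕ) {k : ℕ∞} : ContDiff ℝ k (shearInvLift A B q) := by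
  unfold shearInvLift
  fun_prop

lemma isLiftOf_shearLift (A : ℝ) (B q : ℕ) : IsLiftOf (shearLift A B q) (shear A B q) := by
  intro p
  simp only [torusProj, shearLift, shear_apply, fourier_natCast_re]
  simp

lemma isLiftOf_shearInvLift (A : ℝ) (B q : ℕ) :
    IsLiftOf (shearInvLift A B q) (shear A B q).symm := by
  intro p
  have horizontal : (p.1 : Torus1) - B • (p.2 : Torus1) = ((p.1 - B * p.2 : ℝ) : Torus1) := by
    simp
  simp only [torusProj, shearInvLift, shear_symm_apply, horizontal, fourier_natCast_re]
  exact Prod.ext rfl (AddCircle.coe_sub _ _ _)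

/-- The vector `(A cos (2π q (u + t)) - A cos (2π q u)) • (B, 1)` by which the flow
`t ↦ shearLift ∘ (· + (t, 0)) ∘ shearInvLift` differs from a translation, written in terms of
`a = A (cos (2π q t) - 1)` and `b = A sin (2π q t)`; here `u = p.1 - B * p.2`. Unlike `A`, the
parameters `a` and `b` are small. -/
noncomputable def shearDisplacement (B q : ℕ) (a b : ℝ) (p : ℝ × ℝ) : ℝ × ℝ :=
  (a * Real.cos (2 * Real.pi * q * (p.1 - B * p.2)) -
    b * Real.sin (2 * Real.pi * q * (p.1 - B * p.2))) • ((B : ℝ), (1 : ℝ))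

lemma shearDisplacement_zero (B q : ℕ) (p : ℝ × ℝ) : shearDisplacement B q 0 0 p = 0 := by
  simp [shearDisplacement]

lemma shearDisplacement_add_intCast (B q : ℕ) (a b : ℝ) (p : ℝ × ℝ) (m n : ℤ) :
    shearDisplacement B q a b (p + ((m : ℝ), (n : ℝ))) = shearDisplacement B q a b p := by
  have angle : 2 * Real.pi * q * ((p.1 + m) - B * (p.2 + n)) =
      2 * Real.pi * q * (p.1 - B * p.2) + ((q * (m - B * n) : ℤ) : ℝ) * (2 * Real.pi) := by
    push_cast
    ring
  simp only [shearDisplacement, Prod.fst_add, Prod.snd_add, angle, Real.cos_add_int_mul_two_pi,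
    Real.sin_add_int_mul_two_pi]

lemma shearLift_shearInvLift_add (A : ℝ) (B q : ℕ) {s : ℝ} {m : ℤ} (hs : q * s = m) (t : ℝ)
    (p : ℝ × ℝ) :
    shearLift A B q (shearInvLift A B q p + (s + t, 0)) = p + (s + t, 0) +
      shearDisplacement B q (A * (Real.cos (2 * Real.pi * q * t) - 1))
        (A * Real.sin (2 * Real.pi * q * t)) p := by
  set u : ℝ := p.1 - B * p.2 with hu
  have cos_eq : Real.cos (2 * Real.pi * q * (u + (s + t))) =
      Real.cos (2 * Real.pi * q * u) * Real.cos (2 * Real.pi * q * t) -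
        Real.sin (2 * Real.pi * q * u) * Real.sin (2 * Real.pi * q * t) := by
    rw [← Real.cos_add, ← Real.cos_add_int_mul_two_pi (_ + _) m, ← hs]
    ring_nf
  ext <;> simp only [shearLift, shearInvLift, shearDisplacement, Prod.fst_add, Prod.snd_add,
    Prod.smul_fst, Prod.smul_snd, smul_eq_mul, ← hu, cos_eq] <;> rw [hu] <;> ring

end ShearLift

/-- An area-preserving `C^∞` diffeomorphism of the torus, with lifts of it and of its inverse. It
conjugates the horizontal translation flow to `SmoothConjugacy.flow`. -/
structure SmoothConjugacy where
  toHomeomorph : Torus2 ≃ₜ Torus2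
  lift : ℝ × ℝ → ℝ × ℝ
  invLift : ℝ × ℝ → ℝ × ℝ
  contDiff_lift {k : ℕ∞} : ContDiff ℝ k lift
  contDiff_invLift {k : ℕ∞} : ContDiff ℝ k invLift
  isLiftOf_lift : IsLiftOf lift toHomeomorph
  isLiftOf_invLift : IsLiftOf invLift toHomeomorph.symm
  measurePreserving : MeasurePreserving toHomeomorph volume volume

namespace SmoothConjugacy

/-- The trivial conjugacy, where the construction starts. -/
noncomputable def refl : SmoothConjugacy where
  toHomeomorph := .refl _
  lift := id
  invLift := id
  contDiff_lift := contDiff_id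
  contDiff_invLift := contDiff_id
  isLiftOf_lift _ := rfl
  isLiftOf_invLift _ := rfl
  measurePreserving := .id _

/-- The conjugacy `c` composed with the shear `shear A B q`, which acts first. -/
noncomputable def compShear (c : SmoothConjugacy) (A : ℝ) (B q : ℕ) : SmoothConjugacy where
  toHomeomorph := (shear A B q).trans c.toHomeomorph
  lift := c.lift ∘ shearLift A B q
  invLift := shearInvLift A B q ∘ c.invLift
  contDiff_lift := c.contDiff_lift.comp (contDiff_shearLift A B q)
  contDiff_invLift := (contDiff_shearInvLift A B q).comp c.contDiff_invLift
  isLiftOf_lift p := by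
    rw [Function.comp_apply, c.isLiftOf_lift, isLiftOf_shearLift, Homeomorph.trans_apply]
  isLiftOf_invLift p := by
    rw [Function.comp_apply, isLiftOf_shearInvLift, c.isLiftOf_invLift, Homeomorph.symm_trans_apply]
  measurePreserving := c.measurePreserving.comp (measurePreserving_shear A B q)

variable (c : SmoothConjugacy)

/-- The horizontal translation flow conjugated by `c`. -/
noncomputable def flow (t : Torus1) (x : Torus2) : Torus2 :=
  c.toHomeomorph (c.toHomeomorph.symm x + (t, 0))

/-- The lift to the plane of the conjugated translation flow. -/
noncomputable def liftFlow (t : ℝ) (p : ℝ × ℝ) : ℝ × ℝ :=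
  c.lift (c.invLift p + (t, 0))

lemma flow_add (t t' : Torus1) (x : Torus2) : c.flow (t + t') x = c.flow t (c.flow t' x) := by
  simp only [flow, Homeomorph.symm_apply_apply, add_assoc, Prod.mk_add_mk, add_zero, add_comm t]

lemma flow_zero (x : Torus2) : c.flow 0 x = x := by
  simp [flow, ← Prod.zero_eq_mk]

lemma iterate_flow (t : Torus1) (j : ℕ) : (c.flow t)^[j] = c.flow (j • t) := by
  ext1 x
  induction j with
  | zero => rw [zero_smul, flow_zero, Function.iterate_zero_apply]
  | succ j ih => rw [Function.iterate_succ_apply', ih, ← flow_add, succ_nsmul']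

lemma continuous_flow (t : Torus1) : Continuous (c.flow t) :=
  c.toHomeomorph.continuous.comp (c.toHomeomorph.symm.continuous.add_const _)

lemma measurePreserving_symm : MeasurePreserving c.toHomeomorph.symm volume volume :=
  c.measurePreserving.symm (e := c.toHomeomorph.toMeasurableEquiv)

lemma measurePreserving_flow (t : Torus1) : MeasurePreserving (c.flow t) volume volume := by
  have translation : MeasurePreserving (fun z : Torus2 ↦ z + (t, 0)) volume volume :=
    (measurePreserving_add_right volume t).prod (measurePreserving_add_right volume (0 : Torus1))
  exact c.measurePreserving.comp (translation.comp c.measurePreserving_symm)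

lemma contDiff_liftFlow (t : ℝ) {k : ℕ∞} : ContDiff ℝ k (c.liftFlow t) :=
  c.contDiff_lift.comp (c.contDiff_invLift.add contDiff_const)

lemma isLiftOf_liftFlow (t : ℝ) : IsLiftOf (c.liftFlow t) (c.flow t) := fun p ↦ by
  rw [liftFlow, c.isLiftOf_lift, torusProj_add, c.isLiftOf_invLift, flow]
  rfl

lemma eventually_norm_iteratedFDeriv_liftFlow_compShear_sub_le (B q : ℕ) {s : ℝ} {m : ℤ}
    (hs : q * s = m) {ι : Type*} {l : Filter ι} {A t : ι → ℝ} (ht : Tendsto t l (𝓝 0))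
    (hA : Tendsto (fun i ↦ A i * t i) l (𝓝 0)) (r : ℕ) {η : ℝ} (hη : 0 < η) :
    ∀ᶠ i in l, ∀ p, ‖iteratedFDeriv ℝ r
      (fun p ↦ (c.compShear (A i) B q).liftFlow (s + t i) p - c.liftFlow s p) p‖ ≤ η := by
  let D (v : (ℝ × ℝ × ℝ) × (ℝ × ℝ)) : ℝ × ℝ :=
    c.lift (c.invLift v.2 + (s + v.1.1, 0) + shearDisplacement B q v.1.2.1 v.1.2.2 (c.invLift v.2))
      - c.lift (c.invLift v.2 + (s, 0))
  have smooth : ContDiff ℝ r D := by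
    have := (c.contDiff_lift (k := r))
    have := (c.contDiff_invLift (k := r))
    simp only [D, shearDisplacement]
    fun_prop
  have periodic (v p) (m n : ℤ) : D (v, p + ((m : ℝ), (n : ℝ))) = D (v, p) := by
    obtain ⟨m', n', hG⟩ := c.isLiftOf_invLift.exists_forall_add_intCast
      (c.contDiff_invLift (k := 0)).continuous m n
    obtain ⟨m'', n'', hF⟩ := c.isLiftOf_lift.exists_forall_add_intCast
      (c.contDiff_lift (k := 0)).continuous m' n'
    simp only [D, hG, shearDisplacement_add_intCast, add_right_comm _ ((m' : ℝ), (n' : ℝ)), hF,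
      add_sub_add_right_eq_sub]
  have small := eventually_norm_iteratedFDeriv_le_of_periodic smooth periodic
    (fun p ↦ by simp [D, shearDisplacement_zero]) hη
  have params : Tendsto (fun i ↦ (t i, A i * (Real.cos (2 * Real.pi * q * t i) - 1),
      A i * Real.sin (2 * Real.pi * q * t i))) l (𝓝 0) := by
    have hcos (x : ℝ) : |Real.cos (2 * Real.pi * q * x) - 1| ≤ |2 * Real.pi * q| * |x| := by
      have := Real.abs_cos_sub_cos_le (2 * Real.pi * q * x) 0
      rwa [Real.cos_zero, sub_zero, abs_mul] at this
    have hsin (x : ℝ) : |Real.sin (2 * Real.pi * q * x)| ≤ |2 * Real.pi * q| * |x| :=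
      Real.abs_sin_le_abs.trans_eq (abs_mul _ _)
    exact ht.prodMk_nhds
      ((tendsto_mul_comp_of_abs_le hA hcos).prodMk_nhds (tendsto_mul_comp_of_abs_le hA hsin))
  filter_upwards [params.eventually small] with i hi
  have family : (fun p ↦ (c.compShear (A i) B q).liftFlow (s + t i) p - c.liftFlow s p) =
      fun p ↦ D ((t i, A i * (Real.cos (2 * Real.pi * q * t i) - 1),
        A i * Real.sin (2 * Real.pi * q * t i)), p) := by
    ext1 p
    simp only [D, liftFlow, compShear, Function.comp_apply, shearLift_shearInvLift_add _ B q hs]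
  rwa [family]

end SmoothConjugacy

section ShearDistortion

lemma exists_forall_dist_shear_le (B q : ℕ) :
    ∃ C > 0, ∀ A ≥ (1 : ℝ), ∀ w w' : Torus2, dist (shear A B q w) (shear A B q w') ≤
      C * (A * dist w.1 w'.1 + dist w.2 w'.2) := by
  set K : ℝ := 2 * Real.pi * q
  have hK_nonneg : 0 ≤ K := by positivity
  refine ⟨1 + (B + 1) * (K + 1), by positivity, fun A hA w w' ↦ ?_⟩
  set d : Torus1 := (shear A B q w).2 - (shear A B q w').2 with hd
  have hd_le : ‖d‖ ≤ K * (A * dist w.1 w'.1) + dist w.2 w'.2 := by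
    have split : d = ((A * (fourier (q : ℤ) w.1).re - A * (fourier (q : ℤ) w'.1).re : ℝ) : Torus1)
        + (w.2 - w'.2) := by
      rw [hd, shear_apply, shear_apply, AddCircle.coe_sub, add_comm (_ - _)]
      exact add_sub_add_comm _ _ _ _
    have oscillation := abs_re_mul_fourier_sub_le A q w.1 w'.1
    rw [Complex.norm_of_nonneg (by linarith), Complex.re_ofReal_mul, Complex.re_ofReal_mul,
      ← dist_eq_norm] at oscillation
    rw [split, dist_eq_norm w.2]
    refine (norm_add_le _ _).trans ?_
    gcongr
    exact ((norm_addCircle_coe_le_abs _).trans oscillation).trans_eq (by ring)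
  have base_le : dist w.1 w'.1 ≤ A * dist w.1 w'.1 := le_mul_of_one_le_left dist_nonneg hA
  have hfst : dist (shear A B q w).1 (shear A B q w').1 ≤ dist w.1 w'.1 + B * ‖d‖ := by
    have split : (shear A B q w).1 - (shear A B q w').1 = (w.1 - w'.1) + B • d := by
      rw [hd, shear_apply, shear_apply, nsmul_sub]
      exact add_sub_add_comm _ _ _ _
    rw [dist_eq_norm, split, dist_eq_norm w.1]
    exact (norm_add_le _ _).trans (by gcongr; exact norm_nsmul_le)
  have hsnd : dist (shear A B q w).2 (shear A B q w').2 = ‖d‖ := dist_eq_norm _ _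
  have hw : 0 ≤ dist w.1 w'.1 := dist_nonneg
  have hw' : 0 ≤ dist w.2 w'.2 := dist_nonneg
  have key : dist w.1 w'.1 + (B + 1) * ‖d‖ ≤
      (1 + (B + 1) * (K + 1)) * (A * dist w.1 w'.1 + dist w.2 w'.2) := by
    calc dist w.1 w'.1 + (B + 1) * ‖d‖
        ≤ A * dist w.1 w'.1 + (B + 1) * (K * (A * dist w.1 w'.1) + dist w.2 w'.2) := by gcongr
      _ ≤ _ := by nlinarith [mul_nonneg hK_nonneg hw']
  rw [Prod.dist_eq]
  exact max_le (hfst.trans (by linarith [norm_nonneg d]))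
    (hsnd.le.trans (by nlinarith [norm_nonneg d]))

lemma shear_add_of_nsmul_eq_zero (A : ℝ) (B : ℕ) {q : ℕ} {t : Torus1} (ht : q • t = 0)
    (z : Torus2) : shear A B q (z + (t, 0)) = shear A B q z + (t, 0) := by
  have period : fourier (q : ℤ) (z.1 + t) = fourier (q : ℤ) z.1 := by
    rw [fourier_apply, fourier_apply, natCast_zsmul, natCast_zsmul, smul_add, ht, add_zero]
  simp only [shear_apply, Prod.fst_add, Prod.snd_add, add_zero, period, Prod.mk_add_mk,
    add_right_comm z.1 t]

lemma exists_circle_partition {M : ℕ} (hM : 0 < M) :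
    ∃ c : Torus1 → Fin M, ∀ x y, c x = c y → dist x y ≤ 1 / M := by
  have hM' : (0 : ℝ) < M := by exact_mod_cast hM
  let rep (x : Torus1) : Ico (0 : ℝ) (0 + 1) := AddCircle.equivIco 1 0 x
  have floor_lt (x : Torus1) : ⌊(rep x : ℝ) * M⌋₊ < M := by
    rw [Nat.floor_lt (mul_nonneg (rep x).2.1 hM'.le)]
    exact mul_lt_of_lt_one_left hM' (by simpa using (rep x).2.2)
  refine ⟨fun x ↦ ⟨⌊(rep x : ℝ) * M⌋₊, floor_lt x⟩, fun x y hxy ↦ ?_⟩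
  have floor_eq : ⌊(rep x : ℝ) * M⌋ = ⌊(rep y : ℝ) * M⌋ := by
    rw [← Int.natCast_floor_eq_floor (mul_nonneg (rep x).2.1 hM'.le),
      ← Int.natCast_floor_eq_floor (mul_nonneg (rep y).2.1 hM'.le), Fin.mk.inj_iff.1 hxy]
  have close : |(rep x : ℝ) - rep y| ≤ 1 / M := by
    have := Int.abs_sub_lt_one_of_floor_eq_floor floor_eq
    rw [← sub_mul, abs_mul, abs_of_pos hM'] at this
    exact (le_div_iff₀ hM').2 this.le
  calc dist x y = ‖((rep x - rep y : ℝ) : Torus1)‖ := by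
        rw [AddCircle.coe_sub, AddCircle.coe_equivIco, AddCircle.coe_equivIco, dist_eq_norm]
    _ ≤ 1 / M := (norm_addCircle_coe_le_abs _).trans close

lemma exists_torus_partition {δ : ℝ} (hδ : 0 < δ) :
    ∃ K : ℝ, ∀ A ≥ (1 : ℝ), ∃ M : ℕ, M ≤ K * A ∧ ∃ c : Torus2 → Fin M,
      ∀ w w', c w = c w' → A * dist w.1 w'.1 + dist w.2 w'.2 ≤ δ := by
  obtain ⟨M₂, hM₂⟩ := exists_nat_gt (2 / δ)
  have hM₂_pos : (0 : ℝ) < M₂ := (by positivity : 0 < 2 / δ).trans hM₂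
  obtain ⟨c₂, hc₂⟩ := exists_circle_partition (Nat.cast_pos.1 hM₂_pos)
  refine ⟨(2 / δ + 1) * M₂, fun A hA ↦ ?_⟩
  have : 0 < A := by linarith
  obtain ⟨c₁, hc₁⟩ := exists_circle_partition (Nat.ceil_pos.2 (by positivity : 0 < 2 / δ * A))
  refine ⟨⌈2 / δ * A⌉₊ * M₂, ?_, fun w ↦ finProdFinEquiv (c₁ w.1, c₂ w.2), fun w w' hww' ↦ ?_⟩
  · have := Nat.ceil_lt_add_one (by positivity : 0 ≤ 2 / δ * A)
    push_cast
    calc ⌈2 / δ * A⌉₊ * (M₂ : ℝ) ≤ (2 / δ * A + A) * M₂ := by gcongr; linarith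
      _ = (2 / δ + 1) * M₂ * A := by ring
  · obtain ⟨h₁, h₂⟩ := Prod.mk.inj (finProdFinEquiv.injective hww')
    have fst_le : A * dist w.1 w'.1 ≤ δ / 2 := by
      calc A * dist w.1 w'.1 ≤ A * (1 / ⌈2 / δ * A⌉₊) := by gcongr; exact hc₁ _ _ h₁
        _ ≤ A * (1 / (2 / δ * A)) := by gcongr; exact Nat.le_ceil _
        _ = δ / 2 := by field_simp
    have snd_le : dist w.2 w'.2 ≤ δ / 2 := by
      calc dist w.2 w'.2 ≤ 1 / M₂ := hc₂ _ _ h₂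
        _ ≤ 1 / (2 / δ) := by gcongr
        _ = δ / 2 := by field_simp
    linarith

lemma SmoothConjugacy.exists_forall_dist_compShear_le (c : SmoothConjugacy) (B q : ℕ) {ε : ℝ}
    (hε : 0 < ε) : ∃ δ > 0, ∀ A ≥ (1 : ℝ), ∀ w w' : Torus2, A * dist w.1 w'.1 + dist w.2 w'.2 ≤ δ →
      dist ((c.compShear A B q).toHomeomorph w) ((c.compShear A B q).toHomeomorph w') ≤ ε := by
  obtain ⟨C, hC, shear_le⟩ := exists_forall_dist_shear_le B q
  obtain ⟨δ, hδ, hc⟩ := Metric.uniformContinuous_iff_le.1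
    (CompactSpace.uniformContinuous_of_continuous c.toHomeomorph.continuous) ε hε
  refine ⟨δ / C, by positivity, fun A hA w w' hww' ↦ hc ?_⟩
  calc dist (shear A B q w) (shear A B q w') ≤ C * (A * dist w.1 w'.1 + dist w.2 w'.2) :=
        shear_le A hA w w'
    _ ≤ C * (δ / C) := by gcongr
    _ = δ := by field_simp

lemma SmoothConjugacy.flow_compShear_of_nsmul_eq_zero (c : SmoothConjugacy) (A : ℝ) (B : ℕ) {q : ℕ}
    {t : Torus1} (ht : q • t = 0) (x : Torus2) : (c.compShear A B q).flow t x = c.flow t x := by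
  change c.toHomeomorph (shear A B q ((shear A B q).symm (c.toHomeomorph.symm x) + (t, 0))) = _
  rw [shear_add_of_nsmul_eq_zero A B ht, Homeomorph.apply_symm_apply]
  rfl

end ShearDistortion

section Amplitude

/-- The coefficient of the shear leading to a stage of period `N`. It is chosen so that the stage
has about `exp (E * L N)` distinguishable orbits. -/
noncomputable def amplitude (L : ℕ → ℝ) (E : ℝ) (N : ℕ) : ℝ :=
  Real.exp (E * L N)

variable {L : ℕ → ℝ} {E : ℝ}

lemma amplitude_pos (N : ℕ) : 0 < amplitude L E N :=
  Real.exp_pos _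

lemma one_le_amplitude (hL : IsSlowScale L) (hE : 0 < E) (N : ℕ) : 1 ≤ amplitude L E N :=
  Real.one_le_exp (mul_nonneg hE.le (hL.nonneg N))

lemma eventually_le_amplitude (hL : IsSlowScale L) (hE : 0 < E) (C : ℝ) :
    ∀ᶠ N in atTop, C ≤ amplitude L E N :=
  (Real.tendsto_exp_atTop.comp (hL.tendsto_atTop.const_mul_atTop hE)).eventually_ge_atTop C

lemma eventually_mul_le_amplitude (hL : IsSlowScale L) (hE : 0 < E) (C : ℝ) :
    ∀ᶠ N in atTop, C * L N ≤ amplitude L E N := by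
  have h := (hL.tendsto_mul_exp_neg hE).const_mul C
  rw [mul_zero] at h
  filter_upwards [h.eventually_le_const one_pos] with N hN
  rwa [Real.exp_neg, ← mul_assoc, mul_inv_le_iff₀ (Real.exp_pos _), one_mul] at hN

lemma eventually_mul_amplitude_sq_le (hL : IsSlowScale L) (E C : ℝ) :
    ∀ᶠ N : ℕ in atTop, C * amplitude L E N ^ 2 ≤ N := by
  filter_upwards [hL.eventually_mul_exp_le C (2 * E)] with N hN
  rwa [amplitude, ← Real.exp_nat_mul, Nat.cast_two, ← mul_assoc]

lemma eventually_mul_amplitude_le (hL : IsSlowScale L) (E C : ℝ) :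
    ∀ᶠ N : ℕ in atTop, C * amplitude L E N ≤ N :=
  hL.eventually_mul_exp_le C E

lemma tendsto_amplitude_mul_inv (hL : IsSlowScale L) (E : ℝ) :
    Tendsto (fun N : ℕ ↦ amplitude L E N * (1 / N)) atTop (𝓝 0) := by
  refine tendsto_order.2 ⟨fun a ha ↦ .of_forall fun N ↦ ha.trans_le ?_, fun ε hε ↦ ?_⟩
  · exact mul_nonneg (amplitude_pos N).le (by positivity)
  · filter_upwards [eventually_mul_amplitude_le hL E (2 / ε), eventually_gt_atTop 0] with N hN hN0
    have hN0 : (0 : ℝ) < N := by exact_mod_cast hN0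
    rw [div_mul_eq_mul_div, div_le_iff₀ hε] at hN
    rw [mul_one_div, div_lt_iff₀ hN0]
    linarith [mul_pos hN0 hε]

end Amplitude

lemma SmoothConjugacy.tendsto_map_prodMap (c : SmoothConjugacy) :
    Tendsto (fun ν : ProbabilityMeasure (Torus2 × Torus2) ↦ ν.map
      (c.toHomeomorph.continuous.prodMap c.toHomeomorph.continuous).measurable.aemeasurable)
      (𝓝 (torusVolume.prod torusVolume)) (𝓝 (torusVolume.prod torusVolume)) := by
  have hc := c.toHomeomorph.continuous
  have map_volume : torusVolume.map hc.measurable.aemeasurable = torusVolume :=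
    Subtype.ext c.measurePreserving.map_eq
  refine (ProbabilityMeasure.continuous_map (hc.prodMap hc)).tendsto' _ _ ?_
  refine (ProbabilityMeasure.map_prod_map _ _ hc.measurable hc.measurable).symm.trans ?_
  rw [map_volume]

/-- A stage of the construction: the rotation by `rot` of the conjugated translation flow, which has
period dividing `period`. -/
structure Stage where
  conj : SmoothConjugacy
  rot : ℝ
  period : ℕ+
  period_mul_rot : ∃ m : ℤ, period * rot = m

namespace Stage

variable (s : Stage) (L : ℕ → ℝ) (E : ℝ) (B : ℕ) (n : ℕ+)

/-- The transformation of the torus at a stage. -/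
noncomputable def map (s : Stage) : Torus2 → Torus2 :=
  s.conj.flow s.rot

/-- The initial stage, at which the transformation is the identity. -/
noncomputable def zero : Stage where
  conj := .refl
  rot := 0
  period := 1
  period_mul_rot := ⟨0, by simp⟩

/-- The stage of period `s.period * n` that follows `s`. -/
noncomputable def next : Stage where
  conj := s.conj.compShear (amplitude L E (s.period * n : ℕ+)) B s.period
  rot := s.rot + 1 / (s.period * n : ℕ+)
  period := s.period * n
  period_mul_rot := by
    obtain ⟨m, hm⟩ := s.period_mul_rot
    refine ⟨n * m + 1, ?_⟩
    push_cast
    rw [← hm]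
    field_simp

lemma period_nsmul_rot : (s.period : ℕ) • (s.rot : Torus1) = 0 := by
  obtain ⟨m, hm⟩ := s.period_mul_rot
  rw [← AddCircle.coe_nsmul, nsmul_eq_mul, hm]
  exact (AddCircle.coe_eq_zero_iff 1).2 ⟨m, by simp⟩

lemma period_nsmul_rot_next :
    (s.period : ℕ) • ((s.next L E B n).rot : Torus1) = ((1 / n : ℝ) : Torus1) := by
  have rot_eq : ((s.next L E B n).rot : Torus1) =
      s.rot + ((1 / (s.period * n : ℕ+) : ℝ) : Torus1) :=
    AddCircle.coe_add _ _ _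
  rw [rot_eq, nsmul_add, period_nsmul_rot, zero_add, ← AddCircle.coe_nsmul, nsmul_eq_mul]
  congr 1
  push_cast
  field_simp

lemma iterate_map (j : ℕ) : s.map^[j] = s.conj.flow (j • (s.rot : Torus1)) :=
  s.conj.iterate_flow _ j

lemma tendsto_period_next : Tendsto (fun n ↦ ((s.next L E B n).period : ℕ)) atTop atTop :=
  tendsto_PNat_val_atTop_atTop.comp (tendsto_atTop_mono
    (fun n ↦ PNat.le_of_dvd (dvd_mul_left n s.period)) tendsto_id)

variable {L E}

lemma eventually_norm_iteratedFDeriv_liftFlow_next_sub_le (hL : IsSlowScale L) (j : ℤ) (r : ℕ)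
    {η : ℝ} (hη : 0 < η) : ∀ᶠ n in atTop, ∀ p, ‖iteratedFDeriv ℝ r (fun p ↦
      (s.next L E B n).conj.liftFlow (j * (s.next L E B n).rot) p - s.conj.liftFlow (j * s.rot) p)
        p‖ ≤ η := by
  obtain ⟨m, hm⟩ := s.period_mul_rot
  have period_atTop := s.tendsto_period_next L E B
  have hjm : (s.period : ℕ) * (j * s.rot) = (j * m : ℤ) := by
    push_cast
    rw [← hm]
    ring
  have rot_tendsto : Tendsto (fun n ↦ j * (1 / ((s.next L E B n).period : ℝ))) atTop (𝓝 0) := by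
    simpa using (tendsto_one_div_atTop_nhds_zero_nat.comp period_atTop).const_mul (j : ℝ)
  have shear_tendsto : Tendsto (fun n ↦ amplitude L E (s.next L E B n).period *
      (j * (1 / ((s.next L E B n).period : ℝ)))) atTop (𝓝 0) := by
    have := ((tendsto_amplitude_mul_inv hL E).comp period_atTop).const_mul (j : ℝ)
    rw [mul_zero] at this
    exact this.congr fun n ↦ mul_left_comm _ _ _
  filter_upwards [s.conj.eventually_norm_iteratedFDeriv_liftFlow_compShear_sub_le B s.period hjm
    rot_tendsto shear_tendsto r hη] with n hn
  simp only [next, mul_add] at hn ⊢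
  exact hn

lemma eventually_dist_iterate_map_next_le (hL : IsSlowScale L) (hE : 0 < E) {ε : ℝ} (hε : 0 < ε) :
    ∀ᶠ n in atTop, ∀ j : ℕ,
      j * amplitude L E (s.next L E B n).period ^ 2 ≤ (s.next L E B n).period →
      ∀ x, dist (s.map^[j] x) ((s.next L E B n).map^[j] x) ≤ ε := by
  obtain ⟨δ, hδ, conj_close⟩ := s.conj.exists_forall_dist_compShear_le B s.period hε
  filter_upwards [(s.tendsto_period_next L E B).eventually
    (eventually_le_amplitude hL hE (1 / δ))] with n hn j hj x
  set s' := s.next L E B n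
  set A := amplitude L E s'.period
  have hA : 0 < A := amplitude_pos _
  have hN : (0 : ℝ) < s'.period := by exact_mod_cast s'.period.pos
  have flow_eq : s.map^[j] x = s'.conj.flow (j • (s.rot : Torus1)) x := by
    rw [iterate_map]
    exact (s.conj.flow_compShear_of_nsmul_eq_zero _ B
      (by rw [smul_comm, period_nsmul_rot, smul_zero]) x).symm
  have shift_le : dist (j • (s.rot : Torus1)) (j • (s'.rot : Torus1)) ≤ 1 / A ^ 2 := by
    have shift_eq : j • (s.rot : Torus1) - j • (s'.rot : Torus1) =
        ((-(j / s'.period) : ℝ) : Torus1) := by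
      rw [← smul_sub, ← AddCircle.coe_sub, ← AddCircle.coe_nsmul]
      congr 1
      simp only [s', next, nsmul_eq_mul]
      ring
    rw [dist_eq_norm, shift_eq]
    refine (norm_addCircle_coe_le_abs _).trans ?_
    rw [abs_neg, abs_of_nonneg (by positivity), div_le_div_iff₀ hN (by positivity), one_mul]
    exact hj
  rw [flow_eq, iterate_map]
  refine conj_close A (one_le_amplitude hL hE _) _ _ ?_
  simp only [Prod.fst_add, Prod.snd_add, dist_add_left, dist_self, add_zero]
  calc A * dist (j • (s.rot : Torus1)) (j • (s'.rot : Torus1)) ≤ A * (1 / A ^ 2) := by gcongr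
    _ = 1 / A := by field_simp
    _ ≤ δ := (one_div_le hA hδ).2 hn

lemma eventually_exists_classes_next (hL : IsSlowScale L) (hE : 0 < E) {ε : ℝ} (hε : 0 < ε) :
    ∀ᶠ n in atTop, ∃ M : ℕ,
      M ≤ L (s.next L E B n).period * amplitude L E (s.next L E B n).period ∧
      ∃ c : Torus2 → Fin M, ∀ x y, c x = c y →
        ∀ t, dist ((s.next L E B n).conj.flow t x) ((s.next L E B n).conj.flow t y) ≤ ε := by
  obtain ⟨δ, hδ, conj_close⟩ := s.conj.exists_forall_dist_compShear_le B s.period hε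
  obtain ⟨K, partition⟩ := exists_torus_partition hδ
  filter_upwards [(s.tendsto_period_next L E B).eventually
    (hL.tendsto_atTop.eventually_ge_atTop K)] with n hn
  set s' := s.next L E B n
  have hA : 1 ≤ amplitude L E s'.period := one_le_amplitude hL hE _
  obtain ⟨M, hM, c, hc⟩ := partition _ hA
  refine ⟨M, hM.trans (by gcongr), fun x ↦ c (s'.conj.toHomeomorph.symm x), fun x y hxy t ↦ ?_⟩
  refine conj_close _ hA _ _ ?_
  simp only [Prod.fst_add, Prod.snd_add, dist_add_right]
  exact hc _ _ hxy

lemma exists_eventually_empiricalMeasure_next_mem (hL : IsSlowScale L) (E : ℝ)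
    {U : Set (ProbabilityMeasure (Torus2 × Torus2))}
    (hU : U ∈ 𝓝 (torusVolume.prod torusVolume)) :
    ∃ B, ∀ᶠ n in atTop, ∀ x y, L (s.next L E B n).period ≤
      amplitude L E (s.next L E B n).period * ‖(2 * s.period : ℕ) •
        (((s.next L E B n).conj.toHomeomorph.symm y).1 -
          ((s.next L E B n).conj.toHomeomorph.symm x).1)‖ →
      empiricalMeasure (s.next L E B n).period
        (fun j ↦ ((s.next L E B n).map^[j] x, (s.next L E B n).map^[j] y)) ∈ U := by
  have hc := s.conj.toHomeomorph.continuous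
  obtain ⟨B, hB⟩ := (eventually_pairOrbitFilter.1
    (pairOrbitFilter_le_nhds s.period (s.conj.tendsto_map_prodMap hU))).exists
  obtain ⟨w, hw⟩ := hB.exists
  obtain ⟨κ, hκ⟩ := hw.exists
  refine ⟨B, ?_⟩
  have period_atTop := s.tendsto_period_next L E B
  filter_upwards [period_atTop.eventually (hL.tendsto_atTop.eventually_ge_atTop w),
    period_atTop.eventually (eventually_mul_amplitude_le hL E (κ * s.period))]
    with n hwn hκn x y hxy
  set s' := s.next L E B n
  have amplitude_le : κ * amplitude L E s'.period ≤ n := by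
    have hq : (0 : ℝ) < s.period := by exact_mod_cast s.period.pos
    have period_eq : (s'.period : ℝ) = s.period * n := by simp [s', next]
    rw [period_eq] at hκn
    exact le_of_mul_le_mul_left (by linarith) hq
  have map_mem := hκ _ n s'.rot (s'.conj.toHomeomorph.symm x) (s'.conj.toHomeomorph.symm y)
    (hwn.trans hxy) amplitude_le
    (s.period_nsmul_rot_next L E B n)
  simp only [map_empiricalMeasure _ _ (hc.prodMap hc).measurable] at map_mem
  simp only [iterate_map]
  exact map_mem

end Stage

/-- The properties of the passage from the `k`-th stage `s` to the next stage `s'`: the two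
transformations are close, in the `C^k` topology and along orbits of length much less than the
period, while the new stage has few distinguishable orbits and the orbits of most pairs of points
are equidistributed, up to the neighbourhood `U` of the product measure. -/
structure Step (L : ℕ → ℝ) (E : ℝ) (k : ℕ) (U : Set (ProbabilityMeasure (Torus2 × Torus2)))
    (s s' : Stage) : Prop where
  dvd_period : 4 * (s.period : ℕ) ^ 2 ∣ (s'.period : ℕ)
  rot_eq : s'.rot = s.rot + 1 / s'.period
  lt_period : k < s'.period
  period_mul_amplitude_sq_le : s.period * amplitude L E s'.period ^ 2 ≤ s'.period
  norm_iteratedFDeriv_liftFlow_sub_le : ∀ r ≤ k, ∀ p, ‖iteratedFDeriv ℝ r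
    (fun p ↦ s'.conj.liftFlow s'.rot p - s.conj.liftFlow s.rot p) p‖ ≤ (1 / 2) ^ k
  norm_iteratedFDeriv_liftFlow_neg_sub_le : ∀ r ≤ k, ∀ p, ‖iteratedFDeriv ℝ r
    (fun p ↦ s'.conj.liftFlow (-s'.rot) p - s.conj.liftFlow (-s.rot) p) p‖ ≤ (1 / 2) ^ k
  dist_iterate_map_le : ∀ j : ℕ, j * amplitude L E s'.period ^ 2 ≤ s'.period →
    ∀ x, dist (s.map^[j] x) (s'.map^[j] x) ≤ (1 / 2) ^ k
  exists_classes : ∃ M : ℕ, M ≤ L s'.period * amplitude L E s'.period ∧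
    ∃ c : Torus2 → Fin M, ∀ x y, c x = c y →
      ∀ t, dist (s'.conj.flow t x) (s'.conj.flow t y) ≤ (1 / 2) ^ k
  empiricalMeasure_mem : ∀ x y, L s'.period ≤ amplitude L E s'.period *
      ‖(2 * s.period : ℕ) • ((s'.conj.toHomeomorph.symm y).1 - (s'.conj.toHomeomorph.symm x).1)‖ →
    empiricalMeasure s'.period (fun j ↦ (s'.map^[j] x, s'.map^[j] y)) ∈ U

lemma exists_step {L : ℕ → ℝ} {E : ℝ} (hL : IsSlowScale L) (hE : 0 < E) (k : ℕ)
    {U : Set (ProbabilityMeasure (Torus2 × Torus2))} (hU : U ∈ 𝓝 (torusVolume.prod torusVolume))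
    (s : Stage) : ∃ s', Step L E k U s s' := by
  obtain ⟨B, mixing⟩ := s.exists_eventually_empiricalMeasure_next_mem hL E hU
  have hk : (0 : ℝ) < (1 / 2) ^ k := by positivity
  have period_atTop := s.tendsto_period_next L E B
  have lift_close (j : ℤ) := (finite_le_nat k).eventually_all.2 fun r _ ↦
    s.eventually_norm_iteratedFDeriv_liftFlow_next_sub_le B hL (E := E) j r hk
  obtain ⟨n₀, hn₀⟩ := eventually_atTop.1 <| mixing.and <|
    (period_atTop.eventually_gt_atTop k).and <|
    (period_atTop.eventually (eventually_mul_amplitude_sq_le hL E s.period)).and <|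
    (lift_close 1).and <| (lift_close (-1)).and <|
    (s.eventually_dist_iterate_map_next_le B hL hE hk).and <|
    s.eventually_exists_classes_next B hL hE hk
  let n : ℕ+ := 4 * s.period * n₀
  obtain ⟨mixing, lt_period, amplitude_le, lift_close, invLift_close, iterate_close, classes⟩ :=
    hn₀ n (PNat.le_of_dvd (dvd_mul_left _ _))
  refine ⟨s.next L E B n, ⟨n₀, ?_⟩, rfl, lt_period, amplitude_le, fun r hr p ↦ ?_, fun r hr p ↦ ?_,
    iterate_close, classes, mixing⟩
  · change ((s.period * (4 * s.period * n₀) : ℕ+) : ℕ) = _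
    rw [PNat.mul_coe, PNat.mul_coe, PNat.mul_coe, PNat.val_ofNat]
    ring
  · simpa using lift_close r hr p
  · simpa using invLift_close r hr p

/-- A sequence of stages of the construction. The neighbourhoods `nbhd k` prescribe how well the
orbits of pairs of points are equidistributed at each stage. -/
structure ConjugationScheme (L : ℕ → ℝ) (E : ℝ) where
  stage : ℕ → Stage
  nbhd : ℕ → Set (ProbabilityMeasure (Torus2 × Torus2))
  hasAntitoneBasis_nbhd : (𝓝 (torusVolume.prod torusVolume)).HasAntitoneBasis nbhd
  step (k : ℕ) : Step L E k (nbhd k) (stage k) (stage (k + 1))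

lemma nonempty_conjugationScheme {L : ℕ → ℝ} {E : ℝ} (hL : IsSlowScale L) (hE : 0 < E) :
    Nonempty (ConjugationScheme L E) := by
  obtain ⟨U, hU⟩ := (𝓝 (torusVolume.prod torusVolume)).exists_antitone_basis
  choose next step using fun k s ↦ exists_step hL hE k (hU.mem k) s
  exact ⟨{ stage := fun k ↦ k.rec .zero next
           nbhd := U
           hasAntitoneBasis_nbhd := hU
           step := fun k ↦ step k _ }⟩

section UniformLimits

lemma uniformContinuous_torusProj : UniformContinuous torusProj :=
  (LipschitzWith.mk_one dist_torusProj_le).uniformContinuous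

lemma exists_contDiff_isLiftOf_of_norm_iteratedFDeriv_sub_le {f : ℕ → Torus2 → Torus2}
    {F : ℕ → ℝ × ℝ → ℝ × ℝ} (hFf : ∀ k, IsLiftOf (F k) (f k)) (hF : ∀ k, ContDiff ℝ (⊤ : ℕ∞) (F k))
    {u : ℕ → ℝ} (hu : Summable u)
    (h : ∀ k, ∀ r ≤ k, ∀ p, ‖iteratedFDeriv ℝ r (fun p ↦ F (k + 1) p - F k p) p‖ ≤ u k) :
    ∃ G g, ContDiff ℝ (⊤ : ℕ∞) G ∧ IsLiftOf G g ∧ TendstoUniformly f g atTop := by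
  set G : ℝ × ℝ → ℝ × ℝ := fun p ↦ F 0 p + ∑' k, (F (k + 1) p - F k p) with hG
  have contDiff_G : ContDiff ℝ (⊤ : ℕ∞) G := by
    refine (hF 0).add <| contDiff_tsum_of_eventually (v := fun _ ↦ u)
      (fun k ↦ (hF (k + 1)).sub (hF k)) (fun _ _ ↦ hu) fun r _ ↦ ?_
    rw [Nat.cofinite_eq_atTop]
    filter_upwards [eventually_ge_atTop r] with k hk using h k r hk
  have tendsto_G : TendstoUniformly F G atTop := by
    have hsum := tendstoUniformly_tsum_nat hu fun k p ↦ by simpa using h k 0 k.zero_le p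
    rw [Metric.tendstoUniformly_iff] at hsum ⊢
    intro ε hε
    filter_upwards [hsum ε hε] with k hk p
    rw [← add_sub_cancel (F 0 p) (F k p), ← Finset.sum_range_sub (fun k ↦ F k p), hG]
    simpa only [dist_add_left] using hk p
  have tendsto_proj := uniformContinuous_torusProj.comp_tendstoUniformly tendsto_G
  set lift := Function.surjInv torusProj_surjective
  have f_eq : f = fun k ↦ (torusProj ∘ F k) ∘ lift := by
    ext1 k
    ext1 x
    rw [Function.comp_apply, Function.comp_apply, hFf k,
      Function.surjInv_eq torusProj_surjective]
  have tendsto_f : TendstoUniformly f (torusProj ∘ G ∘ lift) atTop :=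
    f_eq ▸ tendsto_proj.comp lift
  refine ⟨G, _, contDiff_G, fun p ↦ tendsto_nhds_unique (tendsto_proj.tendsto_at p) ?_, tendsto_f⟩
  exact (tendsto_f.tendsto_at (torusProj p)).congr fun k ↦ (hFf k p).symm

variable {X ι : Type*} {l : Filter ι} {f f' : ι → X → X} {g g' : X → X}

lemma leftInverse_of_tendstoUniformly [UniformSpace X] [T2Space X] [l.NeBot]
    (hf : TendstoUniformly f g l) (hg : Continuous g) (hf' : TendstoUniformly f' g' l)
    (h : ∀ i, Function.LeftInverse (f i) (f' i)) : Function.LeftInverse g g' := fun x ↦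
  tendsto_nhds_unique (hf.tendsto_comp hg.continuousAt (hf'.tendsto_at x)) <| by
    simpa only [h _ x] using tendsto_const_nhds

lemma tendsto_iterate_of_tendstoUniformly [UniformSpace X] (hf : TendstoUniformly f g l)
    (hg : Continuous g) (j : ℕ) (x : X) : Tendsto (fun i ↦ (f i)^[j] x) l (𝓝 (g^[j] x)) := by
  induction j with
  | zero => exact tendsto_const_nhds
  | succ j ih =>
    simp only [Function.iterate_succ_apply']
    exact hf.tendsto_comp hg.continuousAt ih

end UniformLimits

lemma measurePreserving_of_tendsto {X Y : Type*} [MeasurableSpace X] [MeasurableSpace Y]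
    [PseudoEMetricSpace Y] [BorelSpace Y] {μ : Measure X} {ν : Measure Y} [IsFiniteMeasure μ]
    {f : ℕ → X → Y} {g : X → Y} (hf : ∀ k, MeasurePreserving (f k) μ ν)
    (hfg : ∀ x, Tendsto (fun k ↦ f k x) atTop (𝓝 (g x))) : MeasurePreserving g μ ν := by
  have hg : Measurable g :=
    measurable_of_tendsto_metrizable (fun k ↦ (hf k).measurable) (tendsto_pi_nhds.2 hfg)
  have : IsFiniteMeasure ν := (hf 0).map_eq ▸ inferInstance
  refine ⟨hg, ext_of_forall_integral_eq_of_IsFiniteMeasure fun φ ↦ ?_⟩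
  rw [integral_map hg.aemeasurable φ.continuous.aestronglyMeasurable]
  have tendsto_integral : Tendsto (fun k ↦ ∫ x, φ (f k x) ∂μ) atTop (𝓝 (∫ x, φ (g x) ∂μ)) :=
    tendsto_integral_of_dominated_convergence (fun _ ↦ ‖φ‖)
      (fun k ↦ (φ.continuous.measurable.comp (hf k).measurable).aestronglyMeasurable)
      (integrable_const _) (fun k ↦ ae_of_all _ fun x ↦ φ.norm_coe_le_norm _)
      (ae_of_all _ fun x ↦ (φ.continuous.tendsto _).comp (hfg x))
  refine tendsto_nhds_unique tendsto_integral (tendsto_const_nhds.congr fun k ↦ ?_)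
  rw [← (hf k).map_eq,
    integral_map (hf k).measurable.aemeasurable φ.continuous.aestronglyMeasurable]

lemma dist_le_two_mul_of_tendsto {X : Type*} [PseudoMetricSpace X] {u : ℕ → X} {a : X}
    (ha : Tendsto u atTop (𝓝 a)) {k : ℕ} (h : ∀ i ≥ k, dist (u i) (u (i + 1)) ≤ (1 / 2) ^ i) :
    dist (u k) a ≤ 2 * (1 / 2) ^ k := by
  have dist_le := dist_le_of_le_geometric_of_tendsto (1 / 2) ((1 / 2) ^ k) (f := fun n ↦ u (n + k))
    (by norm_num) (fun n ↦ ?_) ((tendsto_add_atTop_iff_nat k).2 ha) 0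
  · simp only [zero_add, pow_zero, mul_one] at dist_le
    exact dist_le.trans_eq (by ring)
  · rw [← pow_add, add_comm k, add_right_comm]
    exact h (n + k) (Nat.le_add_left k n)

namespace ConjugationScheme

variable {L : ℕ → ℝ} {E : ℝ} (S : ConjugationScheme L E)

/-- The transformation constructed by a conjugation scheme: the limit of the transformations of
its stages. -/
noncomputable def limit (x : Torus2) : Torus2 := limUnder atTop fun k ↦ (S.stage k).map x

/-- The limit of the inverses of the transformations of the stages. -/
noncomputable def limitInv (x : Torus2) : Torus2 :=
  limUnder atTop fun k ↦ (S.stage k).conj.flow (-(S.stage k).rot : ℝ) x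

lemma exists_contDiff_isLiftOf_limit : ∃ G, ContDiff ℝ (⊤ : ℕ∞) G ∧ IsLiftOf G S.limit ∧
    TendstoUniformly (fun k ↦ (S.stage k).map) S.limit atTop := by
  obtain ⟨G, g, hG, hGg, hg⟩ := exists_contDiff_isLiftOf_of_norm_iteratedFDeriv_sub_le
    (fun k ↦ (S.stage k).conj.isLiftOf_liftFlow (S.stage k).rot)
    (fun k ↦ (S.stage k).conj.contDiff_liftFlow _)
    summable_geometric_two fun k ↦ (S.step k).norm_iteratedFDeriv_liftFlow_sub_le
  obtain rfl : S.limit = g := funext fun x ↦ (hg.tendsto_at x).limUnder_eq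
  exact ⟨G, hG, hGg, hg⟩

lemma exists_contDiff_isLiftOf_limitInv : ∃ G, ContDiff ℝ (⊤ : ℕ∞) G ∧ IsLiftOf G S.limitInv ∧
    TendstoUniformly (fun k ↦ (S.stage k).conj.flow (-(S.stage k).rot : ℝ)) S.limitInv atTop := by
  obtain ⟨G, g, hG, hGg, hg⟩ := exists_contDiff_isLiftOf_of_norm_iteratedFDeriv_sub_le
    (fun k ↦ (S.stage k).conj.isLiftOf_liftFlow (-(S.stage k).rot))
    (fun k ↦ (S.stage k).conj.contDiff_liftFlow _)
    summable_geometric_two fun k ↦ (S.step k).norm_iteratedFDeriv_liftFlow_neg_sub_le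
  obtain rfl : S.limitInv = g := funext fun x ↦ (hg.tendsto_at x).limUnder_eq
  exact ⟨G, hG, hGg, hg⟩

lemma tendstoUniformly_map : TendstoUniformly (fun k ↦ (S.stage k).map) S.limit atTop :=
  S.exists_contDiff_isLiftOf_limit.choose_spec.2.2

lemma continuous_limit : Continuous S.limit :=
  S.tendstoUniformly_map.continuous <|
    Frequently.of_forall fun k ↦ (S.stage k).conj.continuous_flow _

lemma measurePreserving_limit : MeasurePreserving S.limit volume volume :=
  measurePreserving_of_tendsto (fun k ↦ (S.stage k).conj.measurePreserving_flow _)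
    S.tendstoUniformly_map.tendsto_at

lemma isCkTorusDiffeo_limit : IsCkTorusDiffeo ⊤ S.limit := by
  obtain ⟨F, hF, hFlimit, hlimit⟩ := S.exists_contDiff_isLiftOf_limit
  obtain ⟨G, hG, hGlimitInv, hlimitInv⟩ := S.exists_contDiff_isLiftOf_limitInv
  have continuous_limitInv : Continuous S.limitInv :=
    hlimitInv.continuous <| Frequently.of_forall fun k ↦ (S.stage k).conj.continuous_flow _
  have left_inv : Function.LeftInverse S.limitInv S.limit :=
    leftInverse_of_tendstoUniformly hlimitInv continuous_limitInv hlimit fun k x ↦ by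
      rw [Stage.map, ← SmoothConjugacy.flow_add, ← AddCircle.coe_add, neg_add_cancel,
        AddCircle.coe_zero, SmoothConjugacy.flow_zero]
  have right_inv : Function.RightInverse S.limitInv S.limit :=
    leftInverse_of_tendstoUniformly hlimit S.continuous_limit hlimitInv fun k x ↦ by
      rw [Stage.map, ← SmoothConjugacy.flow_add, ← AddCircle.coe_add, add_neg_cancel,
        AddCircle.coe_zero, SmoothConjugacy.flow_zero]
  refine ⟨⟨left_inv.injective, right_inv.surjective⟩, ⟨F, hF, hFlimit⟩, G, hG, ?_⟩
  rwa [Function.invFun_eq_of_injective_of_rightInverse left_inv.injective right_inv]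

lemma tendsto_period : Tendsto (fun k ↦ ((S.stage k).period : ℕ)) atTop atTop :=
  (tendsto_add_atTop_iff_nat 1).1 <|
    tendsto_atTop_mono (fun k ↦ (S.step k).lt_period.le) tendsto_id

variable (hL : IsSlowScale L) (hE : 0 < E)
include hL hE

lemma monotone_period : Monotone fun k ↦ ((S.stage k).period : ℕ) := by
  refine monotone_nat_of_le_succ fun k ↦ ?_
  have amplitude_sq : 1 ≤ amplitude L E (S.stage (k + 1)).period ^ 2 :=
    one_le_pow₀ (one_le_amplitude hL hE _)
  exact_mod_cast (le_mul_of_one_le_right (Nat.cast_nonneg' _) amplitude_sq).trans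
    (S.step k).period_mul_amplitude_sq_le

lemma dist_iterate_map_limit_le {k j : ℕ}
    (hj : j * amplitude L E (S.stage (k + 1)).period ^ 2 ≤ (S.stage (k + 1)).period) (x : Torus2) :
    dist ((S.stage k).map^[j] x) (S.limit^[j] x) ≤ 2 * (1 / 2) ^ k := by
  refine dist_le_two_mul_of_tendsto (u := fun k ↦ (S.stage k).map^[j] x)
    (tendsto_iterate_of_tendstoUniformly S.tendstoUniformly_map S.continuous_limit j x)
    fun i hi ↦ (S.step i).dist_iterate_map_le j ?_ x
  rcases hi.eq_or_lt with rfl | hi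
  · exact hj
  have le_period : (j : ℝ) ≤ (S.stage i).period :=
    calc (j : ℝ) ≤ j * amplitude L E (S.stage (k + 1)).period ^ 2 :=
          le_mul_of_one_le_right (Nat.cast_nonneg' _) (one_le_pow₀ (one_le_amplitude hL hE _))
      _ ≤ (S.stage (k + 1)).period := hj
      _ ≤ (S.stage i).period := by exact_mod_cast S.monotone_period hL hE hi
  exact le_trans (by gcongr) (S.step i).period_mul_amplitude_sq_le

end ConjugationScheme

section BirkhoffAverage

variable {X : Type*} [MeasurableSpace X] {μ : Measure X} {T : X → X} {f : X → ℝ} {n : ℕ}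

lemma integrable_birkhoffAverage (hT : MeasurePreserving T μ μ) (hf : Integrable f μ)
    (n : ℕ) : Integrable (birkhoffAverage ℝ T f n) μ :=
  (integrable_finsetSum _ fun k _ ↦ (hT.iterate k).integrable_comp_of_integrable hf).smul (n : ℝ)⁻¹

lemma integral_birkhoffAverage (hT : MeasurePreserving T μ μ) (hf : Integrable f μ)
    (hn : n ≠ 0) : ∫ x, birkhoffAverage ℝ T f n x ∂μ = ∫ x, f x ∂μ := by
  have integral_eq (k : ℕ) : ∫ x, f (T^[k] x) ∂μ = ∫ x, f x ∂μ := by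
    have hTk := hT.iterate k
    have h := integral_map hTk.aemeasurable (hTk.map_eq.symm ▸ hf.aestronglyMeasurable)
    rwa [hTk.map_eq, eq_comm] at h
  have integrable (k : ℕ) : Integrable (fun x ↦ f (T^[k] x)) μ :=
    (hT.iterate k).integrable_comp_of_integrable hf
  simp only [birkhoffAverage, birkhoffSum, smul_eq_mul]
  rw [integral_const_mul, integral_finsetSum _ fun k _ ↦ integrable k]
  simp only [integral_eq, Finset.sum_const, Finset.card_range, nsmul_eq_mul]
  exact inv_mul_cancel_left₀ (Nat.cast_ne_zero.2 hn) _

end BirkhoffAverage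

section WeakMixing

variable {X Y : Type*} [MeasurableSpace X] [MeasurableSpace Y]

lemma integral_integral_empiricalMeasure_iterate [TopologicalSpace Y] [OpensMeasurableSpace Y]
    {μ : ProbabilityMeasure X} (m : ℕ+) {S : X → X} {g : X → Y} (hS : MeasurePreserving S μ μ)
    (hg : Measurable g) (φ : BoundedContinuousFunction Y ℝ) :
    ∫ x, ∫ y, φ y ∂(empiricalMeasure m fun j ↦ g (S^[j] x)) ∂μ =
      ∫ y, φ y ∂(μ.map hg.aemeasurable) := by
  have integrable : Integrable (φ ∘ g) μ :=
    .of_bound (φ.continuous.measurable.comp hg).aestronglyMeasurable ‖φ‖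
      (ae_of_all _ fun x ↦ φ.norm_coe_le_norm _)
  simp only [integral_empiricalMeasure m _ φ.continuous]
  exact (integral_birkhoffAverage hS integrable m.ne_zero).trans
    (integral_map hg.aemeasurable φ.continuous.measurable.aestronglyMeasurable).symm

lemma tendsto_map_of_tendsto_empiricalMeasure [TopologicalSpace Y] [OpensMeasurableSpace Y]
    {μ : ProbabilityMeasure X} {ν : ProbabilityMeasure Y} {m : ℕ → ℕ+} {S : ℕ → X → X}
    {g : ℕ → X → Y} (hS : ∀ k, MeasurePreserving (S k) μ μ) (hg : ∀ k, Measurable (g k))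
    (h : ∀ x, Tendsto (fun k ↦ empiricalMeasure (m k) fun j ↦ g k ((S k)^[j] x)) atTop (𝓝 ν)) :
    Tendsto (fun k ↦ μ.map (hg k).aemeasurable) atTop (𝓝 ν) := by
  rw [ProbabilityMeasure.tendsto_iff_forall_integral_tendsto]
  intro φ
  refine Tendsto.congr
    (fun k ↦ integral_integral_empiricalMeasure_iterate (m k) (hS k) (hg k) φ) ?_
  have integral_eq : ∫ y, φ y ∂ν = ∫ _, ∫ y, φ y ∂ν ∂(μ : Measure X) := by simp
  rw [integral_eq]
  refine tendsto_integral_of_dominated_convergence (fun _ ↦ ‖φ‖) (fun k ↦ ?_) (integrable_const _)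
    (fun k ↦ ae_of_all _ fun x ↦ φ.norm_integral_le_norm _)
    (ae_of_all _ fun x ↦ ProbabilityMeasure.tendsto_iff_forall_integral_tendsto.1 (h x) φ)
  simp only [integral_empiricalMeasure (m k) _ φ.continuous]
  simp only [smul_eq_mul]
  refine Measurable.aestronglyMeasurable <|
    (Finset.measurable_fun_sum (M := ℝ) _ fun j _ ↦ ?_).const_mul _
  exact φ.continuous.measurable.comp ((hg k).comp ((hS k).iterate j).measurable)

lemma measurePreserving_prodProdProdComm {Z W : Type*} [MeasurableSpace Z] [MeasurableSpace W]
    (μ : Measure X) (ν : Measure Y) (κ : Measure Z) (τ : Measure W) [SFinite μ] [SFinite ν]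
    [SFinite κ] [SFinite τ] : MeasurePreserving (Equiv.prodProdProdComm X Y Z W)
      ((μ.prod ν).prod (κ.prod τ)) ((μ.prod κ).prod (ν.prod τ)) := by
  have leftComm := (measurePreserving_prodAssoc κ ν τ).comp <|
    (Measure.measurePreserving_swap.prod (.id τ)).comp (measurePreserving_prodAssoc ν κ τ).symm
  exact (measurePreserving_prodAssoc μ κ (ν.prod τ)).symm.comp <|
    ((MeasurePreserving.id μ).prod leftComm).comp (measurePreserving_prodAssoc μ ν (κ.prod τ))

lemma measure_preimage_prodMk_prod_le {μ : Measure X} {S : X → X} (hS : MeasurePreserving S μ μ)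
    {A U V : Set X} (hA : MeasurableSet A) (hSA : S ⁻¹' A = A) (hV : MeasurableSet V) :
    μ ((fun x ↦ (x, S x)) ⁻¹' U ×ˢ V) ≤ μ (U \ A) + μ (V \ Aᶜ) := by
  rw [← hS.measure_preimage (hV.diff hA.compl).nullMeasurableSet]
  refine (measure_mono ?_).trans (measure_union_le _ _)
  rintro x ⟨hxU, hxV⟩
  have hx : S x ∈ A ↔ x ∈ A := by rw [← mem_preimage, hSA]
  by_cases hxA : x ∈ A
  · exact Or.inr ⟨hxV, not_not.2 (hx.2 hxA)⟩
  · exact Or.inl ⟨hxU, hxA⟩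

variable [PseudoMetricSpace X] [SecondCountableTopology X] [BorelSpace X]
  {ρ : ProbabilityMeasure X} {S : X → X} {n : ℕ → ℕ}

lemma measure_mul_measure_compl_eq_zero_of_tendsto_map_prodMk (hS : MeasurePreserving S ρ ρ)
    (h : Tendsto (fun k ↦ ρ.map (measurable_id.prodMk (hS.iterate (n k)).measurable).aemeasurable)
      atTop (𝓝 (ρ.prod ρ))) {A : Set X} (hA : MeasurableSet A) (hSA : S ⁻¹' A = A) :
    (ρ : Measure X) A * (ρ : Measure X) Aᶜ = 0 := by
  set μ := (ρ : Measure X)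
  refine nonpos_iff_eq_zero.1 (ENNReal.le_of_forall_pos_le_add fun ε hε _ ↦ ?_)
  have hε₂ : (ε / 2 : ℝ≥0∞) ≠ 0 := by simpa using hε.ne'
  obtain ⟨U, hAU, hU, -, hUε⟩ := hA.exists_isOpen_sdiff_lt (measure_ne_top μ _) hε₂
  obtain ⟨V, hAV, hV, -, hVε⟩ := hA.compl.exists_isOpen_sdiff_lt (measure_ne_top μ _) hε₂
  have map_le (k : ℕ) : (ρ.map (measurable_id.prodMk (hS.iterate (n k)).measurable).aemeasurable :
      Measure (X × X)) (U ×ˢ V) ≤ ε := by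
    rw [ProbabilityMeasure.toMeasure_map, Measure.map_apply
      (measurable_id.prodMk (hS.iterate (n k)).measurable) (hU.prod hV).measurableSet]
    have hSA_iterate : S^[n k] ⁻¹' A = A := by
      rw [Set.preimage_iterate_eq]
      exact Function.iterate_fixed hSA (n k)
    refine (measure_preimage_prodMk_prod_le (hS.iterate (n k)) hA hSA_iterate
      hV.measurableSet).trans ?_
    exact (add_le_add hUε.le hVε.le).trans_eq (ENNReal.add_halves _)
  calc μ A * μ Aᶜ ≤ μ U * μ V := by gcongr
    _ = (ρ.prod ρ : Measure (X × X)) (U ×ˢ V) := (Measure.prod_prod _ _).symm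
    _ ≤ liminf (fun k ↦ (ρ.map (measurable_id.prodMk
          (hS.iterate (n k)).measurable).aemeasurable : Measure (X × X)) (U ×ˢ V)) atTop :=
        ProbabilityMeasure.le_liminf_measure_open_of_tendsto h (hU.prod hV)
    _ ≤ 0 + ε := by
        rw [zero_add]
        exact liminf_le_of_le (by isBoundedDefault) fun b hb ↦
          hb.exists.elim fun k hk ↦ hk.trans (map_le k)

lemma ergodic_of_tendsto_map_prodMk (hS : MeasurePreserving S ρ ρ)
    (h : Tendsto (fun k ↦ ρ.map (measurable_id.prodMk (hS.iterate (n k)).measurable).aemeasurable)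
      atTop (𝓝 (ρ.prod ρ))) : Ergodic S ρ where
  toMeasurePreserving := hS
  aeconst_set A hA hSA := by
    rw [eventuallyConst_set']
    refine (mul_eq_zero.1 (measure_mul_measure_compl_eq_zero_of_tendsto_map_prodMk hS h hA hSA)).imp
      ae_eq_empty.2 fun hAc ↦ ae_eq_univ.2 hAc

lemma weaklyMixing_of_tendsto_map_prodMk (hS : MeasurePreserving S ρ ρ)
    (h : Tendsto (fun k ↦ ρ.map (measurable_id.prodMk (hS.iterate (n k)).measurable).aemeasurable)
      atTop (𝓝 (ρ.prod ρ))) : WeaklyMixing S ρ := by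
  have hSS : MeasurePreserving (Prod.map S S) (ρ.prod ρ) (ρ.prod ρ) := hS.prod hS
  refine ergodic_of_tendsto_map_prodMk (ρ := ρ.prod ρ) (n := n) hSS ?_
  have continuous_comm : Continuous (Equiv.prodProdProdComm X X X X) :=
    (by fun_prop : Continuous fun p : (X × X) × X × X ↦ ((p.1.1, p.2.1), (p.1.2, p.2.2)))
  have tendsto_prod : Tendsto (fun k ↦
      (ρ.map (measurable_id.prodMk (hS.iterate (n k)).measurable).aemeasurable).prod
        (ρ.map (measurable_id.prodMk (hS.iterate (n k)).measurable).aemeasurable))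
      atTop (𝓝 ((ρ.prod ρ).prod (ρ.prod ρ))) :=
    (ProbabilityMeasure.continuous_prod.tendsto (ρ.prod ρ, ρ.prod ρ)).comp (h.prodMk_nhds h)
  have tendsto_comm :=
    ProbabilityMeasure.tendsto_map_of_tendsto_of_continuous _ _ tendsto_prod continuous_comm
  convert tendsto_comm using 2 with k
  · have hSn := measurable_id.prodMk (hS.iterate (n k)).measurable
    refine Subtype.ext ?_
    change Measure.map (fun p ↦ (p, (Prod.map S S)^[n k] p)) _ =
      Measure.map _ ((Measure.map _ _).prod (Measure.map _ _))
    rw [Measure.map_prod_map _ _ hSn hSn,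
      Measure.map_map continuous_comm.measurable (hSn.prodMap hSn), Prod.map_iterate]
    rfl
  · exact Subtype.ext (measurePreserving_prodProdProdComm _ _ _ _).map_eq.symm

end WeakMixing

lemma SmoothConjugacy.symm_flow_fst (c : SmoothConjugacy) (t : Torus1) (x : Torus2) :
    (c.toHomeomorph.symm (c.flow t x)).1 = (c.toHomeomorph.symm x).1 + t := by
  simp [SmoothConjugacy.flow]

namespace ConjugationScheme

variable {L : ℕ → ℝ} {E : ℝ} (S : ConjugationScheme L E)

lemma exists_norm_nsmul_rot (k : ℕ) : ∃ n ≤ ((S.stage (k + 1)).period : ℕ),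
    ‖(2 * (S.stage k).period : ℕ) • n • ((S.stage (k + 1)).rot : Torus1)‖ = 1 / 2 := by
  obtain ⟨m, hm⟩ := (S.step k).dvd_period
  set q := ((S.stage k).period : ℕ)
  have hq : 0 < q := (S.stage k).period.pos
  have hm0 : 0 < m := pos_of_mul_pos_right (hm ▸ (S.stage (k + 1)).period.pos) (Nat.zero_le _)
  refine ⟨q * m, by rw [hm]; nlinarith [Nat.mul_le_mul_right (q * m) hq], ?_⟩
  have rot_eq : ((S.stage (k + 1)).rot : Torus1) =
      (S.stage k).rot + ((1 / (S.stage (k + 1)).period : ℝ) : Torus1) := by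
    rw [(S.step k).rot_eq, AddCircle.coe_add]
  have nsmul_inv : (2 * q * (q * m)) • ((1 / (S.stage (k + 1)).period : ℝ) : Torus1) =
      ((1 / 2 : ℝ) : Torus1) := by
    rw [← AddCircle.coe_nsmul, nsmul_eq_mul, hm]
    congr 1
    push_cast
    field_simp
    norm_num
  rw [smul_smul, rot_eq, nsmul_add, nsmul_inv, show 2 * q * (q * m) = 2 * q * m * q by ring,
    mul_nsmul', (S.stage k).period_nsmul_rot, nsmul_zero, zero_add, AddCircle.norm_half_period_eq,
    abs_one]

/-- A time at which the stage `k + 1` of a conjugation scheme has displaced almost all points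
independently of their initial position. -/
noncomputable def mixingTime (k : ℕ) : ℕ := (S.exists_norm_nsmul_rot k).choose

lemma mixingTime_le (k : ℕ) : S.mixingTime k ≤ ((S.stage (k + 1)).period : ℕ) :=
  (S.exists_norm_nsmul_rot k).choose_spec.1

lemma norm_nsmul_mixingTime_nsmul_rot (k : ℕ) : ‖(2 * (S.stage k).period : ℕ) •
    S.mixingTime k • ((S.stage (k + 1)).rot : Torus1)‖ = 1 / 2 :=
  (S.exists_norm_nsmul_rot k).choose_spec.2

/-- The pairs of points that equidistribute along a period of the stage `k + 1` of a conjugation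
scheme. -/
def separatedPairs (k : ℕ) : Set (Torus2 × Torus2) :=
  {p | L (S.stage (k + 1)).period ≤ amplitude L E (S.stage (k + 1)).period *
    ‖(2 * (S.stage k).period : ℕ) • (((S.stage (k + 1)).conj.toHomeomorph.symm p.2).1 -
      ((S.stage (k + 1)).conj.toHomeomorph.symm p.1).1)‖}

/-- The filter expressing that a property of a stage and of a separated pair of points holds for
all large stages, uniformly with respect to the pair. -/
def separatedFilter : Filter (ℕ × Torus2 × Torus2) :=
  comap Prod.fst atTop ⊓ 𝓟 {i | i.2 ∈ S.separatedPairs i.1}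

instance : S.separatedFilter.IsCountablyGenerated := by
  unfold separatedFilter
  infer_instance

lemma eventually_separatedFilter {p : ℕ × Torus2 × Torus2 → Prop} :
    (∀ᶠ i in S.separatedFilter, p i) ↔
      ∀ᶠ k in atTop, ∀ x ∈ S.separatedPairs k, p (k, x) := by
  rw [separatedFilter, eventually_inf_principal, eventually_comap]
  exact eventually_congr <| .of_forall fun k ↦
    ⟨fun h x hx ↦ h (k, x) rfl hx, fun h i hk hi ↦ by subst hk; exact h i.2 hi⟩

lemma tendsto_empiricalMeasure_stage : Tendsto (fun i : ℕ × Torus2 × Torus2 ↦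
    empiricalMeasure (S.stage (i.1 + 1)).period fun j ↦
      ((S.stage (i.1 + 1)).map^[j] i.2.1, (S.stage (i.1 + 1)).map^[j] i.2.2))
    S.separatedFilter (𝓝 (torusVolume.prod torusVolume)) := by
  refine S.hasAntitoneBasis_nbhd.toHasBasis.tendsto_right_iff.2 fun i _ ↦
    S.eventually_separatedFilter.2 ?_
  filter_upwards [eventually_ge_atTop i] with k hk x hx
  exact S.hasAntitoneBasis_nbhd.antitone hk ((S.step k).empiricalMeasure_mem x.1 x.2 hx)

lemma tendsto_two_mul_half_pow_succ :
    Tendsto (fun k ↦ 2 * (1 / 2 : ℝ) ^ (k + 1)) atTop (𝓝 0) := by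
  simpa using ((tendsto_add_atTop_iff_nat 1).2 (tendsto_pow_atTop_nhds_zero_of_lt_one
    (one_half_pos (α := ℝ)).le one_half_lt_one)).const_mul 2

variable (hL : IsSlowScale L) (hE : 0 < E)
include hL hE

lemma eventually_mixingTime_mem_separatedPairs (x : Torus2) : ∀ᶠ k in atTop,
    (x, (S.stage (k + 1)).map^[S.mixingTime k] x) ∈ S.separatedPairs k := by
  filter_upwards [((tendsto_add_atTop_iff_nat 1).2 S.tendsto_period).eventually
    (eventually_mul_le_amplitude hL hE 2)] with k hk
  rw [separatedPairs, mem_ofPred_eq, (S.stage (k + 1)).iterate_map, SmoothConjugacy.symm_flow_fst,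
    add_sub_cancel_left, S.norm_nsmul_mixingTime_nsmul_rot]
  linarith

lemma tendsto_empiricalMeasure_iterate_mixingTime (x : Torus2) :
    Tendsto (fun k ↦ empiricalMeasure (S.stage (k + 1)).period fun j ↦
        ((S.stage (k + 1)).map^[j] x,
          (S.stage (k + 1)).map^[S.mixingTime k] ((S.stage (k + 1)).map^[j] x)))
      atTop (𝓝 (torusVolume.prod torusVolume)) := by
  have tendsto_pair : Tendsto (fun k ↦ (k, x, (S.stage (k + 1)).map^[S.mixingTime k] x)) atTop
      S.separatedFilter :=
    tendsto_inf.2 ⟨tendsto_comap_iff.2 tendsto_id,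
      tendsto_principal.2 (S.eventually_mixingTime_mem_separatedPairs hL hE x)⟩
  refine (S.tendsto_empiricalMeasure_stage.comp tendsto_pair).congr fun k ↦ ?_
  simp only [Function.comp_apply, ← Function.iterate_add_apply, add_comm]

lemma dist_iterate_map_succ_limit_le {k j : ℕ} (hj : j ≤ ((S.stage (k + 1)).period : ℕ))
    (x : Torus2) : dist ((S.stage (k + 1)).map^[j] x) (S.limit^[j] x) ≤ 2 * (1 / 2) ^ (k + 1) :=
  S.dist_iterate_map_limit_le hL hE
    ((mul_le_mul_of_nonneg_right (by exact_mod_cast hj) (sq_nonneg _)).trans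
      (S.step (k + 1)).period_mul_amplitude_sq_le) x

lemma tendsto_map_prodMk_iterate_mixingTime :
    Tendsto (fun k ↦ torusVolume.map (measurable_id.prodMk
      (S.measurePreserving_limit.iterate (S.mixingTime k)).measurable).aemeasurable) atTop
      (𝓝 (torusVolume.prod torusVolume)) := by
  refine tendsto_map_of_tendsto_empiricalMeasure (μ := torusVolume)
    (S := fun k ↦ (S.stage (k + 1)).map) (m := fun k ↦ (S.stage (k + 1)).period)
    (fun k ↦ (S.stage (k + 1)).conj.measurePreserving_flow _)
    (fun k ↦ measurable_id.prodMk (S.measurePreserving_limit.iterate _).measurable) fun x ↦ ?_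
  refine tendsto_empiricalMeasure_of_dist_le (S.tendsto_empiricalMeasure_iterate_mixingTime hL hE x)
    tendsto_two_mul_half_pow_succ (.of_forall fun k j _ ↦ ?_)
  refine max_le ?_ (S.dist_iterate_map_succ_limit_le hL hE (S.mixingTime_le k) _)
  exact (dist_self _).trans_le (by positivity)

theorem weaklyMixing_limit : WeaklyMixing S.limit volume :=
  weaklyMixing_of_tendsto_map_prodMk (ρ := torusVolume) S.measurePreserving_limit
    (S.tendsto_map_prodMk_iterate_mixingTime hL hE)

end ConjugationScheme

section HammingCovers

variable {X : Type*} [MeasurableSpace X] {μ : Measure X} {T : X → X} {P : FinMeasPartition X}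
  {n : ℕ} {ε : ℝ}

lemma exists_finset_subset_forall_exists_apply_eq {X ι : Type*} [Fintype ι] (c : X → ι)
    (V : Set X) : ∃ F : Finset X, F.card ≤ Fintype.card ι ∧ ↑F ⊆ V ∧
      ∀ y ∈ V, ∃ x ∈ F, c x = c y := by
  obtain ⟨s, hsV, hs⟩ := (surjOn_image c V).exists_bijOn_subset
  have hs_fin : s.Finite := (toFinite (c '' V)).of_injOn hs.mapsTo hs.injOn
  refine ⟨hs_fin.toFinset, ?_, by rwa [hs_fin.coe_toFinset], fun y hy ↦ ?_⟩
  · exact Finset.card_le_card_of_injOn c (fun _ _ ↦ Finset.mem_univ _)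
      (by rw [hs_fin.coe_toFinset]; exact hs.injOn)
  · obtain ⟨x, hx, hxy⟩ := hs.surjOn (mem_image_of_mem c hy)
    exact ⟨x, hs_fin.mem_toFinset.2 hx, hxy⟩

lemma codeHammingDist_eq_zero {x y : X}
    (h : ∀ k < n, ∃ i, T^[k] x ∈ P.piece i ∧ T^[k] y ∈ P.piece i) :
    codeHammingDist T P n x y = 0 := by
  classical
  rw [codeHammingDist, Finset.card_eq_zero.2 (Finset.filter_eq_empty_iff.2 fun k hk ↦
    not_not.2 (h k (Finset.mem_range.1 hk))), Nat.cast_zero, zero_div]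

lemma exists_finset_iUnion_hammingBall_eq_univ (T : X → X) (P : FinMeasPartition X) (n : ℕ)
    (hε : 0 < ε) : ∃ F : Finset X, ⋃ x ∈ F, {y | codeHammingDist T P n x y < ε} = univ := by
  choose code mem_piece using fun x ↦ mem_iUnion.1 (P.cover.symm ▸ mem_univ x)
  obtain ⟨F, -, -, hF⟩ := exists_finset_subset_forall_exists_apply_eq
    (fun (x : X) (k : Fin n) ↦ code (T^[k] x)) univ
  refine ⟨F, eq_univ_of_forall fun y ↦ ?_⟩
  obtain ⟨x, hxF, hxy⟩ := hF y (mem_univ y)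
  refine mem_iUnion₂.2 ⟨x, hxF, (codeHammingDist_eq_zero fun k hk ↦ ?_).trans_lt hε⟩
  exact ⟨_, mem_piece _, congrFun hxy ⟨k, hk⟩ ▸ mem_piece _⟩

lemma hammingCoverNum_le_card {F : Finset X}
    (hF : ENNReal.ofReal (1 - ε) < μ (⋃ x ∈ F, {y | codeHammingDist T P n x y < ε})) :
    hammingCoverNum μ T P n ε ≤ F.card :=
  Nat.sInf_le ⟨F, rfl, hF⟩

variable [IsProbabilityMeasure μ]

lemma exists_finset_card_eq_hammingCoverNum (μ : Measure X) [IsProbabilityMeasure μ] (T : X → X)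
    (P : FinMeasPartition X) (n : ℕ) (hε : 0 < ε) :
    ∃ F : Finset X, F.card = hammingCoverNum μ T P n ε ∧
      ENNReal.ofReal (1 - ε) < μ (⋃ x ∈ F, {y | codeHammingDist T P n x y < ε}) := by
  obtain ⟨F, hF⟩ := exists_finset_iUnion_hammingBall_eq_univ T P n hε
  refine Nat.sInf_mem (s := {N | ∃ F : Finset X, F.card = N ∧ ENNReal.ofReal (1 - ε) <
    μ (⋃ x ∈ F, {y | codeHammingDist T P n x y < ε})}) ⟨F.card, F, rfl, ?_⟩
  rw [hF, measure_univ, ENNReal.ofReal_lt_one]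
  linarith

lemma hammingCoverNum_anti {ε' : ℝ} (hε : 0 < ε) (h : ε ≤ ε') :
    hammingCoverNum μ T P n ε' ≤ hammingCoverNum μ T P n ε := by
  obtain ⟨F, hF, hμF⟩ := exists_finset_card_eq_hammingCoverNum μ T P n hε
  rw [← hF]
  refine hammingCoverNum_le_card <| (ENNReal.ofReal_le_ofReal (by linarith)).trans_lt <|
    hμF.trans_le <| measure_mono <| iUnion₂_mono fun x _ y hy ↦ hy.trans_le h

lemma ofReal_one_sub_le_hammingCoverNum_mul (hε : 0 < ε) {b : ℝ≥0∞}
    (hb : ∀ x, μ {y | codeHammingDist T P n x y < ε} ≤ b) :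
    ENNReal.ofReal (1 - ε) ≤ hammingCoverNum μ T P n ε * b := by
  obtain ⟨F, hF, hμF⟩ := exists_finset_card_eq_hammingCoverNum μ T P n hε
  calc ENNReal.ofReal (1 - ε) ≤ _ := hμF.le
    _ ≤ ∑ x ∈ F, μ {y | codeHammingDist T P n x y < ε} := measure_biUnion_finset_le F _
    _ ≤ ∑ _x ∈ F, b := Finset.sum_le_sum fun x _ ↦ hb x
    _ = hammingCoverNum μ T P n ε * b := by rw [Finset.sum_const, hF, nsmul_eq_mul]

end HammingCovers

section SlowEntropy

variable {X : Type*} [MeasurableSpace X] {μ : Measure X} {T : X → X} {a : ℕ → ℝ → ℝ} {E ε : ℝ}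
  {P : FinMeasPartition X}

lemma mem_upperBounds_of_tendsto_zero (h : ∀ t > E, Tendsto (fun n ↦
      (hammingCoverNum μ T P n ε : ℝ≥0∞) / ENNReal.ofReal (a n t)) atTop (𝓝 0)) :
    E ∈ upperBounds {t | 0 < t ∧ 0 < limsup (fun n ↦
      (hammingCoverNum μ T P n ε : ℝ≥0∞) / ENNReal.ofReal (a n t)) atTop} := by
  rintro t ⟨-, ht⟩
  contrapose! ht
  exact (h t ht).limsup_eq.le

lemma le_measSlowEntFun (hE : 0 < E) (hbdd : BddAbove {t | 0 < t ∧ 0 < limsup (fun n ↦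
      (hammingCoverNum μ T P n ε : ℝ≥0∞) / ENNReal.ofReal (a n t)) atTop})
    (h : ∀ t < E, 0 < limsup (fun n ↦
      (hammingCoverNum μ T P n ε : ℝ≥0∞) / ENNReal.ofReal (a n t)) atTop) :
    E ≤ measSlowEntFun μ T a P ε := by
  refine le_of_forall_lt fun t ht ↦ ?_
  obtain ⟨u, hu, huE⟩ := exists_between (max_lt ht hE)
  exact (max_lt_iff.1 hu).1.trans_le (le_csSup hbdd ⟨(max_lt_iff.1 hu).2, h u huE⟩)

lemma antitoneOn_measSlowEntFun [IsProbabilityMeasure μ]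
    (hbdd : ∀ ε > 0, BddAbove {t | 0 < t ∧ 0 < limsup (fun n ↦
      (hammingCoverNum μ T P n ε : ℝ≥0∞) / ENNReal.ofReal (a n t)) atTop}) :
    AntitoneOn (measSlowEntFun μ T a P) (Ioi 0) := by
  intro ε hε ε' _ h
  refine Real.sSup_le (fun t ht ↦ le_csSup (hbdd ε hε) ⟨ht.1, ht.2.trans_le ?_⟩)
    (Real.sSup_nonneg fun t ht ↦ ht.1.le)
  exact limsup_le_limsup <| .of_forall fun n ↦
    ENNReal.div_le_div_right (by exact_mod_cast hammingCoverNum_anti hε h) _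

theorem hasUpperMeasSlowEntropy_of_forall_tendsto_zero [IsProbabilityMeasure μ] (hE : 0 < E)
    (upper : ∀ P, ∀ ε > 0, ∀ t > E, Tendsto (fun n ↦
      (hammingCoverNum μ T P n ε : ℝ≥0∞) / ENNReal.ofReal (a n t)) atTop (𝓝 0))
    (lower : ∃ P, ∀ᶠ ε in 𝓝[>] 0, ∀ t < E, 0 < limsup (fun n ↦
      (hammingCoverNum μ T P n ε : ℝ≥0∞) / ENNReal.ofReal (a n t)) atTop) :
    HasUpperMeasSlowEntropy μ T a E := by
  have mem_upperBounds P ε (hε : 0 < ε) := mem_upperBounds_of_tendsto_zero (upper P ε hε)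
  have le P {ε : ℝ} (hε : 0 < ε) : measSlowEntFun μ T a P ε ≤ E :=
    Real.sSup_le (mem_upperBounds P ε hε) hE.le
  refine ⟨fun P ↦ ⟨_, (antitoneOn_measSlowEntFun fun ε hε ↦
    ⟨E, mem_upperBounds P ε hε⟩).tendsto_nhdsGT ⟨E, forall_mem_image.2 fun ε hε ↦ le P hε⟩⟩, ?_, ?_⟩
  · rintro e ⟨P, hP⟩
    exact le_of_tendsto hP <| eventually_mem_nhdsWithin.mono fun ε hε ↦ le P hε
  · obtain ⟨P, hP⟩ := lower
    refine fun b hb ↦ hb ⟨P, tendsto_const_nhds.congr' ?_⟩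
    filter_upwards [hP, eventually_mem_nhdsWithin] with ε hPε hε
    exact (le_measSlowEntFun hE ⟨E, mem_upperBounds P ε hε⟩ hPε).antisymm (le P hε)

end SlowEntropy

section Separation

lemma eventually_forall_le_dist_of_isCompact {X ι : Type*} [Finite ι] [MetricSpace X]
    {K : ι → Set X} (hK : ∀ i, IsCompact (K i)) (hdisj : Pairwise fun i j ↦ Disjoint (K i) (K j)) :
    ∀ᶠ δ : ℝ in 𝓝[>] 0, ∀ i j, i ≠ j → ∀ x ∈ K i, ∀ y ∈ K j, δ ≤ dist x y := by
  simp only [eventually_all]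
  intro i j hij
  obtain ⟨r, hr, hK_lt⟩ :=
    Metric.exists_pos_forall_lt_edist (hK i) (hK j).isClosed (hdisj hij)
  filter_upwards [Ioo_mem_nhdsGT (NNReal.coe_pos.2 hr)] with δ hδ x hx y hy
  have r_lt_dist : (r : ℝ) < dist x y := by
    have h := hK_lt x hx y hy
    rw [edist_nndist] at h
    exact_mod_cast h
  exact (hδ.2.trans r_lt_dist).le

variable {X : Type*} [MetricSpace X] [MeasurableSpace X]

lemma FinMeasPartition.exists_measure_lt_forall_dist_lt [OpensMeasurableSpace X]
    (P : FinMeasPartition X) (μ : Measure X) [IsFiniteMeasure μ] [μ.InnerRegularCompactLTTop]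
    {η : ℝ≥0∞} (hη : η ≠ 0) : ∃ U, MeasurableSet U ∧ μ U < η ∧ ∃ δ > 0, ∀ x ∉ U, ∀ y ∉ U,
      dist x y < δ → ∃ i, x ∈ P.piece i ∧ y ∈ P.piece i := by
  obtain ⟨ν, hν, sum_lt⟩ := ENNReal.exists_pos_sum_of_countable hη (Fin P.card)
  choose K hKP hK measure_lt using fun i ↦ (P.measurable i).exists_isCompact_sdiff_lt
    (measure_ne_top μ _) (ENNReal.coe_ne_zero.2 (hν i).ne')
  obtain ⟨δ, le_dist, hδ⟩ := ((eventually_forall_le_dist_of_isCompact hK fun i j hij ↦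
    (P.disjoint hij).mono (hKP i) (hKP j)).and eventually_mem_nhdsWithin).exists
  refine ⟨(⋃ i, K i)ᶜ, (MeasurableSet.iUnion fun i ↦ (hK i).measurableSet).compl, ?_, δ, hδ,
    fun x hx y hy hxy ↦ ?_⟩
  · have compl_subset : (⋃ i, K i)ᶜ ⊆ ⋃ i, P.piece i \ K i := fun x hx ↦ by
      obtain ⟨i, hi⟩ := mem_iUnion.1 (P.cover.symm ▸ mem_univ x)
      exact mem_iUnion.2 ⟨i, hi, fun hxK ↦ hx (mem_iUnion.2 ⟨i, hxK⟩)⟩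
    calc μ (⋃ i, K i)ᶜ ≤ ∑' i, μ (P.piece i \ K i) :=
        (measure_mono compl_subset).trans (measure_iUnion_le _)
      _ ≤ ∑' i, (ν i : ℝ≥0∞) := ENNReal.tsum_le_tsum fun i ↦ (measure_lt i).le
      _ < η := sum_lt
  · obtain ⟨i, hi⟩ := mem_iUnion.1 (not_not.1 hx)
    obtain ⟨j, hj⟩ := mem_iUnion.1 (not_not.1 hy)
    obtain rfl : i = j := by
      by_contra hij
      exact hxy.not_ge (le_dist i j hij x hi y hj)
    exact ⟨i, hKP i hi, hKP i hj⟩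

end Separation

section Visits

variable {X : Type*} [MeasurableSpace X] {μ : Measure X} {T : X → X} {U : Set X} {n : ℕ} {ε : ℝ}

lemma ofReal_one_sub_lt_measure_birkhoffAverage_lt [IsProbabilityMeasure μ]
    (hT : MeasurePreserving T μ μ) (hU : MeasurableSet U) {η : ℝ} (hη : 0 < η)
    (hμU : μ.real U < η * min ε 1) (hn : n ≠ 0) :
    ENNReal.ofReal (1 - ε) < μ {x | birkhoffAverage ℝ T (U.indicator 1) n x < η} := by
  have hU_int : Integrable (U.indicator (1 : X → ℝ)) μ := (integrable_const 1).indicator hU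
  have average_nonneg (x : X) : 0 ≤ birkhoffAverage ℝ T (U.indicator (1 : X → ℝ)) n x :=
    smul_nonneg (inv_nonneg.2 n.cast_nonneg) (Finset.sum_nonneg fun k _ ↦
      indicator_nonneg (fun _ _ ↦ zero_le_one) _)
  have markov := mul_meas_ge_le_integral_of_nonneg (ae_of_all _ fun x ↦ average_nonneg x)
    (integrable_birkhoffAverage hT hU_int n) η
  rw [integral_birkhoffAverage hT hU_int hn, integral_indicator_one hU] at markov
  have measure_lt := lt_of_mul_lt_mul_left (markov.trans_lt hμU) hη.le
  have measurable_average : Measurable (birkhoffAverage ℝ T (U.indicator (1 : X → ℝ)) n) :=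
    (Finset.measurable_fun_sum (Finset.range n) fun k _ ↦
      (measurable_one.indicator hU).comp (hT.iterate k).measurable).const_smul (n : ℝ)⁻¹
  have measure_eq := probReal_compl_eq_one_sub (μ := μ)
    (measurableSet_le (measurable_const (a := η)) measurable_average)
  simp only [compl_ofPred, not_le] at measure_eq
  rw [← ofReal_measureReal, ENNReal.ofReal_lt_ofReal_iff] <;> rw [measure_eq]
  · linarith [min_le_left ε 1]
  · linarith [min_le_right ε 1]

lemma codeHammingDist_le_birkhoffAverage_add {P : FinMeasPartition X} {x y : X}
    (h : ∀ k < n, T^[k] x ∉ U → T^[k] y ∉ U → ∃ i, T^[k] x ∈ P.piece i ∧ T^[k] y ∈ P.piece i) :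
    codeHammingDist T P n x y ≤
      birkhoffAverage ℝ T (U.indicator 1) n x + birkhoffAverage ℝ T (U.indicator 1) n y := by
  have indicator_nonneg (z : X) : 0 ≤ U.indicator (1 : X → ℝ) z :=
    Set.indicator_nonneg (fun _ _ ↦ zero_le_one) z
  rw [codeHammingDist, Finset.card_filter, Nat.cast_sum, birkhoffAverage, birkhoffAverage,
    ← smul_add, smul_eq_mul, inv_mul_eq_div, birkhoffSum, birkhoffSum, ← Finset.sum_add_distrib]
  gcongr with k hk
  split_ifs with hxy
  · simpa using add_nonneg (indicator_nonneg (T^[k] x)) (indicator_nonneg (T^[k] y))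
  · by_cases hx : T^[k] x ∈ U
    · simpa [hx] using indicator_nonneg (T^[k] y)
    · have hy : T^[k] y ∈ U := by_contra fun hy ↦ hxy (h k (Finset.mem_range.1 hk) hx hy)
      simpa [hy] using indicator_nonneg (T^[k] x)

end Visits

lemma exists_forall_hammingCoverNum_le {X : Type*} [MetricSpace X] [MeasurableSpace X]
    [OpensMeasurableSpace X] {μ : Measure X} [IsProbabilityMeasure μ] [μ.InnerRegularCompactLTTop]
    {T : X → X} (hT : MeasurePreserving T μ μ) (P : FinMeasPartition X) {ε : ℝ} (hε : 0 < ε) :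
    ∃ δ > 0, ∀ n ≠ 0, ∀ (M : ℕ) (c : X → Fin M),
      (∀ x y, c x = c y → ∀ j < n, dist (T^[j] x) (T^[j] y) < δ) →
        hammingCoverNum μ T P n ε ≤ M := by
  have hη : 0 < ε / 2 * min ε 1 := by positivity
  obtain ⟨U, hU, hμU, δ, hδ, sep⟩ :=
    P.exists_measure_lt_forall_dist_lt μ (ENNReal.ofReal_pos.2 hη).ne'
  have hμU_real : μ.real U < ε / 2 * min ε 1 := ENNReal.toReal_lt_of_lt_ofReal hμU
  refine ⟨δ, hδ, fun n hn M c hc ↦ ?_⟩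
  obtain ⟨F, hF_card, hFV, hF⟩ := exists_finset_subset_forall_exists_apply_eq c
    {x | birkhoffAverage ℝ T (U.indicator 1) n x < ε / 2}
  refine (hammingCoverNum_le_card ?_).trans (hF_card.trans_eq (Fintype.card_fin M))
  refine (ofReal_one_sub_lt_measure_birkhoffAverage_lt hT hU (half_pos hε) hμU_real hn).trans_le
    (measure_mono fun y hy ↦ ?_)
  obtain ⟨x, hxF, hxy⟩ := hF y hy
  refine mem_iUnion₂.2 ⟨x, hxF, (codeHammingDist_le_birkhoffAverage_add (U := U)
    fun k hk hx hy ↦ sep _ hx _ hy (hc x y hxy k hk)).trans_lt ?_⟩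
  exact (add_lt_add (hFV hxF) hy).trans_eq (add_halves ε)

lemma eventually_exists_not_and_succ {p : ℕ → Prop} {Q : ℕ → ℕ → Prop}
    (hp : ∀ᶠ k in atTop, p k) (exists_Q : ∀ m, ∃ k, Q m k) (not_Q : ∀ k, ∀ᶠ m in atTop, ¬Q m k) :
    ∀ᶠ m in atTop, ∃ k, p k ∧ ¬Q m k ∧ Q m (k + 1) := by
  classical
  obtain ⟨K, hK⟩ := eventually_atTop.1 hp
  filter_upwards [(finite_le_nat K).eventually_all.2 fun k _ ↦ not_Q k] with m hm
  have lt_find : K < Nat.find (exists_Q m) :=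
    (Nat.lt_find_iff _ _).2 fun k hk ↦ hm k hk
  obtain ⟨k, hk⟩ := Nat.exists_eq_add_one.2 (Nat.zero_lt_of_lt lt_find)
  exact ⟨k, hK k (by lia), Nat.find_min (exists_Q m) (by lia), hk ▸ Nat.find_spec (exists_Q m)⟩

lemma amplitude_le_exp_neg_mul_exp {L : ℕ → ℝ} {E t : ℝ} (hE : 0 < E) (ht : E < t) {m N : ℕ}
    (h : (1 - (t - E) / (2 * t)) * L N ≤ L m) :
    amplitude L E N ≤ Real.exp (-((t - E) / 2 * L N)) * Real.exp (t * L m) := by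
  have ht0 : 0 < t := hE.trans ht
  rw [amplitude, ← Real.exp_add, Real.exp_le_exp]
  have mul_le := mul_le_mul_of_nonneg_left h ht0.le
  have coeff : t * ((1 - (t - E) / (2 * t)) * L N) = (t + E) / 2 * L N := by
    field_simp
    ring
  linarith

namespace ConjugationScheme

variable {L : ℕ → ℝ} {E : ℝ} (S : ConjugationScheme L E) (hL : IsSlowScale L) (hE : 0 < E)
include hL hE

lemma dist_iterate_limit_le {k j : ℕ} {x y : Torus2}
    (hj : j * amplitude L E (S.stage (k + 2)).period ^ 2 ≤ (S.stage (k + 2)).period)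
    (h : ∀ t, dist ((S.stage (k + 1)).conj.flow t x) ((S.stage (k + 1)).conj.flow t y) ≤
      (1 / 2) ^ k) :
    dist (S.limit^[j] x) (S.limit^[j] y) ≤ 3 * (1 / 2) ^ k := by
  have dist_x := S.dist_iterate_map_limit_le hL hE hj x
  have dist_y := S.dist_iterate_map_limit_le hL hE hj y
  have dist_stage : dist ((S.stage (k + 1)).map^[j] x) ((S.stage (k + 1)).map^[j] y) ≤
      (1 / 2) ^ k := by
    rw [Stage.iterate_map]
    exact h _
  rw [dist_comm] at dist_x
  rw [pow_succ] at dist_x dist_y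
  linarith [dist_triangle4 (S.limit^[j] x) ((S.stage (k + 1)).map^[j] x)
    ((S.stage (k + 1)).map^[j] y) (S.limit^[j] y)]

lemma eventually_hammingCoverNum_limit_le (P : FinMeasPartition Torus2) {ε : ℝ} (hε : 0 < ε) :
    ∀ᶠ k in atTop, ∀ n : ℕ, n ≠ 0 →
      n * amplitude L E (S.stage (k + 2)).period ^ 2 ≤ (S.stage (k + 2)).period →
      hammingCoverNum volume S.limit P n ε ≤
        L (S.stage (k + 1)).period * amplitude L E (S.stage (k + 1)).period := by
  obtain ⟨δ, hδ, cover_le⟩ := exists_forall_hammingCoverNum_le S.measurePreserving_limit P hε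
  have half_pow_tendsto : Tendsto (fun k : ℕ ↦ 3 * (1 / 2 : ℝ) ^ k) atTop (𝓝 0) := by
    simpa using (tendsto_pow_atTop_nhds_zero_of_lt_one (r := (1 / 2 : ℝ)) (by norm_num)
      (by norm_num)).const_mul 3
  filter_upwards [half_pow_tendsto.eventually_lt_const hδ] with k hk n hn hn_le
  obtain ⟨M, hM, c, hc⟩ := (S.step k).exists_classes
  refine le_trans ?_ hM
  exact_mod_cast cover_le n hn M c fun x y hxy j hj ↦
    (S.dist_iterate_limit_le hL hE (le_trans (by gcongr) hn_le) (hc x y hxy)).trans_lt hk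

lemma eventually_exists_period_lt_mul_amplitude_sq {p : ℕ → Prop} (hp : ∀ᶠ k in atTop, p k) :
    ∀ᶠ m : ℕ in atTop, ∃ k, p k ∧
      (S.stage (k + 1)).period < m * amplitude L E (S.stage (k + 1)).period ^ 2 ∧
      m * amplitude L E (S.stage (k + 2)).period ^ 2 ≤ (S.stage (k + 2)).period := by
  have one_le_sq (N : ℕ) : 1 ≤ amplitude L E N ^ 2 := one_le_pow₀ (one_le_amplitude hL hE N)
  refine (eventually_exists_not_and_succ (Q := fun m k ↦
    m * amplitude L E (S.stage (k + 1)).period ^ 2 ≤ (S.stage (k + 1)).period) hp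
    (fun m ↦ ?_) fun k ↦ ?_).mono fun m ⟨k, hk, lt, le⟩ ↦ ⟨k, hk, not_le.1 lt, le⟩
  · obtain ⟨k, hk⟩ := (S.tendsto_period.eventually_ge_atTop m).exists
    exact ⟨k, le_trans (by gcongr) (S.step k).period_mul_amplitude_sq_le⟩
  · filter_upwards [eventually_gt_atTop ((S.stage (k + 1)).period : ℕ)] with m hm
    exact not_le.2 <| (Nat.cast_lt.2 hm).trans_le <|
      le_mul_of_one_le_right (Nat.cast_nonneg' m) (one_le_sq _)

lemma tendsto_hammingCoverNum_limit_div (P : FinMeasPartition Torus2) {ε : ℝ} (hε : 0 < ε) {t : ℝ}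
    (ht : E < t) : Tendsto (fun n ↦ (hammingCoverNum volume S.limit P n ε : ℝ≥0∞) /
      ENNReal.ofReal (Real.exp (t * L n))) atTop (𝓝 0) := by
  have hδ : 0 < (t - E) / (2 * t) := div_pos (by linarith) (by linarith)
  have period_tendsto := S.tendsto_period.comp (tendsto_add_atTop_nat 1)
  have bound_tendsto := ENNReal.tendsto_ofReal
    ((hL.tendsto_mul_exp_neg (half_pos (sub_pos.2 ht))).comp period_tendsto)
  rw [ENNReal.ofReal_zero, ENNReal.tendsto_nhds_zero] at bound_tendsto
  refine ENNReal.tendsto_nhds_zero.2 fun η hη ↦ ?_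
  filter_upwards [eventually_ne_atTop 0, S.eventually_exists_period_lt_mul_amplitude_sq hL hE
    ((S.eventually_hammingCoverNum_limit_le hL hE P hε).and
      ((period_tendsto.eventually (hL.slowlyVarying (2 * E) _ hδ)).and (bound_tendsto η hη)))]
    with n hn ⟨k, ⟨cover_le, slow, bound_le⟩, lt_mul, mul_le⟩
  rw [amplitude, ← Real.exp_nat_mul, Nat.cast_two, ← mul_assoc] at lt_mul
  refine le_trans ?_ bound_le
  rw [← ENNReal.ofReal_natCast, ← ENNReal.ofReal_div_of_pos (Real.exp_pos _)]
  refine ENNReal.ofReal_le_ofReal ((div_le_iff₀ (Real.exp_pos _)).2 ?_)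
  refine (cover_le n hn mul_le).trans ?_
  rw [Function.comp_apply, mul_assoc]
  exact mul_le_mul_of_nonneg_left (amplitude_le_exp_neg_mul_exp hE ht (slow n lt_mul))
    (hL.nonneg _)

end ConjugationScheme

section TwoPiecePartition

variable {X : Type*} [MeasurableSpace X]

/-- The partition of a space into a measurable set and its complement. -/
def FinMeasPartition.ofSet (A : Set X) (hA : MeasurableSet A) : FinMeasPartition X where
  card := 2
  piece := ![A, Aᶜ]
  measurable := Fin.forall_fin_two.2 ⟨hA, hA.compl⟩
  disjoint := by
    intro i j hij
    fin_cases i <;> fin_cases j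
    · exact absurd rfl hij
    · exact disjoint_compl_right
    · exact disjoint_compl_left
    · exact absurd rfl hij
  cover := by
    refine eq_univ_of_forall fun x ↦ mem_iUnion.2 ?_
    exact Fin.exists_fin_two.2 (em (x ∈ A))

lemma empiricalMeasure_prod_le_codeHammingDist {A B : Set X} (hA : MeasurableSet A)
    (hB : MeasurableSet B) (hAB : Disjoint A B) (T : X → X) (n : ℕ+) (x y : X) :
    (empiricalMeasure n fun j ↦ (T^[j] x, T^[j] y) : Measure (X × X)) (A ×ˢ B) ≤
      ENNReal.ofReal (codeHammingDist T (.ofSet A hA) n x y) := by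
  classical
  rw [empiricalMeasure_apply n _ (hA.prod hB), codeHammingDist,
    ENNReal.ofReal_div_of_pos (by exact_mod_cast n.pos), ENNReal.ofReal_natCast,
    ENNReal.ofReal_natCast, mul_comm, ← div_eq_mul_inv]
  gcongr with j
  rintro ⟨hx, hy⟩ ⟨i, hxi, hyi⟩
  fin_cases i
  · exact disjoint_left.1 hAB hyi hy
  · exact hxi hx

end TwoPiecePartition

instance : Nontrivial Torus1 :=
  ⟨_, 0, norm_ne_zero_iff.1 ((AddCircle.norm_half_period_eq 1).trans_ne (by norm_num))⟩

lemma volume_mul_norm_nsmul_lt_le {n : ℕ} (hn : n ≠ 0) {a : ℝ} (ha : 0 < a) (w : ℝ) :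
    volume {u : Torus1 | a * ‖n • u‖ < w} ≤ ENNReal.ofReal (2 * (w / a)) := by
  have measurePreserving : MeasurePreserving (fun u : Torus1 ↦ (n : ℤ) • u) volume volume :=
    Measure.measurePreserving_zsmul volume (Nat.cast_ne_zero.2 hn)
  have subset_preimage : {u : Torus1 | a * ‖n • u‖ < w} ⊆
      (fun u ↦ (n : ℤ) • u) ⁻¹' Metric.closedBall 0 (w / a) := fun u hu ↦ by
    rw [mem_preimage, mem_closedBall_zero_iff, natCast_zsmul, le_div_iff₀' ha]
    exact (mem_ofPred_eq ▸ hu).le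
  refine (measure_mono subset_preimage).trans ?_
  rw [measurePreserving.measure_preimage Metric.isClosed_closedBall.nullMeasurableSet,
    AddCircle.volume_closedBall]
  exact ENNReal.ofReal_le_ofReal (min_le_right _ _)

namespace ConjugationScheme

variable {L : ℕ → ℝ} {E : ℝ} (S : ConjugationScheme L E)

lemma volume_notMem_separatedPairs_le (k : ℕ) (x : Torus2) :
    volume {y | (x, y) ∉ S.separatedPairs k} ≤ ENNReal.ofReal
      (2 * (L (S.stage (k + 1)).period / amplitude L E (S.stage (k + 1)).period)) := by
  have hn : 2 * ((S.stage k).period : ℕ) ≠ 0 := by positivity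
  have measurePreserving := (measurePreserving_sub_right volume
    ((S.stage (k + 1)).conj.toHomeomorph.symm x).1).comp
      (measurePreserving_fst.comp (S.stage (k + 1)).conj.measurePreserving_symm)
  have measurableSet : MeasurableSet {u : Torus1 | amplitude L E (S.stage (k + 1)).period *
      ‖(2 * (S.stage k).period : ℕ) • u‖ < L (S.stage (k + 1)).period} :=
    measurableSet_lt (by fun_prop) measurable_const
  refine le_trans (le_of_eq ?_) (volume_mul_norm_nsmul_lt_le hn (amplitude_pos _) _)
  rw [← measurePreserving.measure_preimage measurableSet.nullMeasurableSet]
  simp only [separatedPairs, mem_ofPred_eq, not_le]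
  rfl

variable (hL : IsSlowScale L) (hE : 0 < E)
include hL hE

lemma tendsto_empiricalMeasure_limit : Tendsto (fun i : ℕ × Torus2 × Torus2 ↦
    empiricalMeasure (S.stage (i.1 + 1)).period fun j ↦ (S.limit^[j] i.2.1, S.limit^[j] i.2.2))
    S.separatedFilter (𝓝 (torusVolume.prod torusVolume)) := by
  refine tendsto_empiricalMeasure_of_dist_le S.tendsto_empiricalMeasure_stage
    (tendsto_two_mul_half_pow_succ.comp (tendsto_comap.mono_left inf_le_left))
    (.of_forall fun i j hj ↦ max_le ?_ ?_)
  · exact S.dist_iterate_map_succ_limit_le hL hE hj.le _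
  · exact S.dist_iterate_map_succ_limit_le hL hE hj.le _

lemma eventually_le_codeHammingDist_limit {A B : Set Torus2} (hA : IsOpen A) (hB : IsOpen B)
    (hAB : Disjoint A B) {ε : ℝ} (hε : ENNReal.ofReal ε < volume A * volume B) :
    ∀ᶠ k in atTop, ∀ x y, (x, y) ∈ S.separatedPairs k →
      ε ≤ codeHammingDist S.limit (.ofSet A hA.measurableSet) (S.stage (k + 1)).period x y := by
  have lt_liminf := (hε.trans_eq (Measure.prod_prod A B).symm).trans_le
    (ProbabilityMeasure.le_liminf_measure_open_of_tendsto
      (S.tendsto_empiricalMeasure_limit hL hE) (hA.prod hB))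
  filter_upwards [S.eventually_separatedFilter.1 (eventually_lt_of_lt_liminf lt_liminf)]
    with k hk x y hxy
  have lt_dist := (hk (x, y) hxy).trans_le
    (empiricalMeasure_prod_le_codeHammingDist hA.measurableSet hB.measurableSet hAB _ _ _ _)
  exact (ENNReal.ofReal_lt_ofReal_iff'.1 lt_dist).1.le

lemma eventually_amplitude_le_hammingCoverNum_mul {A B : Set Torus2} (hA : IsOpen A)
    (hB : IsOpen B) (hAB : Disjoint A B) {ε : ℝ} (hε : ε ∈ Ioc 0 (1 / 2))
    (hε_lt : ENNReal.ofReal ε < volume A * volume B) :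
    ∀ᶠ k in atTop, amplitude L E (S.stage (k + 1)).period ≤
      hammingCoverNum volume S.limit (.ofSet A hA.measurableSet) (S.stage (k + 1)).period ε *
        (4 * L (S.stage (k + 1)).period) := by
  filter_upwards [S.eventually_le_codeHammingDist_limit hL hE hA hB hAB hε_lt] with k hk
  have amplitude_pos := amplitude_pos (L := L) (E := E) (S.stage (k + 1)).period
  have cover_le := ofReal_one_sub_le_hammingCoverNum_mul hε.1 fun x ↦
    (measure_mono fun y hy hxy ↦ (hk x y hxy).not_gt hy).trans
      (S.volume_notMem_separatedPairs_le k x)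
  rw [← ENNReal.ofReal_natCast, ← ENNReal.ofReal_mul (Nat.cast_nonneg _),
    ENNReal.ofReal_le_ofReal_iff (mul_nonneg (Nat.cast_nonneg _)
      (mul_nonneg zero_le_two (div_nonneg (hL.nonneg _) amplitude_pos.le))),
    ← mul_div_assoc, ← mul_div_assoc, le_div_iff₀ amplitude_pos] at cover_le
  nlinarith [hε.2]

lemma limsup_hammingCoverNum_limit_div_pos {A B : Set Torus2} (hA : IsOpen A) (hB : IsOpen B)
    (hAB : Disjoint A B) {ε : ℝ} (hε : ε ∈ Ioc 0 (1 / 2))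
    (hε_lt : ENNReal.ofReal ε < volume A * volume B) {t : ℝ} (ht : t < E) :
    0 < limsup (fun n ↦ (hammingCoverNum volume S.limit (.ofSet A hA.measurableSet) n ε : ℝ≥0∞) /
      ENNReal.ofReal (Real.exp (t * L n))) atTop := by
  have period_tendsto := S.tendsto_period.comp (tendsto_add_atTop_nat 1)
  refine zero_lt_one.trans_le (le_limsup_of_frequently_le' (period_tendsto.frequently
    (Eventually.frequently ?_)))
  filter_upwards [S.eventually_amplitude_le_hammingCoverNum_mul hL hE hA hB hAB hε hε_lt,
    period_tendsto.eventually (eventually_mul_le_amplitude hL (sub_pos.2 ht) 4),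
    period_tendsto.eventually (hL.tendsto_atTop.eventually_gt_atTop 0)] with k cover_ge mul_le L_pos
  rw [← ENNReal.ofReal_natCast, ← ENNReal.ofReal_div_of_pos (Real.exp_pos _),
    ENNReal.one_le_ofReal, one_le_div (Real.exp_pos _)]
  simp only [Function.comp_apply] at mul_le L_pos ⊢
  refine le_of_mul_le_mul_right ?_ (mul_pos four_pos L_pos)
  calc _ ≤ Real.exp (t * _) * amplitude L (E - t) _ := by gcongr
    _ = amplitude L E _ := by rw [amplitude, amplitude, ← Real.exp_add, ← add_mul, add_sub_cancel]
    _ ≤ _ := cover_ge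

theorem hasUpperMeasSlowEntropy_limit :
    HasUpperMeasSlowEntropy volume S.limit (fun n t ↦ Real.exp (t * L n)) E := by
  refine hasUpperMeasSlowEntropy_of_forall_tendsto_zero hE
    (fun P ε hε t ht ↦ S.tendsto_hammingCoverNum_limit_div hL hE P hε ht) ?_
  obtain ⟨x, y, hxy⟩ := exists_pair_ne (Torus1 × Torus1)
  obtain ⟨A, B, hA, hB, hxA, hyB, hAB⟩ := t2_separation hxy
  have prod_pos : 0 < volume A * volume B :=
    ENNReal.mul_pos (hA.measure_pos _ ⟨x, hxA⟩).ne' (hB.measure_pos _ ⟨y, hyB⟩).ne'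
  have ofReal_tendsto : Tendsto ENNReal.ofReal (𝓝[>] 0) (𝓝 0) := by
    simpa using (ENNReal.continuous_ofReal.tendsto 0).mono_left nhdsWithin_le_nhds
  refine ⟨.ofSet A hA.measurableSet, ?_⟩
  filter_upwards [Ioc_mem_nhdsGT one_half_pos, ofReal_tendsto.eventually_lt_const prod_pos]
    with ε hε hε_lt t ht
  exact S.limsup_hammingCoverNum_limit_div_pos hL hE hA hB hAB hε hε_lt ht

end ConjugationScheme

theorem exists_weaklyMixing_hasUpperMeasSlowEntropy {L : ℕ → ℝ} (hL : IsSlowScale L) {E : ℝ}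
    (hE : 0 < E) : ∃ T : Torus2 → Torus2, IsCkTorusDiffeo ⊤ T ∧
      MeasurePreserving T (volume : Measure Torus2) volume ∧
      WeaklyMixing T (volume : Measure Torus2) ∧
      HasUpperMeasSlowEntropy volume T (fun n t ↦ Real.exp (t * L n)) E := by
  obtain ⟨S⟩ := nonempty_conjugationScheme hL hE
  exact ⟨S.limit, S.isCkTorusDiffeo_limit, S.measurePreserving_limit,
    S.weaklyMixing_limit hL hE, S.hasUpperMeasSlowEntropy_limit hL hE⟩

theorem stmt3_general {r q : ℕ} (hr : r ≠ 0) (hq : 2 ≤ q) {E : ℝ} (hE : 0 < E) :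
    ∃ T : Torus2 → Torus2,
      IsCkTorusDiffeo ⊤ T ∧
      MeasurePreserving T (volume : Measure Torus2) volume ∧
      WeaklyMixing T (volume : Measure Torus2) ∧
      HasUpperMeasSlowEntropy (volume : Measure Torus2) T (intScale1 r q) E := by
  rw [show intScale1 r q = fun n t ↦ Real.exp (t * intRate r q n) from
    funext₂ fun n t ↦ intScale1_eq_exp_intRate r q n t]
  exact exists_weaklyMixing_hasUpperMeasSlowEntropy (isSlowScale_intRate hr hq) hE

/-- There exist an integer `q₁ ≥ 2` and a weakly mixing `C^∞`
volume-preserving diffeomorphism `T` of `𝕋²` whose upper measure-theoretic slow entropy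
with respect to the intermediate scaling family `a^{int1,8}` (with base `q₁`) equals `2`. -/
theorem stmt3 :
    ∃ q₁ : ℕ, 2 ≤ q₁ ∧ ∃ T : Torus2 → Torus2,
      IsCkTorusDiffeo ⊤ T ∧
      MeasurePreserving T (volume : Measure Torus2) volume ∧
      WeaklyMixing T (volume : Measure Torus2) ∧
      HasUpperMeasSlowEntropy (volume : Measure Torus2) T (intScale1 8 q₁) 2 := by
  exact ⟨2, le_rfl, stmt3_general (by norm_num) le_rfl two_pos⟩
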